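/- Let Ω be a bounded open convex set in ℝ² containing the origin in its interior. Assume ∂Ω is C¹ and, in an arclength parametrization, the components of the unit tangent vector are absolutely continuous, so the curvature κ is defined almost everywhere as an L¹ function on ∂Ω. Assume there are a > 0 and ε > 0 with κ(x) ≥ a for almost every x ∈ ∂Ω and ∫_{∂Ω} κ (log(2+κ))^{2+ε} dσ < ∞ (i.e. κ ∈ L log^{2+ε}L(∂Ω)). Then there is a constant C_Ω such that for all R ≥ 2 and all h with log R ≤ h ≤ R one has 𝒢_Ω(R,h) ≤ C_Ω R^{1/2}. -/

import Mathlib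

/-!
Why the bound holds. The lattice rest is turned into an exponential sum over the lattice, and the
mean square of that sum is controlled by counting pairs of frequencies at which the support function
`ρ` of `Ω` takes almost equal values.

*Geometry.* The hypotheses on the boundary curve are used only through the structure `Geo`
(`exists_geo`): an outward normal field whose total turning is the integral of `κ`, quadratic
separation of the boundary from its tangent lines (from `κ ≥ a`), the fact that boundary points
nearly orthogonal to a given vector form a short set, and integrability of `κ log (2 + κ)`.

*Counting.* By `annulus_count`, the annulus `|ρ - r| ≤ w` contains `O(r (w + errT r))` lattice
points. Where the boundary point is not nearly orthogonal to a short integer vector, a Dirichlet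
approximation of the tangent slope gives the expected number of points (`box_count`, `good_count`).
The other directions cover a short piece of the boundary, whose total curvature is small up to the
excess of `κ` over a power of `r` (`integral_bad`, `bad_count`). The `L log L` condition makes
these excesses summable over the lattice with weight `‖k‖⁻²` (`errT_sum`, `errT_lattice`).

*Decay of the Fourier transform.* Along a direction `ξ` the Fourier transform of `Ω` is the
one-dimensional transform of the slice profile (`ft_prof`), a concave function on
`(-ρ(-ξ), ρ(ξ))` vanishing like a square root at the ends (`prof_isProf`). A second difference with
step `τ ≈ 1 / T` multiplies the transform by `4 sin² (π t τ)`, which is of size one on the relevant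
range of `t`, and concentrates the profile near the two ends (`far_bound`, `total_bound`). Concavity
thus takes the place of stationary phase, for which the boundary is not regular enough.

*Mean square.* Gallagher's inequality (`gallagher`) bounds a mean square over an interval of length
`H` by correlations at distance `1 / H`. For two frequencies these are small unless the values of `ρ`
differ by at most `3 / H` (`corr_le`), so Schur's test (`close_pairs`) and the counting bound give
`fin_ms`.

*Conclusion.* Convolution with a tent kernel of width `1 / √R` and Poisson summation bound the
lattice rest at `t ∈ [R, 2R]`, up to `O(√R)`, by `t²` times the exponential sum at `t ± 2 / (c √R)`
(`sandwich`, `smooth_rest`, `rest_sq_le`). With `H = log R` the sum of `‖k‖⁻²` over the effective range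
`‖k‖ ≲ √R` is `O(H)`, and the diagonal contribution is of the admissible size `O(R)` on each block of
length `log R` (`block`). Blocks cover `[R, R + h]` (`large`), and bounded `R` is trivial (`small`).
-/

open MeasureTheory Set
open scoped Pointwise RealInnerProductSpace NNReal ENNReal

noncomputable section

abbrev E2 := EuclideanSpace ℝ (Fin 2)

/-- The embedding of an integer vector into the Euclidean plane. -/
def ek (k : Fin 2 → ℤ) : E2 := (WithLp.equiv 2 (Fin 2 → ℝ)).symm fun i => (k i : ℝ)

/-- Number of lattice points in a set. -/
def latticeCount (S : Set E2) : ℕ := Nat.card {k : Fin 2 → ℤ | ek k ∈ S}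

/-- The lattice rest `E_Ω(t) = card(tΩ ∩ ℤ²) − t²·area(Ω)`. -/
def latticeRest (Ω : Set E2) (t : ℝ) : ℝ :=
  (latticeCount (t • Ω) : ℝ) - t ^ 2 * (volume Ω).toReal

/-- The mean square discrepancy `𝒢_Ω(R,h) = ((1/h)∫_R^{R+h} |E_Ω(t)|² dt)^{1/2}`. -/
def meanSquare (Ω : Set E2) (R h : ℝ) : ℝ :=
  Real.sqrt ((1 / h) * ∫ t in R..(R + h), (latticeRest Ω t) ^ 2)

/-- The support function `ρ*(ξ) = sup {⟨x,ξ⟩ : x ∈ Ω}`. -/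
def suppFn (Ω : Set E2) (ξ : E2) : ℝ := sSup ((fun x => ⟪x, ξ⟫) '' Ω)

/-- `μ(θ,δ)`, the diameter of the cap `𝒞(θ,δ) = {x ∈ ∂Ω : ⟨x,θ⟩ ≥ ρ*(θ) − δ}`. -/
def capDiam (Ω : Set E2) (θ : E2) (δ : ℝ) : ℝ :=
  Metric.diam {x ∈ frontier Ω | suppFn Ω θ - δ ≤ ⟪x, θ⟫}

/-- Curvature bounded below in the generalized sense:
`sup_{θ∈S¹} sup_{δ>0} δ^{-1/2} μ(θ,δ) < ∞`. -/
def CurvBddBelow (Ω : Set E2) : Prop :=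
  ∃ K : ℝ, ∀ θ : E2, ‖θ‖ = 1 → ∀ δ : ℝ, 0 < δ → capDiam Ω θ δ ≤ K * Real.sqrt δ

/-- `γ` is an arclength (unit-speed) parametrization of the `C¹` boundary `∂Ω`, with
period `L`, whose unit tangent vector `γ'` is absolutely continuous with almost-everywhere
derivative `γ''`; the curvature is then `κ = ‖γ''‖`, defined a.e. as an `L¹` function. -/
def BoundaryParam (Ω : Set E2) (γ γ' γ'' : ℝ → E2) (L : ℝ) : Prop :=
  0 < L ∧ (∀ t, HasDerivAt γ (γ' t) t) ∧ Continuous γ' ∧ (∀ t, ‖γ' t‖ = 1) ∧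
    Function.Periodic γ L ∧ γ '' Set.Ico 0 L = frontier Ω ∧ Set.InjOn γ (Set.Ico 0 L) ∧
    (∀ t : ℝ, IntervalIntegrable γ'' volume 0 t) ∧
    (∀ t : ℝ, γ' t = γ' 0 + ∫ s in (0:ℝ)..t, γ'' s)

namespace MeanSq

open Filter Topology

/-! ### Plane geometry of the boundary curve -/

/-- Rotation of the plane by a right angle. -/
def rot (x : E2) : E2 := !₂[x 1, -x 0]

lemma inner_E2 (x y : E2) : ⟪x, y⟫ = x 0 * y 0 + x 1 * y 1 := by
  simp [PiLp.inner_apply, Fin.sum_univ_two]; ring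

@[simp] lemma rot_zero_coord (x : E2) : rot x 0 = x 1 := rfl
@[simp] lemma rot_one_coord (x : E2) : rot x 1 = -x 0 := rfl

lemma normSq_E2 (x : E2) : ‖x‖ ^ 2 = x 0 ^ 2 + x 1 ^ 2 := by
  rw [← real_inner_self_eq_norm_sq, inner_E2]; ring

/-- `rot` as a continuous linear map. -/
def rotL : E2 →L[ℝ] E2 :=
  LinearMap.toContinuousLinearMap
    { toFun := rot
      map_add' := by
        intro x y; ext i; fin_cases i <;> simp [rot]; ring
      map_smul' := by
        intro c x; ext i; fin_cases i <;> simp [rot] }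

@[simp] lemma rotL_apply (x : E2) : rotL x = rot x := rfl

lemma norm_rot (x : E2) : ‖rot x‖ = ‖x‖ := by
  have h : ‖rot x‖ ^ 2 = ‖x‖ ^ 2 := by rw [normSq_E2, normSq_E2]; simp; ring
  exact (sq_eq_sq₀ (norm_nonneg _) (norm_nonneg _)).1 h

lemma inner_rot_self (x : E2) : ⟪x, rot x⟫ = 0 := by rw [inner_E2]; simp; ring

/-- Decomposition in the orthonormal frame `(e, σ • rot e)`. -/
lemma frame (e x : E2) (σ : ℝ) (he : ‖e‖ = 1) (hσ : σ ^ 2 = 1) :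
    x = ⟪x, e⟫ • e + ⟪x, σ • rot e⟫ • (σ • rot e) := by
  have h := normSq_E2 e
  rw [he] at h
  have h' : e 0 ^ 2 = 1 - e 1 ^ 2 := by linarith
  ext i
  fin_cases i
  · simp [inner_E2]
    linear_combination (-x 0) * h' - (x 0 * e 1 ^ 2 - x 1 * e 0 * e 1) * hσ
  · simp [inner_E2]
    linear_combination x 1 * (- h') + (x 0 * e 0 * e 1 - x 1 * e 0 ^ 2) * hσ

lemma frame_normSq (e x : E2) (σ : ℝ) (he : ‖e‖ = 1) (hσ : σ ^ 2 = 1) :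
    ‖x‖ ^ 2 = ⟪x, e⟫ ^ 2 + ⟪x, σ • rot e⟫ ^ 2 := by
  have h := normSq_E2 e
  rw [he] at h
  have h' : e 0 ^ 2 = 1 - e 1 ^ 2 := by linarith
  rw [normSq_E2]
  simp [inner_E2]
  linear_combination (-(x 0)^2 - (x 1)^2 ) * (h') -
    (x 0 * e 1 - x 1 * e 0)^2 * hσ

section curve

variable {Ω : Set E2} {γ γ' γ'' : ℝ → E2} {L : ℝ}

lemma periodic_deriv (hbp : BoundaryParam Ω γ γ' γ'' L) : Function.Periodic γ' L := by
  obtain ⟨_, hd, _, _, hper, _⟩ := hbp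
  intro t
  have h1 : HasDerivAt (fun s => γ (s + L)) (γ' (t + L)) t := (hd (t + L)).comp_add_const t L
  have h2 : (fun s => γ (s + L)) = γ := funext hper
  rw [h2] at h1
  exact h1.unique (hd t)

lemma curve_mem_frontier (hbp : BoundaryParam Ω γ γ' γ'' L) (t : ℝ) : γ t ∈ frontier Ω := by
  obtain ⟨hL, _, _, _, hper, him, _⟩ := hbp
  obtain ⟨y, hy, hty⟩ := hper.exists_mem_Ico₀ hL t
  rw [hty, ← him]
  exact mem_image_of_mem _ hy

lemma periodic_uniform {f : ℝ → E2} {L : ℝ} (hL : 0 < L) (hf : Continuous f)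
    (hper : Function.Periodic f L) {ε : ℝ} (hε : 0 < ε) :
    ∃ η > 0, ∀ p q, |p - q| ≤ η → ‖f p - f q‖ ≤ ε := by
  have hu : UniformContinuousOn f (Icc (-L) (2 * L)) :=
    isCompact_Icc.uniformContinuousOn_of_continuous hf.continuousOn
  rw [Metric.uniformContinuousOn_iff] at hu
  obtain ⟨δ, hδ, h⟩ := hu ε hε
  refine ⟨min (δ / 2) L, by positivity, fun p q hpq => ?_⟩
  have h1 : |p - q| ≤ δ / 2 := hpq.trans (min_le_left _ _)
  have h2 : |p - q| ≤ L := hpq.trans (min_le_right _ _)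
  set m : ℤ := toIcoDiv hL 0 p
  have hp : p - m • L ∈ Ico (0 : ℝ) (0 + L) := sub_toIcoDiv_zsmul_mem_Ico hL 0 p
  have e1 : f p = f (p - m • L) := (hper.sub_zsmul_eq m).symm
  have e2 : f q = f (q - m • L) := (hper.sub_zsmul_eq m).symm
  rw [e1, e2, ← dist_eq_norm]
  rw [abs_le] at h2
  simp only [zero_add, mem_Ico] at hp
  refine (h _ ⟨by linarith, by linarith⟩ _ ⟨by linarith, by linarith⟩ ?_).le
  rw [Real.dist_eq]
  have : p - m • L - (q - m • L) = p - q := by ring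
  rw [this]; linarith

/-- The supporting line at each boundary point is the tangent line; the outward normal is
`σ • rot γ'` for one and the same sign `σ`. -/
lemma exists_normal (hconv : Convex ℝ Ω) (hopen : IsOpen Ω) (h0 : (0 : E2) ∈ Ω)
    (hbp : BoundaryParam Ω γ γ' γ'' L) :
    ∃ σ : ℝ, σ ^ 2 = 1 ∧ (∀ s, 0 < ⟪γ s, σ • rot (γ' s)⟫) ∧
      ∀ s, ∀ x ∈ closure Ω, ⟪x - γ s, σ • rot (γ' s)⟫ ≤ 0 := by
  have hd := hbp.2.1
  have hc := hbp.2.2.1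
  have hn := hbp.2.2.2.1
  have key : ∀ s, ∃ c : ℝ, 0 < c * ⟪γ s, rot (γ' s)⟫ ∧
      ∀ x ∈ closure Ω, c * ⟪x, rot (γ' s)⟫ ≤ c * ⟪γ s, rot (γ' s)⟫ := by
    intro s
    have hfr := curve_mem_frontier hbp s
    have hns : γ s ∉ Ω := by
      rw [hopen.frontier_eq] at hfr; exact hfr.2
    obtain ⟨f, hf⟩ := geometric_hahn_banach_open_point hconv hopen hns
    set w : E2 := (InnerProductSpace.toDual ℝ E2).symm f with hw
    have hwf : ∀ x, f x = ⟪w, x⟫ := fun x => by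
      rw [hw, InnerProductSpace.toDual_symm_apply]
    have hcl : ∀ x ∈ closure Ω, f x ≤ f (γ s) := by
      intro x hx
      exact closure_minimal (fun y hy => (hf y hy).le)
        (isClosed_le f.continuous continuous_const) hx
    have hmax : IsLocalMax (fun t => f (γ t)) s := by
      refine Eventually.of_forall fun t => hcl _ ?_
      exact frontier_subset_closure (curve_mem_frontier hbp t)
    have hder : HasDerivAt (fun t => f (γ t)) (f (γ' s)) s :=
      f.hasFDerivAt.comp_hasDerivAt s (hd s)
    have hz : f (γ' s) = 0 := hmax.hasDerivAt_eq_zero hder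
    have hfrm := frame (γ' s) w 1 (hn s) (by norm_num)
    rw [hwf] at hz
    rw [hz] at hfrm
    simp only [one_smul, zero_smul, zero_add] at hfrm
    have hfx : ∀ x, f x = ⟪w, rot (γ' s)⟫ * ⟪x, rot (γ' s)⟫ := fun x => by
      have h1 : ⟪w, x⟫ = ⟪⟪w, rot (γ' s)⟫ • rot (γ' s), x⟫ := congrArg (fun z => ⟪z, x⟫) hfrm
      rw [hwf, h1, real_inner_smul_left, real_inner_comm x]
    refine ⟨⟪w, rot (γ' s)⟫, ?_, ?_⟩
    · have h1 := hf 0 h0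
      rwa [map_zero, hfx] at h1
    · intro x hx
      have h1 := hcl x hx
      rwa [hfx, hfx] at h1
  have hcont : Continuous fun s => ⟪γ s, rot (γ' s)⟫ := by
    have hγ : Continuous γ := continuous_iff_continuousAt.2 fun s => (hd s).continuousAt
    exact hγ.inner (rotL.continuous.comp hc)
  have hne : ∀ s, ⟪γ s, rot (γ' s)⟫ ≠ 0 := by
    intro s h
    obtain ⟨c, hc, _⟩ := key s
    rw [h] at hc; simp at hc
  have hsign : (∀ s, 0 < ⟪γ s, rot (γ' s)⟫) ∨ (∀ s, ⟪γ s, rot (γ' s)⟫ < 0) := by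
    by_contra hcon
    push Not at hcon
    obtain ⟨⟨s, hs⟩, ⟨t, ht⟩⟩ := hcon
    obtain ⟨u, hu⟩ := mem_range_of_exists_le_of_exists_ge hcont ⟨s, hs⟩ ⟨t, ht⟩
    exact hne u hu
  rcases hsign with hs | hs
  · refine ⟨1, by norm_num, fun s => by simpa using hs s, fun s x hx => ?_⟩
    obtain ⟨c, hc, h⟩ := key s
    have hcpos : 0 < c := (pos_iff_pos_of_mul_pos hc).2 (hs s)
    have := le_of_mul_le_mul_left (h x hx) hcpos
    rw [one_smul, inner_sub_left]; linarith
  · refine ⟨-1, by norm_num, fun s => ?_, fun s x hx => ?_⟩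
    · rw [real_inner_smul_right]; have := hs s; linarith
    obtain ⟨c, hc, h⟩ := key s
    have hcneg : c < 0 := by
      by_contra hcc
      push Not at hcc
      have := mul_nonpos_of_nonneg_of_nonpos hcc (hs s).le
      linarith
    have := (mul_le_mul_left_of_neg hcneg).1 (h x hx)
    rw [real_inner_smul_right, inner_sub_left]; linarith

lemma ae_deriv_tangent (hbp : BoundaryParam Ω γ γ' γ'' L) :
    ∀ᵐ s, HasDerivAt γ' (γ'' s) s := by
  obtain ⟨_, _, _, _, _, _, _, hintg, heq⟩ := hbp
  have hloc : LocallyIntegrable γ'' volume := by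
    rw [locallyIntegrable_iff]
    intro k hk
    obtain ⟨r, hr⟩ := hk.isBounded.subset_closedBall 0
    have : IntervalIntegrable γ'' volume (-r) r := (hintg (-r)).symm.trans (hintg r)
    rw [Real.closedBall_eq_Icc] at hr
    simp only [zero_sub, zero_add] at hr
    by_cases hr0 : -r ≤ r
    · exact ((intervalIntegrable_iff_integrableOn_Icc_of_le hr0).1 this).mono_set hr
    · rw [Icc_eq_empty hr0] at hr
      rw [subset_empty_iff.1 hr]; exact integrableOn_empty
  filter_upwards [LocallyIntegrable.ae_hasDerivAt_integral hloc] with s hs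
  have h1 := (hs 0).const_add (γ' 0)
  have h2 : γ' = fun x => γ' 0 + ∫ t in (0 : ℝ)..x, γ'' t := funext heq
  rw [h2]; simpa using h1

/-- The normal turns in the direction of the tangent, at a speed equal to the curvature. -/
lemma ae_normal_deriv {σ : ℝ} (hσ : σ ^ 2 = 1)
    (hsupp : ∀ s, ∀ x ∈ closure Ω, ⟪x - γ s, σ • rot (γ' s)⟫ ≤ 0)
    (hbp : BoundaryParam Ω γ γ' γ'' L) :
    ∀ᵐ s, σ • rot (γ'' s) = ‖γ'' s‖ • γ' s := by
  filter_upwards [ae_deriv_tangent hbp] with s hs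
  have hd := hbp.2.1
  have hn := hbp.2.2.2.1
  have hort : ⟪γ'' s, γ' s⟫ = 0 := by
    have h1 := hs.inner ℝ hs
    have h2 : (fun t => ⟪γ' t, γ' t⟫) = fun _ => (1 : ℝ) := by
      ext t; rw [real_inner_self_eq_norm_sq, hn]; norm_num
    rw [h2] at h1
    have h3 := h1.unique (hasDerivAt_const s (1 : ℝ))
    rw [real_inner_comm (γ'' s)] at h3; linarith
  have hsl1 : Tendsto (slope γ s) (𝓝[≠] s) (𝓝 (γ' s)) := hasDerivAt_iff_tendsto_slope.1 (hd s)
  have hN : HasDerivAt (fun t => σ • rot (γ' t)) (σ • rot (γ'' s)) s :=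
    (rotL.hasFDerivAt.comp_hasDerivAt s hs).const_smul σ
  have hsl2 := hasDerivAt_iff_tendsto_slope.1 hN
  have hpos : 0 ≤ ⟪γ' s, σ • rot (γ'' s)⟫ := by
    refine ge_of_tendsto (hsl1.inner hsl2) ?_
    filter_upwards with t
    rw [slope_def_module, slope_def_module, real_inner_smul_left, real_inner_smul_right,
      ← mul_assoc]
    refine mul_nonneg (mul_self_nonneg _) ?_
    have a1 := hsupp s (γ t) (frontier_subset_closure (curve_mem_frontier hbp t))
    have a2 := hsupp t (γ s) (frontier_subset_closure (curve_mem_frontier hbp s))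
    rw [inner_sub_right]
    have : ⟪γ s - γ t, σ • rot (γ' t)⟫ = -⟪γ t - γ s, σ • rot (γ' t)⟫ := by
      rw [← inner_neg_left, neg_sub]
    linarith
  set y := σ • rot (γ'' s) with hy
  have hnorm : ‖y‖ = ‖γ'' s‖ := by
    have : |σ| = 1 := by
      have : σ = 1 ∨ σ = -1 := by
        have h : (σ - 1) * (σ + 1) = 0 := by linear_combination hσ
        rcases mul_eq_zero.1 h with h | h
        · left; linarith
        · right; linarith
      rcases this with h | h <;> simp [h]
    rw [hy, norm_smul, norm_rot, Real.norm_eq_abs, this, one_mul]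
  have hperp : ⟪y, σ • rot (γ' s)⟫ = 0 := by
    have : ⟪y, σ • rot (γ' s)⟫ = σ ^ 2 * ⟪γ'' s, γ' s⟫ := by
      rw [hy]; simp [inner_E2]; ring
    rw [this, hort, mul_zero]
  have hfr := frame (γ' s) y σ (hn s) hσ
  rw [hperp, zero_smul, add_zero] at hfr
  have h3 : ‖y‖ = ⟪y, γ' s⟫ := by
    conv_lhs => rw [hfr]
    rw [norm_smul, hn, mul_one, Real.norm_eq_abs, abs_of_nonneg]
    rw [real_inner_comm]; exact hpos
  rw [← hnorm, h3]; exact hfr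

end curve

end MeanSq

namespace MeanSq

open Filter Topology

/-! ### Strict convexity -/

section curve2

variable {Ω : Set E2} {γ γ' γ'' : ℝ → E2} {L : ℝ}

lemma intervalIntegrable_curv (hbp : BoundaryParam Ω γ γ' γ'' L) (p q : ℝ) :
    IntervalIntegrable γ'' volume p q := by
  obtain ⟨_, _, _, _, _, _, _, hintg, heq⟩ := hbp
  exact (hintg p).symm.trans (hintg q)

lemma normal_sub {σ : ℝ} (hσ : σ ^ 2 = 1)
    (hsupp : ∀ s, ∀ x ∈ closure Ω, ⟪x - γ s, σ • rot (γ' s)⟫ ≤ 0)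
    (hbp : BoundaryParam Ω γ γ' γ'' L) (p q : ℝ) :
    σ • rot (γ' q) - σ • rot (γ' p) = ∫ s in p..q, ‖γ'' s‖ • γ' s := by
  have hi := intervalIntegrable_curv hbp
  have heq := hbp.2.2.2.2.2.2.2.2
  have h1 : γ' q - γ' p = ∫ s in p..q, γ'' s := by
    rw [heq q, heq p, add_sub_add_left_eq_sub, intervalIntegral.integral_interval_sub_left (hi _ _) (hi _ _)]
  have h2 : σ • rot (γ' q) - σ • rot (γ' p) = (σ • rotL) (γ' q - γ' p) := by
    simp [map_sub]
  rw [h2, h1, ← ContinuousLinearMap.intervalIntegral_comp_comm _ (hi p q)]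
  refine intervalIntegral.integral_congr_ae ?_
  filter_upwards [ae_normal_deriv hσ hsupp hbp] with s hs _
  simpa using hs

lemma intervalIntegrable_curv_tangent (hbp : BoundaryParam Ω γ γ' γ'' L) (p q : ℝ) :
    IntervalIntegrable (fun s => ‖γ'' s‖ • γ' s) volume p q :=
  (intervalIntegrable_curv hbp p q).norm.smul_continuousOn hbp.2.2.1.continuousOn

lemma inner_normal_sub {σ : ℝ} (hσ : σ ^ 2 = 1)
    (hsupp : ∀ s, ∀ x ∈ closure Ω, ⟪x - γ s, σ • rot (γ' s)⟫ ≤ 0)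
    (hbp : BoundaryParam Ω γ γ' γ'' L) (p q : ℝ) (v : E2) :
    ⟪v, σ • rot (γ' q) - σ • rot (γ' p)⟫ = ∫ s in p..q, ‖γ'' s‖ * ⟪v, γ' s⟫ := by
  rw [normal_sub hσ hsupp hbp]
  have h := ContinuousLinearMap.intervalIntegral_comp_comm (innerSL ℝ v)
    (intervalIntegrable_curv_tangent hbp p q)
  simp only [innerSL_apply_apply, real_inner_smul_right] at h
  exact h.symm

/-- Turning of the normal in a direction `v` along which the curve advances at rate at least `m`. -/
lemma turn_lower {σ : ℝ} (hσ : σ ^ 2 = 1)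
    (hsupp : ∀ s, ∀ x ∈ closure Ω, ⟪x - γ s, σ • rot (γ' s)⟫ ≤ 0)
    (hbp : BoundaryParam Ω γ γ' γ'' L) {p q : ℝ} (hpq : p ≤ q) (v : E2) (m : ℝ)
    (hm : ∀ s ∈ Icc p q, m ≤ ⟪v, γ' s⟫) :
    m * ∫ s in p..q, ‖γ'' s‖ ≤ ⟪v, σ • rot (γ' q) - σ • rot (γ' p)⟫ := by
  rw [inner_normal_sub hσ hsupp hbp, ← intervalIntegral.integral_const_mul]
  have hc : Continuous fun s => ⟪v, γ' s⟫ := continuous_const.inner hbp.2.2.1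
  refine intervalIntegral.integral_mono_on hpq
    ((intervalIntegrable_curv hbp p q).norm.const_mul m)
    ((intervalIntegrable_curv hbp p q).norm.mul_continuousOn hc.continuousOn) ?_
  intro s hs
  rw [mul_comm]
  exact mul_le_mul_of_nonneg_left (hm s hs) (norm_nonneg _)

lemma turn_upper {σ : ℝ} (hσ : σ ^ 2 = 1)
    (hsupp : ∀ s, ∀ x ∈ closure Ω, ⟪x - γ s, σ • rot (γ' s)⟫ ≤ 0)
    (hbp : BoundaryParam Ω γ γ' γ'' L) {p q : ℝ} (hpq : p ≤ q) :
    ‖σ • rot (γ' q) - σ • rot (γ' p)‖ ≤ ∫ s in p..q, ‖γ'' s‖ := by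
  rw [normal_sub hσ hsupp hbp]
  refine (intervalIntegral.norm_integral_le_integral_norm hpq).trans (le_of_eq ?_)
  refine intervalIntegral.integral_congr fun s _ => ?_
  simp [norm_smul, hbp.2.2.2.1 s]

lemma ae_curv_low {a : ℝ} (hbp : BoundaryParam Ω γ γ' γ'' L)
    (hlow : ∀ᵐ t ∂(volume.restrict (Set.Icc 0 L)), a ≤ ‖γ'' t‖) :
    ∀ᵐ t, a ≤ ‖γ'' t‖ := by
  have hL := hbp.1
  have hper := periodic_deriv hbp
  have h1 : ∀ᵐ t, t ∈ Icc 0 L → a ≤ ‖deriv γ' t‖ := by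
    filter_upwards [(ae_restrict_iff' measurableSet_Icc).1 hlow, ae_deriv_tangent hbp] with t h h' ht
    rw [h'.deriv]; exact h ht
  have hperd : Function.Periodic (deriv γ') L := by
    intro t
    have h2 : (fun s => γ' (s + L)) = γ' := funext hper
    rw [← deriv_comp_add_const, h2]
  have h2 : ∀ m : ℤ, ∀ᵐ t, t - m • L ∈ Icc 0 L → a ≤ ‖deriv γ' (t - m • L)‖ := fun m =>
    (measurePreserving_sub_right volume (m • L)).quasiMeasurePreserving.ae h1
  filter_upwards [ae_all_iff.2 h2, ae_deriv_tangent hbp] with t ht h'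
  have h3 := sub_toIcoDiv_zsmul_mem_Ico hL 0 t
  have h4 := ht (toIcoDiv hL 0 t) ⟨h3.1, by have := h3.2; linarith⟩
  rw [hperd.sub_zsmul_eq, h'.deriv] at h4
  exact h4

lemma curv_integral_low {a : ℝ} (hbp : BoundaryParam Ω γ γ' γ'' L)
    (hlow : ∀ᵐ t, a ≤ ‖γ'' t‖) {p q : ℝ} (hpq : p ≤ q) :
    a * (q - p) ≤ ∫ s in p..q, ‖γ'' s‖ := by
  have : a * (q - p) = ∫ s in p..q, a := by simp [mul_comm]
  rw [this]
  exact intervalIntegral.integral_mono_ae hpq (by simp)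
    (intervalIntegrable_curv hbp p q).norm hlow

/-- Quadratic separation of the boundary from its tangent lines: a lower bound for the
curvature makes the domain lie inside a paraboloid region at each boundary point. -/
lemma exists_para {σ : ℝ} (hσ : σ ^ 2 = 1) (hbdd : Bornology.IsBounded Ω)
    (hsupp : ∀ s, ∀ x ∈ closure Ω, ⟪x - γ s, σ • rot (γ' s)⟫ ≤ 0)
    (hbp : BoundaryParam Ω γ γ' γ'' L) {a : ℝ} (ha : 0 < a)
    (hlow : ∀ᵐ t, a ≤ ‖γ'' t‖) :
    ∃ c > 0, ∀ s, ∀ x ∈ closure Ω, c * ‖x - γ s‖ ^ 2 ≤ ⟪γ s - x, σ • rot (γ' s)⟫ := by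
  have hL := hbp.1
  have hd := hbp.2.1
  have hcγ' := hbp.2.2.1
  have hn := hbp.2.2.2.1
  have hper := periodic_deriv hbp
  obtain ⟨η, hη, huc⟩ := periodic_uniform hL hcγ' hper (ε := 1 / 2) (by norm_num)
  obtain ⟨D, hD⟩ := hbdd.closure.exists_norm_le
  have hDD : ∀ x ∈ closure Ω, ‖x‖ ≤ max D 1 := fun x hx => (hD x hx).trans (le_max_left _ _)
  set D1 := max D 1 with hD1
  have hD1' : 1 ≤ D1 := le_max_right _ _
  have hσa : |σ| = 1 := by
    have h : (|σ|) ^ 2 = 1 := by rw [sq_abs]; exact hσ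
    have h2 := abs_nonneg σ
    nlinarith
  have hNn : ∀ s, ‖σ • rot (γ' s)‖ = 1 := fun s => by
    rw [norm_smul, norm_rot, hn, Real.norm_eq_abs, hσa, one_mul]
  set β := min (1 / 4) (η / (2 * D1)) with hβ
  have hβpos : 0 < β := by positivity
  have hβ4 : β ≤ 1 / 4 := min_le_left _ _
  have hβη : β * (2 * D1) ≤ η := by
    have : β ≤ η / (2 * D1) := min_le_right _ _
    rwa [le_div_iff₀ (by positivity)] at this
  have hLip : ∀ p q, ‖γ p - γ q‖ ≤ |p - q| := by
    intro p q
    have := Convex.norm_image_sub_le_of_norm_hasDerivWithin_le (f := γ) (f' := γ') (C := 1)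
      (s := univ) (fun x _ => (hd x).hasDerivWithinAt) (fun x _ => (hn x).le) convex_univ
      (mem_univ q) (mem_univ p)
    simpa using this
  have hmem : ∀ s, γ s ∈ closure Ω := fun s =>
    frontier_subset_closure (curve_mem_frontier hbp s)
  set N : ℝ → E2 := fun s => σ • rot (γ' s) with hN
  have key : ∀ s, ∀ x ∈ closure Ω,
      a * β * ⟪x - γ s, γ' s⟫ ^ 2 ≤ 20 * ⟪γ s - x, N s⟫ := by
    intro s x hx
    set ℓ := ⟪x - γ s, γ' s⟫ with hℓ
    set d := ⟪γ s - x, N s⟫ with hdd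
    have hxs : ‖x - γ s‖ ≤ 2 * D1 := by
      refine (norm_sub_le _ _).trans ?_
      have := hDD x hx; have := hDD _ (hmem s); linarith
    have hℓD : |ℓ| ≤ 2 * D1 := by
      refine (abs_real_inner_le_norm _ _).trans ?_
      rw [hn, mul_one]; exact hxs
    have hd0 : 0 ≤ d := by
      have := hsupp s x hx
      have h2 : d = -⟪x - γ s, N s⟫ := by rw [hdd, ← inner_neg_left, neg_sub]
      rw [h2]; simp only [hN]; linarith
    have hfr : x - γ s = ℓ • γ' s + (-d) • N s := by
      have h1 := frame (γ' s) (x - γ s) σ (hn s) hσ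
      have h2 : -d = ⟪x - γ s, N s⟫ := by rw [hdd, ← inner_neg_left, neg_sub]
      rw [h2]; exact h1
    set η' := β * |ℓ| with hη'
    have hη'0 : 0 ≤ η' := by positivity
    have hη'η : η' ≤ η := by
      calc β * |ℓ| ≤ β * (2 * D1) := by gcongr
        _ ≤ η := hβη
    -- inner products of nearby tangents
    have htan : ∀ t, |s - t| ≤ η → 1 / 2 ≤ ⟪γ' s, γ' t⟫ := by
      intro t ht
      have h1 := huc s t ht
      have h2 : ⟪γ' s, γ' t⟫ = 1 - ⟪γ' s, γ' s - γ' t⟫ := by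
        rw [inner_sub_right, real_inner_self_eq_norm_sq, hn]; ring
      have h3 := real_inner_le_norm (γ' s) (γ' s - γ' t)
      rw [hn, one_mul] at h3
      linarith
    -- the two orientations are treated through the sign `ς`
    have main : ∀ ς : ℝ, ∀ s' A : ℝ, |s' - s| ≤ η' → 0 ≤ A → a * η' ≤ A → 
        ‖N s' - N s‖ ≤ A → (A / 2 ≤ ⟪ς • γ' s, N s' - N s⟫) → |ς| = 1 → 
        ((|ℓ| / 2 - d) * A ≤ ⟪x - γ s, N s' - N s⟫) → a * β * ℓ ^ 2 ≤ 20 * d := by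
      intro ς s' A hs' hA0 hA hNA hA2 hς hin
      have hA4 : A ≤ 4 := by
        have h1 := real_inner_le_norm (ς • γ' s) (N s' - N s)
        rw [norm_smul, hn, Real.norm_eq_abs, hς, one_mul, one_mul] at h1
        have h2 := norm_sub_le (N s') (N s)
        rw [hNn, hNn] at h2
        linarith
      have h1 := hsupp s' x hx
      have h1' : ⟪x - γ s', N s'⟫ ≤ 0 := h1
      have h2 := hsupp s (γ s') (hmem s')
      have h2' : ⟪γ s' - γ s, N s⟫ ≤ 0 := h2
      have h3 : ⟪γ s' - γ s, N s' - N s⟫ ≤ η' * A := by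
        refine (real_inner_le_norm _ _).trans ?_
        exact mul_le_mul ((hLip _ _).trans hs') hNA (norm_nonneg _) hη'0
      have h4 : ⟪x - γ s', N s'⟫ = ⟪x - γ s, N s' - N s⟫ - d - ⟪γ s' - γ s, N s' - N s⟫
          - ⟪γ s' - γ s, N s⟫ := by
        rw [hdd]
        simp only [inner_sub_left, inner_sub_right]; ring
      have h5 : (|ℓ| / 2 - d) * A ≤ d + η' * A := by linarith
      have h6 : η' * A ≤ |ℓ| / 4 * A := by
        refine mul_le_mul_of_nonneg_right ?_ hA0
        have := mul_le_mul_of_nonneg_right hβ4 (abs_nonneg ℓ)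
        linarith
      have h7 : d * A ≤ d * 4 := mul_le_mul_of_nonneg_left hA4 hd0
      have h8 : |ℓ| / 4 * A ≤ 5 * d := by linarith
      have h9 : |ℓ| * (a * η') ≤ |ℓ| * A := mul_le_mul_of_nonneg_left hA (abs_nonneg _)
      have h10 : a * β * ℓ ^ 2 = |ℓ| * (a * η') := by rw [hη', ← sq_abs]; ring
      linarith
    have hiN : ∀ t, ⟪N s, γ' t⟫ ≤ 1 ∧ -1 ≤ ⟪N s, γ' t⟫ := by
      intro t
      have := abs_real_inner_le_norm (N s) (γ' t)
      rw [hn, hNn, one_mul, abs_le] at this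
      exact ⟨this.2, this.1⟩
    have hexp : ∀ t, ⟪x - γ s, γ' t⟫ = ℓ * ⟪γ' s, γ' t⟫ - d * ⟪N s, γ' t⟫ := by
      intro t
      rw [hfr, inner_add_left, real_inner_smul_left, real_inner_smul_left]; ring
    rcases le_total 0 ℓ with hsgn | hsgn
    · have hle : s ≤ s + η' := by linarith
      have hz : ∀ t ∈ Icc s (s + η'), |s - t| ≤ η := by
        intro t ht; rw [abs_le]; constructor <;> linarith [ht.1, ht.2]
      refine main 1 (s + η') (∫ t in s..(s + η'), ‖γ'' t‖) (by simp [abs_of_nonneg hη'0])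
        (intervalIntegral.integral_nonneg hle fun _ _ => norm_nonneg _) ?_
        (turn_upper hσ hsupp hbp hle) ?_ (by simp) ?_
      · have := curv_integral_low hbp hlow hle
        simpa using this
      · have := turn_lower hσ hsupp hbp hle (γ' s) (1 / 2) fun t ht => htan t (hz t ht)
        rw [one_smul]; simp only [hN]; linarith
      · refine turn_lower hσ hsupp hbp hle (x - γ s) _ fun t ht => ?_
        rw [hexp, abs_of_nonneg hsgn]
        have e1 := htan t (hz t ht)
        have e2 := mul_le_mul_of_nonneg_left e1 hsgn
        have e3 := mul_le_mul_of_nonneg_left (hiN t).1 hd0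
        linarith
    · have hle : s - η' ≤ s := by linarith
      have hz : ∀ t ∈ Icc (s - η') s, |s - t| ≤ η := by
        intro t ht; rw [abs_le]; constructor <;> linarith [ht.1, ht.2]
      refine main (-1) (s - η') (∫ t in (s - η')..s, ‖γ'' t‖) (by simp [abs_of_nonneg hη'0])
        (intervalIntegral.integral_nonneg hle fun _ _ => norm_nonneg _) ?_
        ?_ ?_ (by simp) ?_
      · have := curv_integral_low hbp hlow hle
        simpa using this
      · rw [norm_sub_rev]; exact turn_upper hσ hsupp hbp hle
      · have := turn_lower hσ hsupp hbp hle (γ' s) (1 / 2) fun t ht => htan t (hz t ht)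
        have e : ⟪(-1 : ℝ) • γ' s, N (s - η') - N s⟫ = ⟪γ' s, N s - N (s - η')⟫ := by
          rw [neg_one_smul, inner_neg_left, ← inner_neg_right, neg_sub]
        rw [e]; simp only [hN]; linarith
      · have := turn_lower hσ hsupp hbp hle (-(x - γ s)) (|ℓ| / 2 - d) fun t ht => ?_
        · have e : ⟪x - γ s, N (s - η') - N s⟫ = ⟪-(x - γ s), N s - N (s - η')⟫ := by
            rw [inner_neg_left, ← inner_neg_right, neg_sub]
          rw [e]; exact this
        · rw [inner_neg_left, hexp, abs_of_nonpos hsgn]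
          have e1 := htan t (hz t ht)
          have e2 := mul_le_mul_of_nonneg_left e1 (neg_nonneg.2 hsgn)
          have e3 := mul_le_mul_of_nonneg_left (hiN t).2 hd0
          linarith
  refine ⟨(20 / (a * β) + 2 * D1)⁻¹, by positivity, fun s x hx => ?_⟩
  have h1 := key s x hx
  have h2 := frame_normSq (γ' s) (x - γ s) σ (hn s) hσ
  have h3 : ⟪x - γ s, N s⟫ = -⟪γ s - x, N s⟫ := by rw [← inner_neg_left, neg_sub]
  have h3' : ⟪x - γ s, σ • rot (γ' s)⟫ = -⟪γ s - x, N s⟫ := h3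
  rw [h3'] at h2
  have h4 : ⟪γ s - x, N s⟫ ≤ 2 * D1 := by
    refine (real_inner_le_norm _ _).trans ?_
    rw [hNn, mul_one]
    refine (norm_sub_le _ _).trans ?_
    have := hDD x hx; have := hDD _ (hmem s); linarith
  have h5 : 0 ≤ ⟪γ s - x, N s⟫ := by
    have := hsupp s x hx
    rw [h3'] at this; linarith
  rw [inv_mul_le_iff₀ (by positivity), h2]
  have h6 : ⟪x - γ s, γ' s⟫ ^ 2 ≤ 20 / (a * β) * ⟪γ s - x, N s⟫ := by
    rw [div_mul_eq_mul_div, le_div_iff₀ (by positivity)]; linarith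
  change _ ≤ (20 / (a * β) + 2 * D1) * ⟪γ s - x, N s⟫
  nlinarith

/-- Every direction is the outward normal at some boundary point: a point of the closure where
`⟪·, ξ⟫` is maximal. -/
lemma exists_normal_dir {σ : ℝ} (hσ : σ ^ 2 = 1) (hopen : IsOpen Ω)
    (hbdd : Bornology.IsBounded Ω) (h0 : (0 : E2) ∈ Ω)
    (hpos : ∀ s, 0 < ⟪γ s, σ • rot (γ' s)⟫)
    (hbp : BoundaryParam Ω γ γ' γ'' L) (ξ : E2) (hξ : ξ ≠ 0) :
    ∃ s ∈ Ico 0 L, ξ = ‖ξ‖ • (σ • rot (γ' s)) := by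
  have hn := hbp.2.2.2.1
  have hcpt : IsCompact (closure Ω) := hbdd.isCompact_closure
  have hne : (closure Ω).Nonempty := ⟨0, subset_closure h0⟩
  obtain ⟨x, hx, hmax⟩ := hcpt.exists_isMaxOn hne
    (f := fun x : E2 => ⟪x, ξ⟫) (continuous_id.inner continuous_const).continuousOn
  have hmax' : ∀ y ∈ closure Ω, ⟪y, ξ⟫ ≤ ⟪x, ξ⟫ := fun y hy => hmax hy
  have hξn : 0 < ‖ξ‖ := norm_pos_iff.2 hξ
  have hxf : x ∈ frontier Ω := by
    rw [hopen.frontier_eq]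
    refine ⟨hx, fun hxΩ => ?_⟩
    obtain ⟨r, hr, hball⟩ := Metric.isOpen_iff.1 hopen x hxΩ
    have h1 : x + (r / 2 / ‖ξ‖) • ξ ∈ Ω := by
      apply hball
      rw [Metric.mem_ball, dist_eq_norm, add_sub_cancel_left, norm_smul, Real.norm_eq_abs,
        abs_of_pos (by positivity)]
      field_simp; linarith
    have h2 := hmax' _ (subset_closure h1)
    rw [inner_add_left, real_inner_smul_left, real_inner_self_eq_norm_sq] at h2
    have : 0 < r / 2 / ‖ξ‖ * ‖ξ‖ ^ 2 := by positivity
    linarith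
  rw [← hbp.2.2.2.2.2.1] at hxf
  obtain ⟨s, hs, rfl⟩ := hxf
  refine ⟨s, hs, ?_⟩
  have hloc : IsLocalMax (fun t => ⟪γ t, ξ⟫) s :=
    Eventually.of_forall fun t =>
      hmax' _ (frontier_subset_closure (curve_mem_frontier hbp t))
  have hder : HasDerivAt (fun t => ⟪γ t, ξ⟫) (⟪γ s, (0 : E2)⟫ + ⟪γ' s, ξ⟫) s :=
    (hbp.2.1 s).inner ℝ (hasDerivAt_const s ξ)
  have hz := hloc.hasDerivAt_eq_zero hder
  rw [inner_zero_right, zero_add, real_inner_comm] at hz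
  have hfr := frame (γ' s) ξ σ (hn s) hσ
  have hfn := frame_normSq (γ' s) ξ σ (hn s) hσ
  rw [hz] at hfr hfn
  set N := σ • rot (γ' s)
  have h1 := hmax' 0 (subset_closure h0)
  rw [inner_zero_left, hfr, zero_smul, zero_add, real_inner_smul_right] at h1
  have h2 : 0 ≤ ⟪ξ, N⟫ := nonneg_of_mul_nonneg_left h1 (hpos s)
  have h3 : ‖ξ‖ = ⟪ξ, N⟫ := by
    rw [zero_pow two_ne_zero, zero_add] at hfn
    exact (sq_eq_sq₀ (norm_nonneg _) h2).1 hfn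
  rw [h3]
  simpa using hfr

end curve2

end MeanSq

namespace MeanSq

open Filter Topology

/-! ### Geometric data of the domain -/

section curve3

variable {Ω : Set E2} {γ γ' γ'' : ℝ → E2} {L : ℝ}

/-- The set of boundary points almost orthogonal to a given vector is short: where
`⟪γ, v⟫` is small, its derivative is bounded away from `0`. -/
lemma exists_orth_measure {σ c₀ D : ℝ} (hσ : σ ^ 2 = 1) (hc₀ : 0 < c₀)
    (hlow : ∀ s, c₀ ≤ ⟪γ s, σ • rot (γ' s)⟫) (hD : ∀ s, ‖γ s‖ ≤ D)
    (hbp : BoundaryParam Ω γ γ' γ'' L) :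
    ∃ C > 0, ∀ v : E2, 1 ≤ ‖v‖ → ∀ η : ℝ, 0 ≤ η →
      volume {s ∈ Icc 0 L | |⟪γ s, v⟫| ≤ η} ≤ ENNReal.ofReal (C * η) := by
  have hL := hbp.1
  have hd := hbp.2.1
  have hn := hbp.2.2.2.1
  have hσa : |σ| = 1 := by
    have h : (|σ|) ^ 2 = 1 := by rw [sq_abs]; exact hσ
    have h2 := abs_nonneg σ
    nlinarith
  have hNn : ∀ s, ‖σ • rot (γ' s)‖ = 1 := fun s => by
    rw [norm_smul, norm_rot, hn, Real.norm_eq_abs, hσa, one_mul]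
  have hDc : c₀ ≤ D := by
    have h1 := hlow 0
    have h2 := real_inner_le_norm (γ 0) (σ • rot (γ' 0))
    rw [hNn, mul_one] at h2
    linarith [hD 0]
  have hDpos : 0 < D := hc₀.trans_le hDc
  set c' := c₀ / (4 * D) with hc'
  have hc'pos : 0 < c' := by positivity
  have hc'le : c' ≤ 1 / 4 := by
    rw [hc', div_le_iff₀ (by positivity)]; linarith
  have hDc' : D * c' = c₀ / 4 := by rw [hc']; field_simp
  obtain ⟨δ, hδ, huc⟩ := periodic_uniform hL hbp.2.2.1 (periodic_deriv hbp)
    (ε := c' / 2) (by positivity)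
  -- transversality for unit vectors
  have htr : ∀ v : E2, ‖v‖ = 1 → ∀ s, |⟪γ s, v⟫| ≤ c₀ / 8 → c' ≤ |⟪v, γ' s⟫| := by
    intro v hv s hs
    by_contra hcon
    push Not at hcon
    have h1 := frame_normSq (γ' s) v σ (hn s) hσ
    have h2 : ⟪γ s, v⟫ = ⟪γ s, γ' s⟫ * ⟪v, γ' s⟫
        + ⟪γ s, σ • rot (γ' s)⟫ * ⟪v, σ • rot (γ' s)⟫ := by
      have h3 := frame (γ' s) v σ (hn s) hσ
      have h4 := congrArg (fun z => ⟪γ s, z⟫) h3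
      simp only [inner_add_right, real_inner_smul_right] at h4
      simp only [real_inner_smul_right]
      rw [h4]; ring
    set N := σ • rot (γ' s)
    have h5 : |⟪γ s, γ' s⟫| ≤ D := by
      refine (abs_real_inner_le_norm _ _).trans ?_
      rw [hn, mul_one]; exact hD s
    have h6 : |⟪γ s, γ' s⟫ * ⟪v, γ' s⟫| ≤ c₀ / 4 := by
      rw [abs_mul, ← hDc']
      exact mul_le_mul h5 hcon.le (abs_nonneg _) hDpos.le
    have h7 : 1 / 2 ≤ |⟪v, N⟫| := by
      by_contra h8
      push Not at h8
      rw [hv, ← sq_abs ⟪v, γ' s⟫, ← sq_abs ⟪v, N⟫] at h1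
      have := abs_nonneg ⟪v, N⟫
      have := abs_nonneg ⟪v, γ' s⟫
      nlinarith
    have h8 : c₀ / 2 ≤ |⟪γ s, N⟫ * ⟪v, N⟫| := by
      rw [abs_mul]
      have h9 : c₀ ≤ |⟪γ s, N⟫| := (hlow s).trans (le_abs_self _)
      nlinarith [abs_nonneg ⟪v, N⟫]
    have h9 : ⟪γ s, N⟫ * ⟪v, N⟫ = ⟪γ s, v⟫ - ⟪γ s, γ' s⟫ * ⟪v, γ' s⟫ := by rw [h2]; ring
    rw [h9] at h8
    have := abs_sub (⟪γ s, v⟫) (⟪γ s, γ' s⟫ * ⟪v, γ' s⟫)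
    linarith
  set m : ℕ := ⌈L / δ⌉₊ with hm
  refine ⟨(m + 1) * (4 / c') + 8 * L / c₀, by positivity, ?_⟩
  have hunit : ∀ v : E2, ‖v‖ = 1 → ∀ η : ℝ, 0 ≤ η →
      volume {s ∈ Icc 0 L | |⟪γ s, v⟫| ≤ η} ≤
        ENNReal.ofReal (((m + 1) * (4 / c') + 8 * L / c₀) * η) := by
    intro v hv η hη
    rcases le_or_gt (c₀ / 8) η with hbig | hsmall
    · calc volume {s ∈ Icc 0 L | |⟪γ s, v⟫| ≤ η} ≤ volume (Icc 0 L) :=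
            measure_mono (sep_subset _ _)
        _ = ENNReal.ofReal L := by rw [Real.volume_Icc, sub_zero]
        _ ≤ _ := by
          apply ENNReal.ofReal_le_ofReal
          have h1 : L ≤ 8 * L / c₀ * η := by
            rw [div_mul_eq_mul_div, le_div_iff₀ hc₀]
            nlinarith
          have h2 : 0 ≤ (m + 1) * (4 / c') * η := by positivity
          linarith
    · have hpiece : ∀ p q, p ∈ {s ∈ Icc 0 L | |⟪γ s, v⟫| ≤ η} →
          q ∈ {s ∈ Icc 0 L | |⟪γ s, v⟫| ≤ η} → p ≤ q → q - p ≤ δ → q - p ≤ 4 / c' * η := by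
        intro p q hp hq hpq hpqδ
        have hder : ∀ x, HasDerivAt (fun t => ⟪v, γ t⟫) (⟪v, γ' x⟫) x := fun x => by
          have := (hasDerivAt_const x v).inner ℝ (hd x)
          simpa using this
        rcases hpq.eq_or_lt with h | h
        · rw [h, sub_self]; positivity
        obtain ⟨x, hx, hx'⟩ := exists_hasDerivAt_eq_slope (fun t => ⟪v, γ t⟫)
          (fun t => ⟪v, γ' t⟫) h
          (fun x _ => (hder x).continuousAt.continuousWithinAt) (fun x _ => hder x)
        have h1 := htr v hv p (hp.2.trans hsmall.le)
        have h2 : |⟪v, γ' p⟫ - ⟪v, γ' x⟫| ≤ c' / 2 := by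
          rw [← inner_sub_right]
          refine (abs_real_inner_le_norm _ _).trans ?_
          rw [hv, one_mul]
          refine huc p x ?_
          rw [abs_le]; constructor <;> linarith [hx.1, hx.2]
        have h3 : c' / 2 ≤ |⟪v, γ' x⟫| := by
          have := abs_sub_abs_le_abs_sub ⟪v, γ' p⟫ ⟪v, γ' x⟫
          linarith
        rw [hx', abs_div, abs_of_pos (sub_pos.2 h), le_div_iff₀ (sub_pos.2 h)] at h3
        have h4 : |⟪v, γ q⟫ - ⟪v, γ p⟫| ≤ 2 * η := by
          have e1 := hp.2; have e2 := hq.2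
          rw [real_inner_comm] at e1 e2
          have := abs_sub ⟪v, γ q⟫ ⟪v, γ p⟫
          linarith
        have h5 : c' / 2 * (q - p) ≤ 2 * η := h3.trans h4
        rw [div_mul_eq_mul_div, le_div_iff₀ hc'pos]; linarith
      have hcov : {s ∈ Icc 0 L | |⟪γ s, v⟫| ≤ η} ⊆ ⋃ j ∈ Finset.range (m + 1),
          ({s ∈ Icc 0 L | |⟪γ s, v⟫| ≤ η} ∩ Icc (j * δ) ((j + 1) * δ)) := by
        intro s hs
        have hs0 := hs.1.1
        have h1 : ⌊s / δ⌋₊ ≤ m := (Nat.floor_mono (by gcongr; exact hs.1.2)).trans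
          (Nat.floor_le_ceil _)
        simp only [mem_iUnion]
        refine ⟨⌊s / δ⌋₊, Finset.mem_range.2 (by omega), hs, ?_, ?_⟩
        · rw [← le_div_iff₀ hδ]; exact Nat.floor_le (by positivity)
        · rw [← div_le_iff₀ hδ]; exact (Nat.lt_floor_add_one _).le
      refine (measure_mono hcov).trans ((measure_biUnion_finset_le _ _).trans ?_)
      have hone : ∀ j ∈ Finset.range (m + 1),
          volume ({s ∈ Icc 0 L | |⟪γ s, v⟫| ≤ η} ∩ Icc ((j : ℝ) * δ) ((j + 1) * δ)) ≤
            ENNReal.ofReal (4 / c' * η) := by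
        intro j _
        refine (Real.volume_le_diam _).trans (Metric.ediam_le ?_)
        rintro p ⟨hp, hp'⟩ q ⟨hq, hq'⟩
        rw [edist_dist]
        apply ENNReal.ofReal_le_ofReal
        rw [Real.dist_eq]
        rcases le_total p q with h | h
        · rw [abs_sub_comm, abs_of_nonneg (by linarith)]
          exact hpiece p q hp hq h (by linarith [hp'.1, hq'.2])
        · rw [abs_of_nonneg (by linarith)]
          exact hpiece q p hq hp h (by linarith [hp'.2, hq'.1])
      refine (Finset.sum_le_sum hone).trans ?_
      rw [Finset.sum_const, Finset.card_range, nsmul_eq_mul]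
      have : ((m + 1 : ℕ) : ℝ≥0∞) = ENNReal.ofReal ((m : ℝ) + 1) := by
        rw [← ENNReal.ofReal_natCast]; push_cast; rfl
      rw [this, ← ENNReal.ofReal_mul (by positivity)]
      apply ENNReal.ofReal_le_ofReal
      have : 0 ≤ 8 * L / c₀ * η := by positivity
      linarith
  intro v hv η hη
  have hv0 : 0 < ‖v‖ := by linarith
  refine (measure_mono ?_).trans (hunit (‖v‖⁻¹ • v) ?_ η hη)
  · rintro s ⟨hs, hs'⟩
    refine ⟨hs, ?_⟩
    rw [real_inner_smul_right, abs_mul, abs_of_pos (by positivity)]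
    have : ‖v‖⁻¹ ≤ 1 := inv_le_one_of_one_le₀ hv
    have := abs_nonneg ⟪γ s, v⟫
    nlinarith [inv_pos.2 hv0]
  · rw [norm_smul, norm_inv, norm_norm, inv_mul_cancel₀ hv0.ne']

/-- The geometric data extracted from the hypotheses: `γ` runs through the boundary with
outward unit normal `n` and curvature `κ`; all constants are compared with one small `c`
and one large `D`. -/
structure Geo (Ω : Set E2) (γ n : ℝ → E2) (κ : ℝ → ℝ) (L c D : ℝ) : Prop where
  conv : Convex ℝ Ω
  opn : IsOpen Ω
  bdd : Bornology.IsBounded Ω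
  zero_mem : (0 : E2) ∈ Ω
  L_pos : 0 < L
  c_pos : 0 < c
  c_le : c ≤ 1
  one_le_D : 1 ≤ D
  L_le : L ≤ D
  norm_n : ∀ s, ‖n s‖ = 1
  lip : ∀ p q, ‖γ p - γ q‖ ≤ |p - q|
  norm_le : ∀ x ∈ closure Ω, ‖x‖ ≤ D
  ball_sub : Metric.ball 0 c ⊆ Ω
  mem : ∀ s, γ s ∈ closure Ω
  low : ∀ s, c ≤ ⟪γ s, n s⟫
  para : ∀ s, ∀ x ∈ closure Ω, c * ‖x - γ s‖ ^ 2 ≤ ⟪γ s - x, n s⟫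
  κ_nonneg : ∀ s, 0 ≤ κ s
  κ_int : ∀ p q, IntervalIntegrable κ volume p q
  κ_low : ∀ p q, p ≤ q → c * (q - p) ≤ ∫ s in p..q, κ s
  κ_tot : ∫ s in (0 : ℝ)..L, κ s ≤ D
  turn : ∀ p q, p ≤ q → ‖n q - n p‖ ≤ ∫ s in p..q, κ s
  surj : ∀ ξ : E2, ξ ≠ 0 → ∃ s ∈ Ico 0 L, ξ = ‖ξ‖ • n s
  orth : ∀ v : E2, 1 ≤ ‖v‖ → ∀ η : ℝ, 0 ≤ η →
      volume {s ∈ Icc 0 L | |⟪γ s, v⟫| ≤ η} ≤ ENNReal.ofReal (D * η)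
  κ_log : IntegrableOn (fun s => κ s * Real.log (2 + κ s)) (Icc 0 L)

/-- The hypotheses of the theorem provide the geometric data. -/
lemma exists_geo (hconv : Convex ℝ Ω) (hopen : IsOpen Ω)
    (hbdd : Bornology.IsBounded Ω) (h0 : (0 : E2) ∈ Ω)
    (hbp : BoundaryParam Ω γ γ' γ'' L)
    {a ε : ℝ} (ha : 0 < a) (hε : 0 < ε)
    (hlow : ∀ᵐ t ∂(volume.restrict (Set.Icc 0 L)), a ≤ ‖γ'' t‖)
    (hLlogL : IntegrableOn
      (fun t => ‖γ'' t‖ * Real.log (2 + ‖γ'' t‖) ^ ((2 : ℝ) + ε)) (Set.Icc 0 L)) :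
    ∃ (n : ℝ → E2) (c D : ℝ), Geo Ω γ n (fun s => ‖γ'' s‖) L c D := by
  obtain ⟨σ, hσ, hpos, hsupp⟩ := exists_normal hconv hopen h0 hbp
  have hlow' := ae_curv_low hbp hlow
  obtain ⟨c₁, hc₁, hpara⟩ := exists_para hσ hbdd hsupp hbp ha hlow'
  obtain ⟨D₁, hD₁⟩ := hbdd.closure.exists_norm_le
  obtain ⟨r, hr, hball⟩ := Metric.isOpen_iff.1 hopen 0 h0
  have hn := hbp.2.2.2.1
  have hσa : |σ| = 1 := by
    have h : (|σ|) ^ 2 = 1 := by rw [sq_abs]; exact hσ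
    have h2 := abs_nonneg σ
    nlinarith
  have hNn : ∀ s, ‖σ • rot (γ' s)‖ = 1 := fun s => by
    rw [norm_smul, norm_rot, hn, Real.norm_eq_abs, hσa, one_mul]
  have hmem : ∀ s, γ s ∈ closure Ω := fun s =>
    frontier_subset_closure (curve_mem_frontier hbp s)
  have hlo : ∀ s, r / 2 ≤ ⟪γ s, σ • rot (γ' s)⟫ := by
    intro s
    have h1 : (r / 2) • (σ • rot (γ' s)) ∈ Ω := by
      apply hball
      rw [mem_ball_zero_iff, norm_smul, hNn, mul_one, Real.norm_eq_abs, abs_of_pos (by positivity)]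
      linarith
    have h2 := hsupp s _ (subset_closure h1)
    rw [inner_sub_left, real_inner_smul_left, real_inner_self_eq_norm_sq, hNn] at h2
    linarith
  obtain ⟨C, hC, horth⟩ := exists_orth_measure hσ (half_pos hr) hlo
    (fun s => hD₁ _ (hmem s)) hbp
  set c := min (min 1 (r / 2)) (min c₁ a) with hc
  set D := max (max 1 L) (max (max C D₁) (∫ s in (0 : ℝ)..L, ‖γ'' s‖)) with hD
  have hc1 : c ≤ 1 := (min_le_left _ _).trans (min_le_left _ _)
  have hcr : c ≤ r / 2 := (min_le_left _ _).trans (min_le_right _ _)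
  have hcc : c ≤ c₁ := (min_le_right _ _).trans (min_le_left _ _)
  have hca : c ≤ a := (min_le_right _ _).trans (min_le_right _ _)
  have hD1 : 1 ≤ D := (le_max_left _ _).trans (le_max_left _ _)
  have hDL : L ≤ D := (le_max_right _ _).trans (le_max_left _ _)
  have hDC : C ≤ D := (le_max_left _ _).trans ((le_max_left _ _).trans (le_max_right _ _))
  have hDD : D₁ ≤ D := (le_max_right _ _).trans ((le_max_left _ _).trans (le_max_right _ _))
  have hDi : ∫ s in (0 : ℝ)..L, ‖γ'' s‖ ≤ D := (le_max_right _ _).trans (le_max_right _ _)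
  have hκi : ∀ p q, IntervalIntegrable (fun s => ‖γ'' s‖) volume p q := fun p q =>
    (intervalIntegrable_curv hbp p q).norm
  refine ⟨fun s => σ • rot (γ' s), c, D, hconv, hopen, hbdd, h0, hbp.1, by positivity, hc1, hD1,
    hDL, hNn, ?_, fun x hx => (hD₁ x hx).trans hDD,
    (Metric.ball_subset_ball (by linarith)).trans hball, hmem, fun s => hcr.trans (hlo s), ?_,
    fun _ => norm_nonneg _, hκi, ?_, hDi, fun p q hpq => turn_upper hσ hsupp hbp hpq,
    exists_normal_dir hσ hopen hbdd h0 hpos hbp, ?_, ?_⟩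
  · intro p q
    have := Convex.norm_image_sub_le_of_norm_hasDerivWithin_le (f := γ) (f' := γ') (C := 1)
      (s := univ) (fun x _ => (hbp.2.1 x).hasDerivWithinAt) (fun x _ => (hn x).le) convex_univ
      (mem_univ q) (mem_univ p)
    simpa using this
  · intro s x hx
    refine le_trans ?_ (hpara s x hx)
    gcongr
  · intro p q hpq
    refine le_trans ?_ (curv_integral_low hbp hlow' hpq)
    have : 0 ≤ q - p := by linarith
    gcongr
  · intro v hv η hη
    refine (horth v hv η hη).trans (ENNReal.ofReal_le_ofReal ?_)
    gcongr
  · have hκ : IntegrableOn (fun s => ‖γ'' s‖) (Icc 0 L) :=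
      (intervalIntegrable_iff_integrableOn_Icc_of_le hbp.1.le).1 (hκi 0 L)
    refine (hκ.add hLlogL).mono' ?_ ?_
    · exact (hκ.aemeasurable.mul
        (Real.measurable_log.comp_aemeasurable (hκ.aemeasurable.const_add 2))).aestronglyMeasurable
    · refine Eventually.of_forall fun s => ?_
      have hk := norm_nonneg (γ'' s)
      have hlog : 0 ≤ Real.log (2 + ‖γ'' s‖) := Real.log_nonneg (by linarith)
      rw [Real.norm_eq_abs, abs_of_nonneg (by positivity)]
      simp only [Pi.add_apply]
      have h1 : Real.log (2 + ‖γ'' s‖) ≤ 1 + Real.log (2 + ‖γ'' s‖) ^ ((2 : ℝ) + ε) := by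
        set y := Real.log (2 + ‖γ'' s‖)
        have hy : 0 ≤ y ^ ((2 : ℝ) + ε) := by positivity
        rcases le_total y 1 with h | h
        · linarith
        · have : y ^ (1 : ℝ) ≤ y ^ ((2 : ℝ) + ε) :=
            Real.rpow_le_rpow_of_exponent_le h (by linarith)
          rw [Real.rpow_one] at this; linarith
      nlinarith

end curve3

end MeanSq

namespace MeanSq

open Filter Topology

/-! ### Lattice points close to a line -/

/-- Lattice points in a thin box along the line `y f + x g = 0`, when that line is not close to
a short integer vector. A Dirichlet approximation `a / b` of the slope sends a lattice point to
the pair (index of the line `b g + a f = const`, block of length `b` on it), injectively. -/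
lemma box_count_aux {ι : Type*} {x y c D C1 C2 H w : ℝ} (hc : 0 < c) (hyx : |y| ≤ |x|)
    (hcx : c ≤ |x|) (hxD : |x| ≤ D) (hC1 : 0 < C1) (hC2 : 0 < C2) (hH : 1 ≤ H) (hw : 0 < w)
    (hgood : ∀ b a : ℤ, b ≠ 0 → |(b : ℝ)| ≤ 1 / w → |(a : ℝ)| ≤ 1 / w → D / H < |y * b + x * a|)
    (Z : Finset ι) (f g : ι → ℤ) (hinj : ∀ z ∈ Z, ∀ z' ∈ Z, f z = f z' → g z = g z' → z = z')
    (hf : ∀ z ∈ Z, |(f z : ℝ)| ≤ C1 * H) (hfg : ∀ z ∈ Z, |y * f z + x * g z| ≤ C2 * w) :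
    (Z.card : ℝ) ≤ (2 * C2 / c + 4 * C1 + 2) * (2 * C1 + 3) * w * H := by
  set α := y / x with hα
  have hx0 : 0 < |x| := hc.trans_le hcx
  have hx : x ≠ 0 := abs_pos.1 hx0
  have hα1 : |α| ≤ 1 := by rw [hα, abs_div]; exact div_le_one_of_le₀ hyx hx0.le
  have hyα : y = x * α := by rw [hα]; field_simp
  have hn : 0 < ⌊H⌋₊ := Nat.floor_pos.2 hH
  obtain ⟨q, hq1, hq2⟩ := Real.exists_rat_abs_sub_le_and_den_le α hn
  set b : ℕ := q.den with hb
  set a : ℤ := q.num with haq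
  have hb0 : 0 < b := q.den_pos
  have hbR : (0 : ℝ) < b := by exact_mod_cast hb0
  have hb1 : (1 : ℝ) ≤ b := by exact_mod_cast hb0
  have hbH : (b : ℝ) ≤ H := (Nat.cast_le.2 hq2).trans (Nat.floor_le (by linarith))
  have hqab : (q : ℝ) = a / b := by rw [Rat.cast_def]
  have hdir : |α * b - a| ≤ 1 / H := by
    have h1 : α * b - a = (α - q) * b := by rw [hqab]; field_simp
    rw [h1, abs_mul, abs_of_pos hbR]
    calc |α - q| * b ≤ 1 / ((⌊H⌋₊ + 1) * b) * b := by gcongr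
      _ = 1 / (⌊H⌋₊ + 1) := by field_simp
      _ ≤ 1 / H := by gcongr; exact (Nat.lt_floor_add_one H).le
  have ha2 : |(a : ℝ)| ≤ 2 * b := by
    have h1 : |(a : ℝ)| ≤ |α * b| + |α * b - a| := by
      have := abs_sub (α * b) (α * b - a)
      simpa using this
    have h2 : |α * b| ≤ b := by
      rw [abs_mul, abs_of_pos hbR]; nlinarith
    have h3 : 1 / H ≤ 1 := by rw [div_le_one (by linarith)]; exact hH
    linarith
  have hbw : 1 ≤ 2 * b * w := by
    by_contra hcon
    push Not at hcon
    have h1 : 2 * (b : ℝ) ≤ 1 / w := by rw [le_div_iff₀ hw]; exact hcon.le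
    have h2 := hgood b (-a) (by exact_mod_cast hb0.ne')
      (by push_cast; rw [abs_of_pos hbR]; linarith)
      (by push_cast; rw [abs_neg]; linarith)
    have h3 : y * ((b : ℤ) : ℝ) + x * ((-a : ℤ) : ℝ) = x * (α * b - a) := by
      push_cast; rw [hyα]; ring
    rw [h3, abs_mul] at h2
    have h4 : |x| * |α * b - a| ≤ D * (1 / H) :=
      mul_le_mul hxD hdir (abs_nonneg _) (hx0.le.trans hxD)
    rw [mul_one_div] at h4
    linarith
  set P : ℤ := ⌊(b : ℝ) * w * (C2 / c + 2 * C1)⌋ with hP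
  set Q : ℤ := ⌊C1 * H / b⌋ + 1 with hQ
  have hP0 : 0 ≤ P := Int.floor_nonneg.2 (by positivity)
  have hQ0 : 0 ≤ Q := by
    have : 0 ≤ ⌊C1 * H / b⌋ := Int.floor_nonneg.2 (by positivity)
    omega
  have hcard : Z.card ≤ (Finset.Icc (-P) P ×ˢ Finset.Icc (-Q) Q).card := by
    refine Finset.card_le_card_of_injOn (fun z => ((b : ℤ) * g z + a * f z, f z / (b : ℤ))) ?_ ?_
    · intro z hz
      have h1 := hf z hz
      have h2 := hfg z hz
      simp only [Finset.coe_product, Finset.coe_Icc, mem_prod, mem_Icc]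
      refine ⟨abs_le.1 ?_, ?_⟩
      · rw [hP, Int.le_floor]
        push_cast
        have h3 : (b : ℝ) * g z + a * f z = b * (α * f z + g z) + (-(α * b - a)) * f z := by ring
        have h4 : |α * f z + g z| ≤ C2 * w / c := by
          have : y * f z + x * g z = x * (α * f z + g z) := by rw [hyα]; ring
          rw [this, abs_mul] at h2
          rw [le_div_iff₀ hc, mul_comm]
          exact (mul_le_mul_of_nonneg_right hcx (abs_nonneg _)).trans h2
        rw [h3]
        refine (abs_add_le _ _).trans ?_
        rw [abs_mul, abs_mul, abs_neg, abs_of_pos hbR]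
        have h5 : |α * b - a| * |(f z : ℝ)| ≤ 1 / H * (C1 * H) :=
          mul_le_mul hdir h1 (abs_nonneg _) (by positivity)
        have h6 : 1 / H * (C1 * H) = C1 := by field_simp
        have h7 : (b : ℝ) * |α * f z + g z| ≤ b * (C2 * w / c) := by gcongr
        have h8 : (b : ℝ) * w * (C2 / c + 2 * C1) = b * (C2 * w / c) + 2 * b * w * C1 := by
          field_simp
        rw [h8]
        nlinarith
      · have h3 : (f z / (b : ℤ) : ℤ) = ⌊(f z : ℝ) / b⌋ := by
          rw [Int.floor_div_natCast, Int.floor_intCast]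
        rw [abs_le] at h1
        rw [h3]
        constructor
        · rw [Int.le_floor, hQ]
          push_cast
          have e1 := Int.floor_le (C1 * H / b)
          have e2 := Int.lt_floor_add_one (C1 * H / b)
          have e3 : -(C1 * H / b) ≤ (f z : ℝ) / b := by
            rw [← neg_div]; gcongr; exact h1.1
          linarith
        · have : ⌊(f z : ℝ) / b⌋ ≤ ⌊C1 * H / b⌋ := by gcongr; exact h1.2
          omega
    · intro z hz z' hz' h
      simp only [Prod.mk.injEq] at h
      obtain ⟨h1, h2⟩ := h
      have hcop : IsCoprime (b : ℤ) a := by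
        rw [Int.isCoprime_iff_gcd_eq_one, Int.gcd_comm]
        exact q.reduced
      have h3 : (b : ℤ) ∣ a * (f z - f z') := ⟨g z' - g z, by linear_combination h1⟩
      have h4 : (b : ℤ) ∣ f z - f z' := hcop.dvd_of_dvd_mul_left h3
      have h5 : f z = f z' := by
        have h6 : f z % (b : ℤ) = f z' % (b : ℤ) :=
          Int.emod_eq_emod_iff_emod_sub_eq_zero.2 (Int.emod_eq_zero_of_dvd h4)
        rw [← Int.mul_ediv_add_emod (f z) b, ← Int.mul_ediv_add_emod (f z') b, h2, h6]
      refine hinj z hz z' hz' h5 ?_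
      have h7 : (b : ℤ) * g z = b * g z' := by rw [h5] at h1; linarith
      exact mul_left_cancel₀ (by exact_mod_cast hb0.ne') h7
  have hcardR : (Z.card : ℝ) ≤ (2 * P + 1) * (2 * Q + 1) := by
    have h1 : ((Finset.Icc (-P) P ×ˢ Finset.Icc (-Q) Q).card : ℤ) = (2 * P + 1) * (2 * Q + 1) := by
      rw [Finset.card_product, Int.card_Icc, Int.card_Icc]
      push_cast
      rw [Int.toNat_of_nonneg (by omega), Int.toNat_of_nonneg (by omega)]; ring
    have h2 : (Z.card : ℤ) ≤ (2 * P + 1) * (2 * Q + 1) := by rw [← h1]; exact_mod_cast hcard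
    exact_mod_cast h2
  refine hcardR.trans ?_
  have hPle : 2 * (P : ℝ) + 1 ≤ b * w * (2 * C2 / c + 4 * C1 + 2) := by
    have := Int.floor_le ((b : ℝ) * w * (C2 / c + 2 * C1))
    have e : (b : ℝ) * w * (2 * C2 / c + 4 * C1 + 2)
      = 2 * (b * w * (C2 / c + 2 * C1)) + 2 * b * w := by ring
    rw [e]; linarith
  have hQle : 2 * (Q : ℝ) + 1 ≤ (2 * C1 + 3) * H / b := by
    have := Int.floor_le (C1 * H / b)
    rw [hQ]; push_cast
    have e : (2 * C1 + 3) * H / b = 2 * (C1 * H / b) + 3 * (H / b) := by ring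
    have e2 : 1 ≤ H / b := by rw [le_div_iff₀ hbR]; linarith
    rw [e]; linarith
  have hQ0' : (0 : ℝ) ≤ 2 * Q + 1 := by exact_mod_cast (by omega : (0 : ℤ) ≤ 2 * Q + 1)
  calc (2 * (P : ℝ) + 1) * (2 * Q + 1)
      ≤ (b * w * (2 * C2 / c + 4 * C1 + 2)) * ((2 * C1 + 3) * H / b) :=
        mul_le_mul hPle hQle hQ0' (by positivity)
    _ = _ := by field_simp

@[simp] lemma ek_apply (k : Fin 2 → ℤ) (i : Fin 2) : ek k i = (k i : ℝ) := rfl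

lemma ek_sub (k l : Fin 2 → ℤ) : ek (k - l) = ek k - ek l := by
  ext i; simp

lemma ek_zero : ek 0 = 0 := by ext i; simp

lemma ek_neg (k : Fin 2 → ℤ) : ek (-k) = -ek k := by ext i; simp

lemma ek_ne_zero {k : Fin 2 → ℤ} (hk : k ≠ 0) : ek k ≠ 0 := by
  contrapose! hk
  ext i
  have := congrArg (fun z : E2 => z i) hk
  simpa using this

lemma inner_ek (x : E2) (k : Fin 2 → ℤ) : ⟪x, ek k⟫ = x 0 * k 0 + x 1 * k 1 := by
  rw [inner_E2]; simp

lemma abs_coord_le (x : E2) (i : Fin 2) : |x i| ≤ ‖x‖ := by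
  have := PiLp.norm_apply_le x i
  simpa using this

lemma norm_le_two_max {x : E2} {B : ℝ} (h0 : |x 0| ≤ B) (h1 : |x 1| ≤ B) : ‖x‖ ≤ 2 * B := by
  have hB : 0 ≤ B := (abs_nonneg _).trans h0
  have h := normSq_E2 x
  rw [← sq_abs (x 0), ← sq_abs (x 1)] at h
  have : ‖x‖ ^ 2 ≤ (2 * B) ^ 2 := by
    rw [h]; nlinarith [abs_nonneg (x 0), abs_nonneg (x 1)]
  exact (sq_le_sq₀ (norm_nonneg _) (by positivity)).1 this

lemma one_le_norm_ek {k : Fin 2 → ℤ} (hk : k ≠ 0) : 1 ≤ ‖ek k‖ := by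
  have : ∃ i, k i ≠ 0 := Function.ne_iff.1 hk
  obtain ⟨i, hi⟩ := this
  refine le_trans ?_ (abs_coord_le _ i)
  rw [ek_apply, ← Int.cast_abs]
  exact_mod_cast Int.one_le_abs hi

/-- Lattice points in a box of length `H` and width `w` around the line orthogonal to `x`: their
number is comparable to the area when no short integer vector is nearly orthogonal to `x`. -/
lemma box_count {x : E2} {c D C1 C2 H w : ℝ} (hc : 0 < c)
    (hcx : c ≤ ‖x‖) (hxD : ‖x‖ ≤ D) (hC1 : 0 < C1) (hC2 : 0 < C2) (hH : 1 ≤ H) (hw : 0 < w)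
    (hgood : ∀ v : Fin 2 → ℤ, v ≠ 0 → (∀ i, |(v i : ℝ)| ≤ 1 / w) → D / H < |⟪x, ek v⟫|)
    (Z : Finset (Fin 2 → ℤ)) (hf : ∀ z ∈ Z, ‖ek z‖ ≤ C1 * H)
    (hfg : ∀ z ∈ Z, |⟪x, ek z⟫| ≤ C2 * w) :
    (Z.card : ℝ) ≤ (2 * C2 / (c / 2) + 4 * C1 + 2) * (2 * C1 + 3) * w * H := by
  have hmax : c / 2 ≤ |x 0| ∨ c / 2 ≤ |x 1| := by
    by_contra h
    push Not at h
    have h0 := h.1.le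
    have hlt : max |x 0| |x 1| < c / 2 := max_lt h.1 h.2
    have := norm_le_two_max (le_max_left |x 0| |x 1|) (le_max_right _ _)
    linarith
  rcases le_total |x 0| |x 1| with h | h
  · refine box_count_aux (x := x 1) (y := x 0) (D := D) (by positivity) h
      (hmax.elim (fun h' => h'.trans h) id) ((abs_coord_le x 1).trans hxD) hC1 hC2 hH hw ?_ Z
      (fun z => z 0) (fun z => z 1) ?_ (fun z hz => (abs_coord_le (ek z) 0).trans (hf z hz)) ?_
    · intro b a hb hb1 ha1
      have := hgood ![b, a] (fun h => hb (by simpa using congrFun h 0))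
        (by intro i; fin_cases i <;> simp_all)
      rw [inner_ek] at this; simpa using this
    · intro z _ z' _ h0 h1; ext i; fin_cases i <;> assumption
    · intro z hz; rw [← inner_ek]; exact hfg z hz
  · refine box_count_aux (x := x 0) (y := x 1) (D := D) (by positivity) h
      (hmax.elim id (fun h' => h'.trans h)) ((abs_coord_le x 0).trans hxD) hC1 hC2 hH hw ?_ Z
      (fun z => z 1) (fun z => z 0) ?_ (fun z hz => (abs_coord_le (ek z) 1).trans (hf z hz)) ?_
    · intro b a hb hb1 ha1
      have := hgood ![a, b] (fun h => hb (by simpa using congrFun h 1))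
        (by intro i; fin_cases i <;> simp_all)
      rw [inner_ek] at this
      rw [add_comm]; simpa using this
    · intro z _ z' _ h0 h1; ext i; fin_cases i <;> assumption
    · intro z hz; rw [add_comm, ← inner_ek]; exact hfg z hz

/-- A set of integer vectors of Euclidean diameter at most `B` is bounded in cardinality. -/
lemma ball_count {B : ℝ} (hB : 0 ≤ B) (Z : Finset (Fin 2 → ℤ))
    (hZ : ∀ z ∈ Z, ∀ z' ∈ Z, ‖ek z - ek z'‖ ≤ B) : (Z.card : ℝ) ≤ (2 * B + 1) ^ 2 := by
  rcases Z.eq_empty_or_nonempty with rfl | ⟨z0, hz0⟩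
  · simp; positivity
  set P : ℤ := ⌊B⌋ with hP
  have hP0 : 0 ≤ P := Int.floor_nonneg.2 hB
  have hcard : Z.card ≤ (Finset.Icc (-P) P ×ˢ Finset.Icc (-P) P).card := by
    refine Finset.card_le_card_of_injOn (fun z => (z 0 - z0 0, z 1 - z0 1)) ?_ ?_
    · intro z hz
      have h1 := hZ z hz z0 hz0
      have h2 : ∀ i, |z i - z0 i| ≤ P := by
        intro i
        rw [hP, Int.le_floor]
        have := (abs_coord_le (ek z - ek z0) i).trans h1
        push_cast
        simpa using this
      simp only [Finset.coe_product, Finset.coe_Icc, mem_prod, mem_Icc]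
      exact ⟨abs_le.1 (h2 0), abs_le.1 (h2 1)⟩
    · intro z _ z' _ h
      simp only [Prod.mk.injEq] at h
      ext i; fin_cases i
      · exact sub_left_injective h.1
      · exact sub_left_injective h.2
  have h1 : ((Finset.Icc (-P) P ×ˢ Finset.Icc (-P) P).card : ℤ) = (2 * P + 1) * (2 * P + 1) := by
    rw [Finset.card_product, Int.card_Icc]
    push_cast
    rw [Int.toNat_of_nonneg (by omega)]; ring
  have h2 : (Z.card : ℤ) ≤ (2 * P + 1) * (2 * P + 1) := by rw [← h1]; exact_mod_cast hcard
  have h3 : (Z.card : ℝ) ≤ (2 * P + 1) * (2 * P + 1) := by exact_mod_cast h2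
  have h4 : (P : ℝ) ≤ B := Int.floor_le B
  have h5 : (0 : ℝ) ≤ P := by exact_mod_cast hP0
  nlinarith

end MeanSq

namespace MeanSq

open Filter Topology

/-! ### The support function and its variation along the annulus -/

namespace Geo

variable {Ω : Set E2} {γ n : ℝ → E2} {κ : ℝ → ℝ} {L c D : ℝ}

section
variable (G : Geo Ω γ n κ L c D)
include G

lemma D_pos : 0 < D := zero_lt_one.trans_le G.one_le_D

lemma bddAbove_inner (ξ : E2) : BddAbove ((fun x => ⟪x, ξ⟫) '' Ω) := by
  refine ⟨D * ‖ξ‖, ?_⟩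
  rintro _ ⟨x, hx, rfl⟩
  exact (real_inner_le_norm _ _).trans
    (mul_le_mul_of_nonneg_right (G.norm_le x (subset_closure hx)) (norm_nonneg _))

lemma inner_le_supp {x : E2} (hx : x ∈ closure Ω) (ξ : E2) : ⟪x, ξ⟫ ≤ suppFn Ω ξ := by
  have hcl : IsClosed {x : E2 | ⟪x, ξ⟫ ≤ suppFn Ω ξ} :=
    isClosed_le (continuous_id.inner continuous_const) continuous_const
  exact closure_minimal (fun y hy => le_csSup (G.bddAbove_inner ξ) ⟨y, hy, rfl⟩) hcl hx

lemma supp_le {ξ : E2} {B : ℝ} (h : ∀ x ∈ Ω, ⟪x, ξ⟫ ≤ B) : suppFn Ω ξ ≤ B := by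
  refine csSup_le ⟨_, 0, G.zero_mem, rfl⟩ ?_
  rintro _ ⟨x, hx, rfl⟩; exact h x hx

lemma supp_eq {ξ : E2} {s : ℝ} (h : ξ = ‖ξ‖ • n s) : suppFn Ω ξ = ⟪γ s, ξ⟫ := by
  refine le_antisymm (G.supp_le fun x hx => ?_) (G.inner_le_supp (G.mem s) ξ)
  have h1 := G.para s x (subset_closure hx)
  have h2 : 0 ≤ ⟪γ s - x, n s⟫ := by
    have := G.c_pos
    exact le_trans (by positivity) h1
  rw [h, real_inner_smul_right, real_inner_smul_right]
  rw [inner_sub_left] at h2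
  exact mul_le_mul_of_nonneg_left (by linarith) (norm_nonneg _)

lemma le_supp {ξ : E2} (hξ : ξ ≠ 0) : c * ‖ξ‖ ≤ suppFn Ω ξ := by
  obtain ⟨s, _, hs⟩ := G.surj ξ hξ
  rw [G.supp_eq hs]
  conv_rhs => rw [hs]
  rw [real_inner_smul_right, mul_comm]
  exact mul_le_mul_of_nonneg_left (G.low s) (norm_nonneg _)

lemma supp_le_norm (ξ : E2) : suppFn Ω ξ ≤ D * ‖ξ‖ :=
  G.supp_le fun x hx => (real_inner_le_norm _ _).trans
    (mul_le_mul_of_nonneg_right (G.norm_le x (subset_closure hx)) (norm_nonneg _))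

/-- The boundary point with normal `ξ₀` is a subgradient of the support function at `ξ₀`. -/
lemma supp_lower {ξ₀ : E2} {s₀ : ℝ} (h₀ : ξ₀ = ‖ξ₀‖ • n s₀) (ξ : E2) :
    ⟪γ s₀, ξ - ξ₀⟫ ≤ suppFn Ω ξ - suppFn Ω ξ₀ := by
  rw [G.supp_eq h₀, inner_sub_right]
  linarith [G.inner_le_supp (G.mem s₀) ξ]

/-- The support function is `C^{1,1}`: it stays quadratically close to its linearization. -/
lemma supp_upper {ξ₀ : E2} (hξ₀ : ξ₀ ≠ 0) {s₀ : ℝ} (h₀ : ξ₀ = ‖ξ₀‖ • n s₀) (ξ : E2) :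
    suppFn Ω ξ - suppFn Ω ξ₀ ≤ ⟪γ s₀, ξ - ξ₀⟫ + ‖ξ - ξ₀‖ ^ 2 / (4 * c * ‖ξ₀‖) := by
  have hc := G.c_pos
  have hpos : 0 < ‖ξ₀‖ := norm_pos_iff.2 hξ₀
  have h1 : suppFn Ω ξ ≤ ⟪γ s₀, ξ⟫ + ‖ξ - ξ₀‖ ^ 2 / (4 * c * ‖ξ₀‖) := by
    refine G.supp_le fun x hx => ?_
    have e1 : ⟪x, ξ⟫ = ⟪γ s₀, ξ⟫ + ⟪x - γ s₀, ξ - ξ₀⟫ - ⟪γ s₀ - x, ξ₀⟫ := by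
      simp only [inner_sub_left, inner_sub_right]; ring
    have e2 := real_inner_le_norm (x - γ s₀) (ξ - ξ₀)
    have e3 : ‖ξ₀‖ * (c * ‖x - γ s₀‖ ^ 2) ≤ ⟪γ s₀ - x, ξ₀⟫ := by
      conv_rhs => rw [h₀]
      rw [real_inner_smul_right]
      exact mul_le_mul_of_nonneg_left (G.para s₀ x (subset_closure hx)) (norm_nonneg _)
    have e4 : ‖x - γ s₀‖ * ‖ξ - ξ₀‖ - ‖ξ₀‖ * (c * ‖x - γ s₀‖ ^ 2) ≤
        ‖ξ - ξ₀‖ ^ 2 / (4 * c * ‖ξ₀‖) := by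
      rw [le_div_iff₀ (by positivity)]
      nlinarith [sq_nonneg (2 * c * ‖ξ₀‖ * ‖x - γ s₀‖ - ‖ξ - ξ₀‖)]
    linarith
  rw [G.supp_eq h₀, inner_sub_right]; linarith

lemma supp_lip (ξ ξ' : E2) : |suppFn Ω ξ - suppFn Ω ξ'| ≤ D * ‖ξ - ξ'‖ := by
  have key : ∀ ξ ξ', suppFn Ω ξ ≤ suppFn Ω ξ' + D * ‖ξ - ξ'‖ := by
    intro ξ ξ'
    refine G.supp_le fun x hx => ?_
    have h1 := G.inner_le_supp (subset_closure hx) ξ'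
    have h2 : ⟪x, ξ - ξ'⟫ ≤ D * ‖ξ - ξ'‖ := (real_inner_le_norm _ _).trans
      (mul_le_mul_of_nonneg_right (G.norm_le x (subset_closure hx)) (norm_nonneg _))
    rw [inner_sub_right] at h2; linarith
  rw [abs_le]
  have h1 := key ξ ξ'
  have h2 := key ξ' ξ
  rw [norm_sub_rev] at h2
  constructor <;> linarith

end

/-- Total curvature up to the parameter `s`. -/
def turnFn (κ : ℝ → ℝ) (s : ℝ) : ℝ := ∫ u in (0 : ℝ)..s, κ u

section
variable (G : Geo Ω γ n κ L c D)
include G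

lemma turnFn_sub (p q : ℝ) : turnFn κ q - turnFn κ p = ∫ u in p..q, κ u := by
  rw [turnFn, turnFn, intervalIntegral.integral_interval_sub_left (G.κ_int _ _) (G.κ_int _ _)]

lemma turnFn_low {p q : ℝ} (hpq : p ≤ q) : c * (q - p) ≤ turnFn κ q - turnFn κ p := by
  rw [G.turnFn_sub]; exact G.κ_low p q hpq

lemma turnFn_strictMono : StrictMono (turnFn κ) := by
  intro p q hpq
  have h1 := G.turnFn_low hpq.le
  have h2 : 0 < c * (q - p) := mul_pos G.c_pos (sub_pos.2 hpq)
  linarith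

lemma abs_sub_le_turn (p q : ℝ) : c * |q - p| ≤ |turnFn κ q - turnFn κ p| := by
  rcases le_total p q with h | h
  · rw [abs_of_nonneg (by linarith : 0 ≤ q - p)]
    exact (G.turnFn_low h).trans (le_abs_self _)
  · rw [abs_sub_comm, abs_sub_comm (turnFn κ q), abs_of_nonneg (by linarith : 0 ≤ p - q)]
    exact (G.turnFn_low h).trans (le_abs_self _)

lemma normal_le_turn (p q : ℝ) : ‖n q - n p‖ ≤ |turnFn κ q - turnFn κ p| := by
  rcases le_total p q with h | h
  · rw [G.turnFn_sub]
    exact (G.turn p q h).trans (le_abs_self _)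
  · rw [abs_sub_comm, G.turnFn_sub, norm_sub_rev]
    exact (G.turn q p h).trans (le_abs_self _)

lemma turnFn_continuous : Continuous (turnFn κ) :=
  intervalIntegral.continuous_primitive G.κ_int 0

lemma turnFn_nonneg {s : ℝ} (hs : 0 ≤ s) : 0 ≤ turnFn κ s := by
  have := G.turnFn_low hs
  have h2 : 0 ≤ c * (s - 0) := mul_nonneg G.c_pos.le (by linarith)
  have h3 : turnFn κ 0 = 0 := by simp [turnFn]
  linarith

lemma turnFn_le {s : ℝ} (hs : s ≤ L) : turnFn κ s ≤ D :=
  (G.turnFn_strictMono.monotone hs).trans G.κ_tot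

/-- Points of a thin annulus with nearby directions are close. -/
lemma annulus_close {r w Y : ℝ} (hr : 0 < r) (hY : 0 ≤ Y) {ξ ξ' : E2} {s s' : ℝ}
    (hξ : ξ = ‖ξ‖ • n s) (hξ' : ξ' = ‖ξ'‖ • n s')
    (hw : |suppFn Ω ξ - r| ≤ w) (hw' : |suppFn Ω ξ' - r| ≤ w) (hwr : w ≤ r)
    (hs : |turnFn κ s - turnFn κ s'| ≤ Y / r) :
    ‖ξ - ξ'‖ ≤ 6 * D / c ^ 2 * (w + Y) := by
  have hc := G.c_pos
  have hc1 := G.c_le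
  have hD1 := G.one_le_D
  have hD := G.D_pos
  have hw0 : 0 ≤ w := (abs_nonneg _).trans hw
  have hnn : ‖n s - n s'‖ ≤ Y / r := by
    refine (G.normal_le_turn s' s).trans hs
  have hp : ⟪γ s, n s⟫ = suppFn Ω (n s) := (G.supp_eq (by rw [G.norm_n, one_smul])).symm
  have hp' : ⟪γ s', n s'⟫ = suppFn Ω (n s') := (G.supp_eq (by rw [G.norm_n, one_smul])).symm
  have e : suppFn Ω ξ = ‖ξ‖ * suppFn Ω (n s) := by
    rw [G.supp_eq hξ, ← hp]; conv_lhs => rw [hξ]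
    rw [real_inner_smul_right]
  have e' : suppFn Ω ξ' = ‖ξ'‖ * suppFn Ω (n s') := by
    rw [G.supp_eq hξ', ← hp']; conv_lhs => rw [hξ']
    rw [real_inner_smul_right]
  have hlo : c ≤ suppFn Ω (n s) := hp ▸ G.low s
  have hlo' : c ≤ suppFn Ω (n s') := hp' ▸ G.low s'
  have hlip := (G.supp_lip (n s) (n s')).trans (mul_le_mul_of_nonneg_left hnn hD.le)
  have hξ'r : ‖ξ'‖ * c ≤ 2 * r := by
    have h1 : suppFn Ω ξ' ≤ r + w := by have := (abs_le.1 hw').2; linarith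
    have h2 : ‖ξ'‖ * c ≤ ‖ξ'‖ * suppFn Ω (n s') := mul_le_mul_of_nonneg_left hlo' (norm_nonneg _)
    linarith
  have hXY : ‖ξ'‖ * (Y / r) ≤ 2 * Y / c := by
    rw [le_div_iff₀ hc]
    calc ‖ξ'‖ * (Y / r) * c = (‖ξ'‖ * c) * (Y / r) := by ring
      _ ≤ 2 * r * (Y / r) := by gcongr
      _ = 2 * Y := by field_simp
  have hdiff : |‖ξ‖ - ‖ξ'‖| ≤ (2 * w + D * (2 * Y / c)) / c := by
    rw [le_div_iff₀ hc]
    have h1 : (‖ξ‖ - ‖ξ'‖) * suppFn Ω (n s) =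
        (suppFn Ω ξ - r) - (suppFn Ω ξ' - r) - ‖ξ'‖ * (suppFn Ω (n s) - suppFn Ω (n s')) := by
      rw [e, e']; ring
    have h2 : |(‖ξ‖ - ‖ξ'‖) * suppFn Ω (n s)| ≤ w + w + D * (2 * Y / c) := by
      rw [h1]
      refine (abs_sub _ _).trans (add_le_add ((abs_sub _ _).trans (add_le_add hw hw')) ?_)
      rw [abs_mul, abs_norm]
      calc ‖ξ'‖ * |suppFn Ω (n s) - suppFn Ω (n s')| ≤ ‖ξ'‖ * (D * (Y / r)) := by gcongr
        _ = D * (‖ξ'‖ * (Y / r)) := by ring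
        _ ≤ _ := by gcongr
    rw [abs_mul, abs_of_pos (hc.trans_le hlo)] at h2
    have h3 : |‖ξ‖ - ‖ξ'‖| * c ≤ |‖ξ‖ - ‖ξ'‖| * suppFn Ω (n s) := by gcongr
    linarith
  have h4 : ξ - ξ' = (‖ξ‖ - ‖ξ'‖) • n s + ‖ξ'‖ • (n s - n s') := by
    conv_lhs => rw [hξ, hξ']
    rw [sub_smul, smul_sub]; abel
  have h5 : ‖ξ - ξ'‖ ≤ |‖ξ‖ - ‖ξ'‖| + ‖ξ'‖ * ‖n s - n s'‖ := by
    rw [h4]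
    refine (norm_add_le _ _).trans ?_
    rw [norm_smul, norm_smul, G.norm_n, Real.norm_eq_abs, norm_norm, mul_one]
  have h6 : ‖ξ'‖ * ‖n s - n s'‖ ≤ 2 * Y / c :=
    (mul_le_mul_of_nonneg_left hnn (norm_nonneg _)).trans hXY
  have h7 : (2 * w + D * (2 * Y / c)) / c + 2 * Y / c ≤ 6 * D / c ^ 2 * (w + Y) := by
    rw [show (2 * w + D * (2 * Y / c)) / c + 2 * Y / c = (2 * w * c + 2 * D * Y + 2 * Y * c) / c ^ 2 by
      field_simp, show 6 * D / c ^ 2 * (w + Y) = (6 * D * (w + Y)) / c ^ 2 by ring]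
    gcongr
    have : w * c ≤ w * D := by gcongr; linarith
    have : Y * c ≤ Y * D := by gcongr; linarith
    have : 0 ≤ D * Y := by positivity
    have : 0 ≤ D * w := by positivity
    linarith
  linarith

/-- Differences of points of a thin annulus nearly lie on the tangent line. -/
lemma annulus_tangent {r w : ℝ} {ξ₀ ξ : E2} (hξ₀ : ξ₀ ≠ 0) {s₀ : ℝ} (h₀ : ξ₀ = ‖ξ₀‖ • n s₀)
    (hw₀ : |suppFn Ω ξ₀ - r| ≤ w) (hw : |suppFn Ω ξ - r| ≤ w) :
    |⟪γ s₀, ξ - ξ₀⟫| ≤ 2 * w + ‖ξ - ξ₀‖ ^ 2 / (4 * c * ‖ξ₀‖) := by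
  have h1 := G.supp_lower h₀ ξ
  have h2 := G.supp_upper hξ₀ h₀ ξ
  rw [abs_le] at *
  have : 0 ≤ ‖ξ - ξ₀‖ ^ 2 / (4 * c * ‖ξ₀‖) := by have := G.c_pos; positivity
  constructor <;> linarith

end

end Geo

end MeanSq

namespace MeanSq

open Filter Topology

/-! ### Lattice points in a thin annulus -/

lemma abs_floor_eq {x y : ℝ} {Y r : ℝ} (hr : 0 < r) (hY : 0 < Y) (h : ⌊r / Y * x⌋ = ⌊r / Y * y⌋) :
    |x - y| ≤ Y / r := by
  have h1 := (Int.abs_sub_lt_one_of_floor_eq_floor h).le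
  rw [← mul_sub, abs_mul, abs_of_pos (by positivity)] at h1
  rw [le_div_iff₀ hr]
  rw [div_mul_eq_mul_div, div_le_one hY] at h1
  linarith

lemma card_le_of_fibers {ι ι' : Type*} [DecidableEq ι'] (F : Finset ι) (J : Finset ι')
    (f : ι → ι') (B : ℝ) (hmap : ∀ x ∈ F, f x ∈ J)
    (hB : ∀ j ∈ J, ((F.filter fun x => f x = j).card : ℝ) ≤ B) :
    (F.card : ℝ) ≤ B * J.card := by
  rw [Finset.card_eq_sum_card_fiberwise (f := f) (t := J) hmap]
  push_cast
  refine (Finset.sum_le_sum hB).trans ?_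
  rw [Finset.sum_const, nsmul_eq_mul, mul_comm]

namespace Geo

variable {Ω : Set E2} {γ n : ℝ → E2} {κ : ℝ → ℝ} {L c D : ℝ}

/-- A boundary parameter is bad at scale `(V, δ)` when some nonzero integer vector with entries
at most `V` is `δ`-orthogonal to the boundary point. -/
def Bad (γ : ℝ → E2) (V δ s : ℝ) : Prop :=
  ∃ v : Fin 2 → ℤ, v ≠ 0 ∧ (∀ i, |(v i : ℝ)| ≤ V) ∧ |⟪γ s, ek v⟫| ≤ δ

section
variable (G : Geo Ω γ n κ L c D)
include G

/-- Lattice points of a thin annulus in good directions. Since the support function is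
`C^{1,1}`, the annulus is covered by `O(q ^ 8)` boxes of length `O(q ^ 4)` and width `O(w)`, and each
of them with a good direction holds `O(w q ^ 4)` lattice points. -/
lemma good_count : ∃ K > 0, ∀ (q r w : ℝ), 1 ≤ q → r = q ^ 12 → 6 ≤ r → 0 < w → w ≤ 3 →
    1 ≤ w * q → ∀ (S : (Fin 2 → ℤ) → ℝ) (F : Finset (Fin 2 → ℤ)),
    (∀ l ∈ F, l ≠ 0 ∧ |suppFn Ω (ek l) - r| ≤ w ∧ S l ∈ Ico 0 L ∧ ek l = ‖ek l‖ • n (S l) ∧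
      ¬ Bad γ (1 / w) (D / q ^ 4) (S l)) → (F.card : ℝ) ≤ K * w * r := by
  classical
  have hc := G.c_pos
  have hD := G.D_pos
  have hD1 := G.one_le_D
  set C1 := 6 * D / c ^ 2 * 4 with hC1
  set C2 := 2 + C1 ^ 2 * D / (2 * c) with hC2
  have hC1p : 0 < C1 := by positivity
  have hC2p : 0 < C2 := by positivity
  set K1 := (2 * C2 / (c / 2) + 4 * C1 + 2) * (2 * C1 + 3) with hK1
  have hK1p : 0 < K1 := by positivity
  refine ⟨2 * D * K1, by positivity, ?_⟩
  intro q r w hq hr hr6 hw hw3 hwq S F hF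
  have hr0 : 0 < r := by linarith
  have hq0 : 0 < q := by linarith
  set H := q ^ 4 with hH
  have hH1 : 1 ≤ H := one_le_pow₀ hq
  have hH0 : 0 < H := by linarith
  have hrH : r / H = q ^ 8 := by rw [hr, hH]; field_simp
  set J : Finset ℤ := Finset.Icc 0 ⌊r / H * D⌋ with hJ
  have hmap : ∀ l ∈ F, ⌊r / H * turnFn κ (S l)⌋ ∈ J := by
    intro l hl
    obtain ⟨-, -, hS, -⟩ := hF l hl
    rw [hJ, Finset.mem_Icc]
    have h0 := G.turnFn_nonneg hS.1
    refine ⟨Int.floor_nonneg.2 (by positivity), ?_⟩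
    gcongr
    exact G.turnFn_le hS.2.le
  have hfib : ∀ j ∈ J, ((F.filter fun l => ⌊r / H * turnFn κ (S l)⌋ = j).card : ℝ) ≤
      K1 * w * H := by
    intro j _
    set Fj := F.filter fun l => ⌊r / H * turnFn κ (S l)⌋ = j with hFj
    rcases Fj.eq_empty_or_nonempty with he | ⟨l0, hl0⟩
    · rw [he]; simp; positivity
    obtain ⟨hl0F, hl0j⟩ := Finset.mem_filter.1 hl0
    obtain ⟨hl0n, hl0w, hl0S, hl0e, hl0g⟩ := hF l0 hl0F
    have hxn : c ≤ ‖γ (S l0)‖ := by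
      have h1 := G.low (S l0)
      have h2 := real_inner_le_norm (γ (S l0)) (n (S l0))
      rw [G.norm_n, mul_one] at h2; linarith
    have hxD : ‖γ (S l0)‖ ≤ D := G.norm_le _ (G.mem _)
    have hl0norm : r / (2 * D) ≤ ‖ek l0‖ := by
      rw [div_le_iff₀ (by positivity)]
      have h1 := G.supp_le_norm (ek l0)
      have h2 := (abs_le.1 hl0w).1
      linarith
    have hclose : ∀ l ∈ Fj, ‖ek l - ek l0‖ ≤ C1 * H := by
      intro l hl
      obtain ⟨hlF, hlj⟩ := Finset.mem_filter.1 hl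
      obtain ⟨hln, hlw, hlS, hle, -⟩ := hF l hlF
      have h1 := G.annulus_close hr0 hH0.le hle hl0e hlw hl0w (by linarith)
        (abs_floor_eq hr0 hH0 (hlj.trans hl0j.symm))
      refine h1.trans ?_
      rw [hC1, mul_assoc]
      gcongr
      linarith
    have hcard : Fj.card = (Fj.image fun l => l - l0).card :=
      (Finset.card_image_of_injective _ (sub_left_injective)).symm
    rw [hcard]
    refine box_count hc hxn hxD hC1p hC2p hH1 hw ?_ _ ?_ ?_
    · intro v hv hv'
      by_contra hcon
      push Not at hcon
      exact hl0g ⟨v, hv, hv', hcon⟩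
    · intro z hz
      obtain ⟨l, hl, rfl⟩ := Finset.mem_image.1 hz
      rw [ek_sub]; exact hclose l hl
    · intro z hz
      obtain ⟨l, hl, rfl⟩ := Finset.mem_image.1 hz
      obtain ⟨hlF, hlj⟩ := Finset.mem_filter.1 hl
      obtain ⟨hln, hlw, hlS, hle, -⟩ := hF l hlF
      rw [ek_sub]
      refine (G.annulus_tangent (ek_ne_zero hl0n) hl0e hl0w hlw).trans ?_
      have h1 : ‖ek l - ek l0‖ ^ 2 / (4 * c * ‖ek l0‖) ≤ (C1 * H) ^ 2 / (4 * c * (r / (2 * D))) := by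
        gcongr
        exact hclose l hl
      have h2 : (C1 * H) ^ 2 / (4 * c * (r / (2 * D))) = C1 ^ 2 * D / (2 * c) * (1 / q ^ 4) := by
        rw [hr, hH]; field_simp; ring
      have h3 : 1 / q ^ 4 ≤ w := by
        rw [div_le_iff₀ (by positivity)]
        have : q ≤ q ^ 4 := le_self_pow₀ hq (by norm_num)
        nlinarith
      have h4 : C1 ^ 2 * D / (2 * c) * (1 / q ^ 4) ≤ C1 ^ 2 * D / (2 * c) * w := by gcongr
      rw [hC2]; linarith
  have hJc : (J.card : ℝ) ≤ 2 * D * (r / H) := by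
    have h0 : 0 ≤ r / H * D := by positivity
    have h1 : (J.card : ℤ) = ⌊r / H * D⌋ + 1 := by
      rw [hJ, Int.card_Icc, sub_zero, Int.toNat_of_nonneg]
      have := Int.floor_nonneg.2 h0; omega
    have h2 : (J.card : ℝ) = ⌊r / H * D⌋ + 1 := by exact_mod_cast h1
    have h3 := Int.floor_le (r / H * D)
    have h4 : 1 ≤ r / H := by rw [hrH]; exact one_le_pow₀ hq
    rw [h2]; nlinarith
  have := card_le_of_fibers F J _ _ hmap hfib
  refine this.trans ?_
  calc K1 * w * H * J.card ≤ K1 * w * H * (2 * D * (r / H)) := by gcongr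
    _ = 2 * D * K1 * w * r := by field_simp

/-- Excess of the curvature over the level `M`. -/
def _root_.MeanSq.excess (κ : ℝ → ℝ) (L M : ℝ) : ℝ := ∫ s in Icc 0 L, max (κ s - M) 0

lemma κ_integrableOn : IntegrableOn κ (Icc 0 L) :=
  (intervalIntegrable_iff_integrableOn_Icc_of_le G.L_pos.le).1 (G.κ_int 0 L)

lemma excess_integrableOn (M : ℝ) : IntegrableOn (fun s => max (κ s - M) 0) (Icc 0 L) :=
  (G.κ_integrableOn.sub (integrableOn_const (by simp))).pos_part

lemma γ_continuous : Continuous γ := by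
  have : LipschitzWith 1 γ := LipschitzWith.of_dist_le_mul fun p q => by
    rw [dist_eq_norm, Real.dist_eq]; simpa using G.lip p q
  exact this.continuous

/-- The bad set has small total curvature: it is a union of `O(V ^ 2)` sets of length `O(δ)`, and
on it `κ` is at most `M` plus its excess over `M`. -/
lemma integral_bad (V δ M : ℝ) (hV : 1 / 3 ≤ V) (hδ : 0 ≤ δ) (hM : 0 ≤ M) :
    ∫ s in {s ∈ Icc 0 L | Bad γ V δ s}, κ s ≤ M * (25 * V ^ 2 * (D * δ)) + excess κ L M ∧
    MeasurableSet {s ∈ Icc 0 L | Bad γ V δ s} := by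
  classical
  have hD := G.D_pos
  set P : ℤ := ⌊V⌋ with hP
  have hP0 : 0 ≤ P := Int.floor_nonneg.2 (by linarith)
  set B : Finset (Fin 2 → ℤ) :=
    (Fintype.piFinset fun _ : Fin 2 => Finset.Icc (-P) P).filter (fun v => v ≠ 0) with hB
  have hmemB : ∀ v, v ∈ B ↔ v ≠ 0 ∧ ∀ i, |(v i : ℝ)| ≤ V := by
    intro v
    rw [hB, Finset.mem_filter, Fintype.mem_piFinset, and_comm]
    refine and_congr_right fun _ => forall_congr' fun i => ?_
    rw [Finset.mem_Icc, ← abs_le, hP, Int.le_floor]; push_cast; rfl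
  have hBc : (B.card : ℝ) ≤ 25 * V ^ 2 := by
    have h1 : B.card ≤ (Fintype.piFinset fun _ : Fin 2 => Finset.Icc (-P) P).card :=
      Finset.card_filter_le _ _
    rw [Fintype.card_piFinset, Fin.prod_univ_two, Int.card_Icc] at h1
    have h2 : (B.card : ℤ) ≤ (2 * P + 1) * (2 * P + 1) := by
      have : (((P + 1 - -P).toNat * (P + 1 - -P).toNat : ℕ) : ℤ) = (2 * P + 1) * (2 * P + 1) := by
        push_cast; rw [Int.toNat_of_nonneg (by omega)]; ring
      rw [← this]; exact_mod_cast h1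
    have h3 : (B.card : ℝ) ≤ (2 * P + 1) * (2 * P + 1) := by exact_mod_cast h2
    have h4 : (P : ℝ) ≤ V := Int.floor_le V
    have h5 : (0 : ℝ) ≤ P := by exact_mod_cast hP0
    nlinarith
  have hset : {s ∈ Icc 0 L | Bad γ V δ s} = ⋃ v ∈ B, {s ∈ Icc 0 L | |⟪γ s, ek v⟫| ≤ δ} := by
    ext s
    simp only [mem_ofPred_eq, mem_iUnion, Bad]
    constructor
    · rintro ⟨hs, v, hv, hv', h⟩; exact ⟨v, (hmemB v).2 ⟨hv, hv'⟩, hs, h⟩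
    · rintro ⟨v, hv, hs, h⟩
      exact ⟨hs, v, ((hmemB v).1 hv).1, ((hmemB v).1 hv).2, h⟩
  have hmeas1 : ∀ v, MeasurableSet {s ∈ Icc 0 L | |⟪γ s, ek v⟫| ≤ δ} := fun v =>
    (isClosed_Icc.inter
      (isClosed_le (f := fun s => |⟪γ s, ek v⟫|) (G.γ_continuous.inner continuous_const).abs
        continuous_const)).measurableSet
  have hmeas : MeasurableSet {s ∈ Icc 0 L | Bad γ V δ s} := by
    rw [hset]; exact Finset.measurableSet_biUnion _ fun v _ => hmeas1 v
  refine ⟨?_, hmeas⟩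
  set 𝓑 := {s ∈ Icc 0 L | Bad γ V δ s} with h𝓑
  have hsub : 𝓑 ⊆ Icc 0 L := sep_subset _ _
  have hvol : volume.real 𝓑 ≤ 25 * V ^ 2 * (D * δ) := by
    have h1 : volume 𝓑 ≤ ENNReal.ofReal (25 * V ^ 2 * (D * δ)) := by
      rw [hset]
      refine (measure_biUnion_finset_le _ _).trans ?_
      refine (Finset.sum_le_sum fun v hv =>
        G.orth (ek v) (one_le_norm_ek ((hmemB v).1 hv).1) δ hδ).trans ?_
      rw [Finset.sum_const, nsmul_eq_mul, ← ENNReal.ofReal_natCast,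
        ← ENNReal.ofReal_mul (by positivity)]
      have hDδ : 0 ≤ D * δ := mul_nonneg (by linarith [G.one_le_D]) hδ
      exact ENNReal.ofReal_le_ofReal (mul_le_mul_of_nonneg_right hBc hDδ)
    exact ENNReal.toReal_le_of_le_ofReal (by positivity) h1
  have hfin : volume 𝓑 ≠ ⊤ := ((measure_mono hsub).trans_lt (by simp)).ne
  calc ∫ s in 𝓑, κ s ≤ ∫ s in 𝓑, (M + max (κ s - M) 0) := by
        refine setIntegral_mono (G.κ_integrableOn.mono_set hsub)
          ((integrableOn_const hfin).add ((G.excess_integrableOn M).mono_set hsub)) fun s => ?_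
        have := le_max_left (κ s - M) 0
        simp only; linarith
    _ = M * volume.real 𝓑 + ∫ s in 𝓑, max (κ s - M) 0 := by
        have h1 : Integrable (fun _ => M) (volume.restrict 𝓑) := integrableOn_const hfin
        have h2 : Integrable (fun s => max (κ s - M) 0) (volume.restrict 𝓑) :=
          (G.excess_integrableOn M).mono_set hsub
        rw [integral_add h1 h2, setIntegral_const, smul_eq_mul, mul_comm]
    _ ≤ _ := by
        gcongr
        refine setIntegral_mono_set (G.excess_integrableOn M) ?_ (LE.le.eventuallyLE hsub)
        exact Eventually.of_forall fun s => le_max_right _ _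

/-- The parameter interval splits into cells of total curvature `1 / r`; few cells meet the
bad set. -/
lemma cell_count {r V δ δ' : ℝ} (hr : 0 < r) (hδ : δ + 2 * V / (c * r) ≤ δ')
    (J : Finset ℤ) (hJ : ∀ j ∈ J, ∃ s ∈ Ico 0 L, ⌊r * turnFn κ s⌋ = j ∧ Bad γ V δ s) :
    (J.card : ℝ) ≤ r * (∫ s in {s ∈ Icc 0 L | Bad γ V δ' s}, κ s) + 1 := by
  classical
  have hc := G.c_pos
  set jm : ℤ := ⌊r * turnFn κ L⌋ with hjm
  set 𝓑 := {s ∈ Icc 0 L | Bad γ V δ' s} with h𝓑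
  have hmono := G.turnFn_strictMono
  have hex : ∀ j : ℤ, ∃ p, 0 ≤ j → j ≤ jm → p ∈ Icc 0 L ∧ r * turnFn κ p = j := by
    intro j
    by_cases h : 0 ≤ j ∧ j ≤ jm
    · have h2 : (j : ℝ) ≤ r * turnFn κ L := Int.le_floor.1 h.2
      have h1 : (0 : ℝ) ≤ j := by exact_mod_cast h.1
      have h3 : (j : ℝ) ∈ Icc (r * turnFn κ 0) (r * turnFn κ L) := by
        refine ⟨?_, h2⟩; simpa [turnFn] using h1
      obtain ⟨p, hp, hp'⟩ := intermediate_value_Icc G.L_pos.le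
        (continuous_const.mul G.turnFn_continuous).continuousOn h3
      exact ⟨p, fun _ _ => ⟨hp, hp'⟩⟩
    · exact ⟨0, fun h1 h2 => absurd ⟨h1, h2⟩ h⟩
  choose p hp using hex
  have hJr : ∀ j ∈ J, 0 ≤ j ∧ j ≤ jm := by
    intro j hj
    obtain ⟨s, hs, hsj, -⟩ := hJ j hj
    have h0 := G.turnFn_nonneg hs.1
    rw [← hsj]
    refine ⟨Int.floor_nonneg.2 (by positivity), ?_⟩
    rw [hjm]; gcongr
    exact hmono.monotone hs.2.le
  set J' := J.erase jm with hJ'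
  have hJ'r : ∀ j ∈ J', 0 ≤ j ∧ j + 1 ≤ jm ∧ j ∈ J := by
    intro j hj
    obtain ⟨h1, h2⟩ := Finset.mem_erase.1 hj
    have := hJr j h2
    exact ⟨this.1, by omega, h2⟩
  have hintg : ∀ j ∈ J', ∫ s in Ioc (p j) (p (j + 1)), κ s = 1 / r := by
    intro j hj
    obtain ⟨h0, h1, -⟩ := hJ'r j hj
    have e1 := hp j h0 (by omega)
    have e2 := hp (j + 1) (by omega) h1
    have hle : p j ≤ p (j + 1) := by
      rw [← hmono.le_iff_le]
      have : r * turnFn κ (p j) ≤ r * turnFn κ (p (j + 1)) := by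
        rw [e1.2, e2.2]; push_cast; linarith
      exact le_of_mul_le_mul_left this hr
    rw [← intervalIntegral.integral_of_le hle, ← G.turnFn_sub]
    have h3 := e1.2; have h4 := e2.2
    push_cast at h4
    rw [eq_div_iff hr.ne']; linarith
  have hsub : ∀ j ∈ J', Ioc (p j) (p (j + 1)) ⊆ 𝓑 := by
    intro j hj u hu
    obtain ⟨h0, h1, hjJ⟩ := hJ'r j hj
    have e1 := hp j h0 (by omega)
    have e2 := hp (j + 1) (by omega) h1
    obtain ⟨s, hs, hsj, v, hv, hv', hsv⟩ := hJ j hjJ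
    refine ⟨⟨e1.1.1.trans hu.1.le, hu.2.trans e2.1.2⟩, v, hv, hv', ?_⟩
    have f1 : (j : ℝ) ≤ r * turnFn κ s := hsj ▸ Int.floor_le _
    have f2 : r * turnFn κ s < j + 1 := hsj ▸ Int.lt_floor_add_one _
    have f3 : (j : ℝ) ≤ r * turnFn κ u := by
      rw [← e1.2]; exact mul_le_mul_of_nonneg_left (hmono.monotone hu.1.le) hr.le
    have f4 : r * turnFn κ u ≤ j + 1 := by
      have := e2.2; push_cast at this
      rw [← this]; exact mul_le_mul_of_nonneg_left (hmono.monotone hu.2) hr.le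
    have f5 : r * |turnFn κ u - turnFn κ s| ≤ 1 := by
      rw [show r * |turnFn κ u - turnFn κ s| = |r * (turnFn κ u - turnFn κ s)| by
        rw [abs_mul, abs_of_pos hr], mul_sub, abs_le]
      constructor <;> linarith
    have f6 : |u - s| ≤ 1 / (c * r) := by
      rw [le_div_iff₀ (by positivity)]
      have := G.abs_sub_le_turn s u
      nlinarith
    have f7 : |⟪γ u - γ s, ek v⟫| ≤ 2 * V / (c * r) := by
      refine (abs_real_inner_le_norm _ _).trans ?_
      have g1 := (G.lip u s).trans f6
      have g2 : ‖ek v‖ ≤ 2 * V := norm_le_two_max (hv' 0) (hv' 1)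
      calc ‖γ u - γ s‖ * ‖ek v‖ ≤ 1 / (c * r) * (2 * V) := by gcongr
        _ = _ := by ring
    have f8 : ⟪γ u, ek v⟫ = ⟪γ s, ek v⟫ + ⟪γ u - γ s, ek v⟫ := by rw [inner_sub_left]; ring
    rw [f8]
    exact (abs_add_le _ _).trans (by linarith)
  have hdisj : (J' : Set ℤ).PairwiseDisjoint fun j => Ioc (p j) (p (j + 1)) := by
    have key : ∀ i ∈ J', ∀ j ∈ J', i < j → Disjoint (Ioc (p i) (p (i + 1))) (Ioc (p j) (p (j + 1))) := by
      intro i hi j hj hij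
      have e1 := hp (i + 1) (by have := (hJ'r i hi).1; omega) (hJ'r i hi).2.1
      have e2 := hp j (hJ'r j hj).1 (by have := (hJ'r j hj).2.1; omega)
      have hle : p (i + 1) ≤ p j := by
        rw [← hmono.le_iff_le]
        have : r * turnFn κ (p (i + 1)) ≤ r * turnFn κ (p j) := by
          rw [e1.2, e2.2]; exact_mod_cast hij
        exact le_of_mul_le_mul_left this hr
      rw [Set.disjoint_left]
      intro u hu hu'
      linarith [hu.2, hu'.1]
    intro i hi j hj hij
    rcases lt_or_gt_of_ne hij with h | h
    · exact key i hi j hj h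
    · exact (key j hj i hi h).symm
  have hsum : (J'.card : ℝ) * (1 / r) ≤ ∫ s in 𝓑, κ s := by
    have hI𝓑 : IntegrableOn κ 𝓑 := G.κ_integrableOn.mono_set (sep_subset _ _)
    calc (J'.card : ℝ) * (1 / r) = ∑ j ∈ J', ∫ s in Ioc (p j) (p (j + 1)), κ s := by
          rw [Finset.sum_congr rfl hintg, Finset.sum_const, nsmul_eq_mul]
      _ = ∫ s in ⋃ j ∈ J', Ioc (p j) (p (j + 1)), κ s := by
          rw [integral_biUnion_finset J' (fun _ _ => measurableSet_Ioc) hdisj]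
          intro j hj; exact hI𝓑.mono_set (hsub j hj)
      _ ≤ _ := setIntegral_mono_set hI𝓑 (Eventually.of_forall fun s => G.κ_nonneg s)
          (LE.le.eventuallyLE (iUnion₂_subset hsub))
  have hcard : J.card ≤ J'.card + 1 := by
    have := Finset.pred_card_le_card_erase (s := J) (a := jm)
    have h' : J' = J.erase jm := rfl
    rw [h']
    omega
  have hcardR : (J.card : ℝ) ≤ J'.card + 1 := by exact_mod_cast hcard
  rw [mul_one_div, div_le_iff₀ hr] at hsum
  linarith

/-- Lattice points of a thin annulus in bad directions: boundedly many for each cell of total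
curvature `1 / r` that meets the bad set. -/
lemma bad_count : ∃ K > 0, ∀ (q r w : ℝ), 1 ≤ q → r = q ^ 12 → 6 ≤ r → 0 < w → w ≤ 3 →
    1 ≤ w * q → ∀ (S : (Fin 2 → ℤ) → ℝ) (F : Finset (Fin 2 → ℤ)),
    (∀ l ∈ F, l ≠ 0 ∧ |suppFn Ω (ek l) - r| ≤ w ∧ S l ∈ Ico 0 L ∧ ek l = ‖ek l‖ • n (S l) ∧
      Bad γ (1 / w) (D / q ^ 4) (S l)) → (F.card : ℝ) ≤ K * r * (1 / q + excess κ L q) := by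
  classical
  have hc := G.c_pos
  have hD := G.D_pos
  have hD1 := G.one_le_D
  set K2 := (2 * (6 * D / c ^ 2 * 4) + 1) ^ 2 with hK2
  have hK2p : 0 < K2 := by positivity
  set K3 := 25 * (D * (D + 2 / c)) + 1 with hK3
  have hK3p : 1 ≤ K3 := by rw [hK3]; have : 0 < 25 * (D * (D + 2 / c)) := by positivity
                           linarith
  refine ⟨K2 * K3, by positivity, ?_⟩
  intro q r w hq hr hr6 hw hw3 hwq S F hF
  have hr0 : 0 < r := by linarith
  have hq0 : 0 < q := by linarith
  set J : Finset ℤ := F.image fun l => ⌊r * turnFn κ (S l)⌋ with hJ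
  have hfib : ∀ j ∈ J, ((F.filter fun l => ⌊r * turnFn κ (S l)⌋ = j).card : ℝ) ≤ K2 := by
    intro j _
    refine ball_count (by positivity) _ ?_
    intro l hl l' hl'
    obtain ⟨hlF, hlj⟩ := Finset.mem_filter.1 hl
    obtain ⟨hln, hlw, hlS, hle, -⟩ := hF l hlF
    obtain ⟨hlF', hlj'⟩ := Finset.mem_filter.1 hl'
    obtain ⟨hln', hlw', hlS', hle', -⟩ := hF l' hlF'
    have h1 := G.annulus_close hr0 zero_le_one hle hle' hlw hlw' (by linarith)
        (abs_floor_eq hr0 zero_lt_one (by rw [div_one]; exact hlj.trans hlj'.symm))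
    refine h1.trans ?_
    gcongr; linarith
  have hcardF := card_le_of_fibers F J _ _ (fun l hl => Finset.mem_image_of_mem _ hl) hfib
  have hVq : 1 / w ≤ q := by rw [div_le_iff₀ hw]; linarith
  set δ' := (D + 2 / c) / q ^ 4 with hδ'
  have hV3 : 1 / 3 ≤ 1 / w := by gcongr
  obtain ⟨hI, hm⟩ := G.integral_bad (1 / w) δ' q hV3 (by positivity) hq0.le
  have hδδ' : D / q ^ 4 + 2 * (1 / w) / (c * r) ≤ δ' := by
    rw [hδ', add_div, hr]
    refine add_le_add le_rfl ?_
    calc 2 * (1 / w) / (c * q ^ 12) ≤ 2 * q / (c * q ^ 12) := by gcongr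
      _ = 2 / c / q ^ 11 := by field_simp
      _ ≤ 2 / c / q ^ 4 := by
        gcongr
        first | exact hq | norm_num
  have hJc := G.cell_count hr0 hδδ' J (by
    intro j hj
    obtain ⟨l, hl, rfl⟩ := Finset.mem_image.1 hj
    obtain ⟨hln, hlw, hlS, hle, hb⟩ := hF l hl
    exact ⟨S l, hlS, rfl, hb⟩)
  have hex : 0 ≤ excess κ L q := integral_nonneg fun s => le_max_right _ _
  have h1 : q * (25 * (1 / w) ^ 2 * (D * δ')) ≤ 25 * (D * (D + 2 / c)) * (1 / q) := by
    calc q * (25 * (1 / w) ^ 2 * (D * δ')) ≤ q * (25 * q ^ 2 * (D * δ')) := by gcongr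
      _ = _ := by rw [hδ']; field_simp
  have h2 : (1 : ℝ) ≤ r * (1 / q) := by
    rw [hr, show q ^ 12 * (1 / q) = q ^ 11 by field_simp]; exact one_le_pow₀ hq
  have h3 : (J.card : ℝ) ≤ K3 * r * (1 / q + excess κ L q) := by
    refine hJc.trans ?_
    have h4 : r * (∫ s in {s ∈ Icc 0 L | Bad γ (1 / w) δ' s}, κ s) ≤
        r * (25 * (D * (D + 2 / c)) * (1 / q) + excess κ L q) := by
      gcongr; linarith
    have h5 : r * excess κ L q ≤ K3 * (r * excess κ L q) :=
      le_mul_of_one_le_left (by positivity) hK3p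
    have h6 : K3 * r * (1 / q + excess κ L q) =
        25 * (D * (D + 2 / c)) * (r * (1 / q)) + r * (1 / q) + K3 * (r * excess κ L q) := by
      rw [hK3]; ring
    rw [h6]; linarith
  calc (F.card : ℝ) ≤ K2 * J.card := hcardF
    _ ≤ K2 * (K3 * r * (1 / q + excess κ L q)) := by gcongr
    _ = _ := by ring

end

end Geo

end MeanSq

namespace MeanSq

open Filter Topology

/-! ### Summation over the lattice -/

/-- The sup norm of an integer vector, as a natural number. -/
def supN (k : Fin 2 → ℤ) : ℕ := max (k 0).natAbs (k 1).natAbs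

lemma supN_pos {k : Fin 2 → ℤ} (hk : k ≠ 0) : 1 ≤ supN k := by
  by_contra h
  apply hk
  have h' : (k 0).natAbs ⊔ (k 1).natAbs = 0 := by unfold supN at h; omega
  ext i; fin_cases i <;> simp <;> omega

lemma abs_ek (k : Fin 2 → ℤ) (i : Fin 2) : |ek k i| = ((k i).natAbs : ℝ) := by
  rw [ek_apply, Nat.cast_natAbs, Int.cast_abs]

lemma supN_le_norm (k : Fin 2 → ℤ) : (supN k : ℝ) ≤ ‖ek k‖ := by
  have h0 := abs_coord_le (ek k) 0
  have h1 := abs_coord_le (ek k) 1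
  rw [abs_ek] at h0 h1
  unfold supN
  rw [Nat.cast_max]
  exact max_le h0 h1

lemma norm_le_supN (k : Fin 2 → ℤ) : ‖ek k‖ ≤ 2 * supN k := by
  apply norm_le_two_max
  · rw [abs_ek, supN, Nat.cast_max]; exact le_max_left _ _
  · rw [abs_ek, supN, Nat.cast_max]; exact le_max_right _ _

/-- A sum over nonzero lattice points of a radial quantity is controlled shell by shell. -/
lemma shell_sum (F : Finset (Fin 2 → ℤ)) (hF : ∀ k ∈ F, k ≠ 0) : ∃ N : ℕ, ∀ f : ℕ → ℝ,
    (∀ n, 0 ≤ f n) → ∑ k ∈ F, f (supN k) ≤ ∑ n ∈ Finset.Icc 1 N, 8 * (n : ℝ) * f n := by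
  classical
  refine ⟨F.sup supN, fun f hf => ?_⟩
  rw [← Finset.sum_fiberwise_of_maps_to (s := F) (t := Finset.Icc 1 (F.sup supN)) (g := supN)
    (fun k hk => Finset.mem_Icc.2 ⟨supN_pos (hF k hk), Finset.le_sup hk⟩)]
  refine Finset.sum_le_sum fun n hn => ?_
  have hn1 := (Finset.mem_Icc.1 hn).1
  have h1 : ∑ k ∈ F with supN k = n, f (supN k) = (F.filter fun k => supN k = n).card * f n := by
    rw [Finset.sum_congr rfl (g := fun _ => f n), Finset.sum_const, nsmul_eq_mul]
    intro k hk; rw [(Finset.mem_filter.1 hk).2]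
  rw [h1]
  refine mul_le_mul_of_nonneg_right ?_ (hf n)
  have h2 : (F.filter fun k => supN k = n).card ≤ 8 * n := by
    rw [← Int.card_box (by omega : n ≠ 0)]
    refine Finset.card_le_card_of_injOn (fun k => (k 0, k 1)) ?_ ?_
    · intro k hk
      simpa [supN] using (Finset.mem_filter.1 (Finset.mem_coe.1 hk)).2
    · intro k _ k' _ h
      simp only [Prod.mk.injEq] at h
      ext i; fin_cases i
      · exact h.1
      · exact h.2
  exact_mod_cast h2

lemma sum_inv_le (N : ℕ) {X : ℝ} (hX : 1 ≤ X) :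
    ∑ n ∈ (Finset.Icc 1 N).filter (fun n : ℕ => (n : ℝ) ≤ X), (1 / (n : ℝ)) ≤ 1 + Real.log X := by
  refine le_trans ?_ (harmonic_floor_le_one_add_log X hX)
  rw [harmonic_eq_sum_Icc]
  push_cast
  simp_rw [one_div]
  refine Finset.sum_le_sum_of_subset_of_nonneg ?_ fun _ _ _ => by positivity
  intro n hn
  obtain ⟨h1, h2⟩ := Finset.mem_filter.1 hn
  exact Finset.mem_Icc.2 ⟨(Finset.mem_Icc.1 h1).1, Nat.le_floor h2⟩

/-- The arithmetic error in counting lattice points near the curve `ρ = r`, relative to `r`. -/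
def errT (κ : ℝ → ℝ) (L r : ℝ) : ℝ := r ^ (-(1 / 12) : ℝ) + excess κ L (r ^ ((1 / 12) : ℝ))

lemma excess_nonneg (κ : ℝ → ℝ) (L M : ℝ) : 0 ≤ excess κ L M :=
  integral_nonneg fun _ => le_max_right _ _

lemma errT_nonneg (κ : ℝ → ℝ) (L : ℝ) {r : ℝ} (hr : 0 ≤ r) : 0 ≤ errT κ L r :=
  add_nonneg (Real.rpow_nonneg hr _) (excess_nonneg _ _ _)

namespace Geo

variable {Ω : Set E2} {γ n : ℝ → E2} {κ : ℝ → ℝ} {L c D : ℝ}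

section
variable (G : Geo Ω γ n κ L c D)
include G

/-- The number of lattice points in the annulus `|ρ - r| ≤ w`, for `ρ` the support function: 
of the order of the area `r w`, up to an arithmetic error `r * errT κ L r`. -/
lemma annulus_count : ∃ K > 0, ∀ r w : ℝ, c ≤ r → 0 < w → w ≤ 3 →
    ∀ F : Finset (Fin 2 → ℤ), (∀ l ∈ F, l ≠ 0 ∧ |suppFn Ω (ek l) - r| ≤ w) →
    (F.card : ℝ) ≤ K * r * (w + errT κ L r) := by
  classical
  obtain ⟨K1, hK1, H1⟩ := G.good_count
  obtain ⟨K2, hK2, H2⟩ := G.bad_count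
  have hc := G.c_pos
  set K0 := (2 * (18 / c) + 1) ^ 2 with hK0
  refine ⟨K1 + K2 + 6 * K0 / c, by positivity, ?_⟩
  intro r w hcr hw hw3 F hF
  have hr0 : 0 < r := hc.trans_le hcr
  have he0 := excess_nonneg κ L (r ^ ((1 / 12) : ℝ))
  have hp0 : 0 < r ^ (-(1 / 12) : ℝ) := Real.rpow_pos_of_pos hr0 _
  rcases lt_or_ge r 6 with hr6 | hr6
  · have hnorm : ∀ l ∈ F, ‖ek l‖ ≤ 9 / c := by
      intro l hl
      have h1 := G.le_supp (ek_ne_zero (hF l hl).1)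
      have h2 := abs_le.1 (hF l hl).2
      rw [le_div_iff₀ hc]; linarith
    have hcard := ball_count (B := 18 / c) (by positivity) F (fun z hz z' hz' => by
      have h := norm_sub_le (ek z) (ek z')
      have := hnorm z hz
      have := hnorm z' hz'
      calc _ ≤ 9 / c + 9 / c := by linarith
        _ = 18 / c := by ring)
    have h6 : (1 : ℝ) / 6 ≤ r ^ (-(1 / 12) : ℝ) := by
      calc (1 : ℝ) / 6 = 6 ^ (-1 : ℝ) := by rw [Real.rpow_neg_one]; norm_num
        _ ≤ 6 ^ (-(1 / 12) : ℝ) := by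
          apply Real.rpow_le_rpow_of_exponent_le <;> norm_num
        _ ≤ _ := Real.rpow_le_rpow_of_nonpos hr0 hr6.le (by norm_num)
    calc (F.card : ℝ) ≤ K0 := hcard
      _ = 6 * K0 / c * c * (1 / 6) := by field_simp
      _ ≤ (K1 + K2 + 6 * K0 / c) * r * (w + errT κ L r) := by
        unfold errT
        gcongr
        · have : 0 < K0 := by positivity
          linarith
        · linarith
  · set q := r ^ ((1 / 12) : ℝ) with hq
    have hq1 : 1 ≤ q := Real.one_le_rpow (by linarith) (by norm_num)
    have hrq : r = q ^ 12 := by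
      rw [hq, ← Real.rpow_natCast, ← Real.rpow_mul hr0.le]; norm_num
    have hqi : 1 / q = r ^ (-(1 / 12) : ℝ) := by
      rw [Real.rpow_neg hr0.le, one_div]
    have hq0 : 0 < q := by linarith
    set w' := max w (1 / q) with hw'
    have hw'0 : 0 < w' := hw.trans_le (le_max_left _ _)
    have hw'3 : w' ≤ 3 := max_le hw3 (by
      rw [div_le_iff₀ hq0]; linarith)
    have hw'q : 1 ≤ w' * q := by
      have : 1 / q ≤ w' := le_max_right _ _
      rwa [div_le_iff₀ hq0] at this
    have hch : ∀ l, ∃ s, l ∈ F → s ∈ Ico 0 L ∧ ek l = ‖ek l‖ • n s := by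
      intro l
      by_cases hl : l ∈ F
      · obtain ⟨s, hs, h⟩ := G.surj (ek l) (ek_ne_zero (hF l hl).1)
        exact ⟨s, fun _ => ⟨hs, h⟩⟩
      · exact ⟨0, fun h => absurd h hl⟩
    choose S hS using hch
    set p : (Fin 2 → ℤ) → Prop := fun l => Bad γ (1 / w') (D / q ^ 4) (S l) with hp
    have hg := H1 q r w' hq1 hrq hr6 hw'0 hw'3 hw'q S (F.filter fun l => ¬ p l) (by
      intro l hl
      obtain ⟨hl, hb⟩ := Finset.mem_filter.1 hl
      exact ⟨(hF l hl).1, (hF l hl).2.trans (le_max_left _ _), (hS l hl).1, (hS l hl).2, hb⟩)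
    have hb := H2 q r w' hq1 hrq hr6 hw'0 hw'3 hw'q S (F.filter p) (by
      intro l hl
      obtain ⟨hl, hb⟩ := Finset.mem_filter.1 hl
      exact ⟨(hF l hl).1, (hF l hl).2.trans (le_max_left _ _), (hS l hl).1, (hS l hl).2, hb⟩)
    have hsplit : (F.card : ℝ) = (F.filter p).card + (F.filter fun l => ¬ p l).card := by
      exact_mod_cast (Finset.card_filter_add_card_filter_not p).symm
    have hw'' : w' ≤ w + 1 / q := max_le (by have : 0 < 1 / q := by positivity
                                             linarith) (by linarith)
    have hT : errT κ L r = 1 / q + excess κ L q := by rw [errT, hqi]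
    rw [hT, hsplit]
    have hq' : 0 < 1 / q := by positivity
    have hK0p : 0 < 6 * K0 / c := by positivity
    clear_value w'
    calc _ ≤ K2 * r * (1 / q + excess κ L q) + K1 * w' * r := add_le_add hb hg
      _ ≤ K2 * r * (w + (1 / q + excess κ L q)) + K1 * r * (w + (1 / q + excess κ L q)) := by
        have e1 : K1 * w' * r = K1 * r * w' := by ring
        rw [e1]
        exact add_le_add (mul_le_mul_of_nonneg_left (by linarith) (by positivity))
          (mul_le_mul_of_nonneg_left (by linarith) (by positivity))
      _ ≤ _ := by
        have : 0 ≤ 6 * K0 / c * r * (w + (1 / q + excess κ L q)) := by positivity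
        nlinarith

lemma excess_anti {M M' : ℝ} (h : M ≤ M') : excess κ L M' ≤ excess κ L M := by
  refine setIntegral_mono (G.excess_integrableOn _) (G.excess_integrableOn _) fun s => ?_
  exact max_le_max (by linarith) le_rfl

lemma errT_anti {r r' : ℝ} (hr : 0 < r) (h : r ≤ r') : errT κ L r' ≤ errT κ L r :=
  add_le_add (Real.rpow_le_rpow_of_nonpos hr h (by norm_num))
    (G.excess_anti (Real.rpow_le_rpow hr.le h (by norm_num)))

/-- The `L log L` condition on the curvature makes the arithmetic error summable. -/
lemma errT_sum : ∃ K, ∀ N : ℕ, ∑ m ∈ Finset.Icc 1 N, (1 / (m : ℝ)) * errT κ L (c * m) ≤ K := by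
  have hc := G.c_pos
  have hc1 := G.c_le
  have hs : Summable fun m : ℕ => (1 / (m : ℝ)) * (c * m) ^ (-(1 / 12) : ℝ) := by
    have h1 : Summable fun m : ℕ => c ^ (-(1 / 12) : ℝ) * (1 / (m : ℝ) ^ (13 / 12 : ℝ)) :=
      (Real.summable_one_div_nat_rpow.2 (by norm_num)).mul_left _
    refine h1.congr fun m => ?_
    rcases Nat.eq_zero_or_pos m with rfl | hm
    · simp
    have hm' : (0 : ℝ) < m := by exact_mod_cast hm
    rw [Real.mul_rpow hc.le hm'.le, Real.rpow_neg hm'.le,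
      show (13 / 12 : ℝ) = 1 + 1 / 12 by norm_num, Real.rpow_add hm', Real.rpow_one]
    field_simp
  set g : ℝ → ℝ := fun s => κ s * (1 - Real.log c) + 12 * (κ s * Real.log (2 + κ s)) with hg
  have hgi : IntegrableOn g (Icc 0 L) :=
    (G.κ_integrableOn.mul_const _).add (G.κ_log.const_mul _)
  refine ⟨(∑' m : ℕ, (1 / (m : ℝ)) * (c * m) ^ (-(1 / 12) : ℝ)) + ∫ s in Icc 0 L, g s,
    fun N => ?_⟩
  simp_rw [errT, mul_add]
  rw [Finset.sum_add_distrib]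
  refine add_le_add (hs.sum_le_tsum _ fun m _ => by positivity) ?_
  simp_rw [excess, ← integral_const_mul]
  rw [← integral_finsetSum _ fun m _ => (G.excess_integrableOn _).const_mul _]
  refine setIntegral_mono (integrable_finsetSum _ fun m _ =>
    (G.excess_integrableOn _).const_mul _) hgi fun s => ?_
  have hκ := G.κ_nonneg s
  set X := (2 + κ s) ^ 12 / c with hX
  have hX1 : 1 ≤ X := by
    rw [hX, le_div_iff₀ hc]
    have : 1 ≤ (2 + κ s) ^ 12 := one_le_pow₀ (by linarith)
    linarith
  have hlog : Real.log X = 12 * Real.log (2 + κ s) - Real.log c := by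
    rw [hX, Real.log_div (by positivity) hc.ne', Real.log_pow]; norm_num
  calc ∑ m ∈ Finset.Icc 1 N, (1 / (m : ℝ)) * max (κ s - (c * m) ^ ((1 / 12) : ℝ)) 0
      ≤ ∑ m ∈ Finset.Icc 1 N, (if (m : ℝ) ≤ X then (1 / (m : ℝ)) * κ s else 0) := by
        refine Finset.sum_le_sum fun m _ => ?_
        split_ifs with h
        · gcongr
          refine max_le ?_ hκ
          have : 0 ≤ (c * m) ^ ((1 / 12) : ℝ) := by positivity
          linarith
        · rw [max_eq_right, mul_zero]
          rw [not_le, hX, div_lt_iff₀ hc] at h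
          have h1 : ((2 + κ s) ^ 12) ^ ((1 / 12) : ℝ) ≤ (c * m) ^ ((1 / 12) : ℝ) :=
            Real.rpow_le_rpow (by positivity) (by linarith) (by norm_num)
          rw [← Real.rpow_natCast, ← Real.rpow_mul (by positivity)] at h1
          norm_num at h1
          norm_num
          linarith
    _ = κ s * ∑ m ∈ (Finset.Icc 1 N).filter (fun n : ℕ => (n : ℝ) ≤ X), (1 / (m : ℝ)) := by
        rw [← Finset.sum_filter, Finset.mul_sum]
        exact Finset.sum_congr rfl fun _ _ => mul_comm _ _
    _ ≤ κ s * (1 + Real.log X) := mul_le_mul_of_nonneg_left (sum_inv_le N hX1) hκ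
    _ = g s := by rw [hlog, hg]; ring

/-- Summability of the arithmetic error over the lattice. -/
lemma errT_lattice : ∃ K > 0, ∀ F : Finset (Fin 2 → ℤ), (∀ k ∈ F, k ≠ 0) →
    ∑ k ∈ F, errT κ L (suppFn Ω (ek k)) / ‖ek k‖ ^ 2 ≤ K := by
  obtain ⟨K, hK⟩ := G.errT_sum
  have hc := G.c_pos
  refine ⟨8 * |K| + 1, by positivity, fun F hF => ?_⟩
  obtain ⟨N, hN⟩ := shell_sum F hF
  have h1 := hN (fun m => (1 / (m : ℝ)) ^ 2 * errT κ L (c * m)) fun m =>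
    mul_nonneg (by positivity) (errT_nonneg _ _ (by positivity))
  calc _ ≤ ∑ k ∈ F, (1 / (supN k : ℝ)) ^ 2 * errT κ L (c * supN k) := by
        refine Finset.sum_le_sum fun k hk => ?_
        have hp : (1 : ℝ) ≤ supN k := by exact_mod_cast supN_pos (hF k hk)
        have hle := supN_le_norm k
        rw [div_eq_mul_one_div, mul_comm, one_div_pow]
        have hn0 : 0 ≤ errT κ L (suppFn Ω (ek k)) :=
          errT_nonneg _ _ (le_trans (by positivity) (G.le_supp (ek_ne_zero (hF k hk))))
        gcongr
        refine G.errT_anti (by positivity) ?_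
        exact (mul_le_mul_of_nonneg_left hle hc.le).trans (G.le_supp (ek_ne_zero (hF k hk)))
    _ ≤ _ := h1
    _ = 8 * ∑ m ∈ Finset.Icc 1 N, (1 / (m : ℝ)) * errT κ L (c * m) := by
        rw [Finset.mul_sum]
        refine Finset.sum_congr rfl fun m hm => ?_
        have : (m : ℝ) ≠ 0 := by
          have := (Finset.mem_Icc.1 hm).1
          positivity
        field_simp
    _ ≤ _ := by
        have := hK N
        have := le_abs_self K
        linarith

end

end Geo

end MeanSq

namespace MeanSq

open Filter Topology

/-! ### The tent function and its Fourier transform -/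

/-- The tent function `max (1 - |x|) 0`. -/
def tent (x : ℝ) : ℝ := max (1 - |x|) 0

lemma tent_nonneg (x : ℝ) : 0 ≤ tent x := le_max_right _ _

lemma tent_le_one (x : ℝ) : tent x ≤ 1 := max_le (by linarith [abs_nonneg x]) zero_le_one

lemma tent_continuous : Continuous tent := by unfold tent; fun_prop

lemma tent_eq_zero {x : ℝ} (h : 1 ≤ |x|) : tent x = 0 := max_eq_right (by linarith)

lemma tent_neg (x : ℝ) : tent (-x) = tent x := by simp [tent]

lemma tent_support : Function.support tent ⊆ Ioc (-1) 1 := by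
  intro x hx
  by_contra h
  refine hx (tent_eq_zero ?_)
  by_contra h'
  rw [not_le, abs_lt] at h'
  exact h ⟨h'.1, h'.2.le⟩

lemma tent_hasCompactSupport : HasCompactSupport tent :=
  HasCompactSupport.of_support_subset_isCompact isCompact_Icc
    (tent_support.trans Ioc_subset_Icc_self)

lemma tent_integrable : Integrable tent :=
  tent_continuous.integrable_of_hasCompactSupport tent_hasCompactSupport

lemma integral_cos_tent (t : ℝ) :
    ∫ x in (0 : ℝ)..1, 2 * (1 - x) * Real.cos (2 * Real.pi * t * x) =
      Real.sinc (Real.pi * t) ^ 2 := by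
  rcases eq_or_ne t 0 with rfl | ht
  · have : ∀ x ∈ uIcc (0 : ℝ) 1, HasDerivAt (fun x : ℝ => 2 * x - x ^ 2) (2 * (1 - x)) x := by
      intro x _
      have := ((hasDerivAt_id x).const_mul 2).sub ((hasDerivAt_id x).pow 2)
      refine (this.congr_deriv ?_)
      simp; ring
    simp only [mul_zero, zero_mul, Real.cos_zero, mul_one, Real.sinc_zero]
    rw [intervalIntegral.integral_eq_sub_of_hasDerivAt this
      (Continuous.intervalIntegrable (by fun_prop) _ _)]
    norm_num
  set a := 2 * Real.pi * t with ha
  have ha0 : a ≠ 0 := by positivity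
  have : ∀ x ∈ uIcc (0 : ℝ) 1, HasDerivAt
      (fun x : ℝ => 2 * ((1 - x) * (Real.sin (a * x) / a) - Real.cos (a * x) / a ^ 2))
      (2 * (1 - x) * Real.cos (a * x)) x := by
    intro x _
    have h1 : HasDerivAt (fun x : ℝ => a * x) a x := by
      simpa using (hasDerivAt_id x).const_mul a
    have h2 : HasDerivAt (fun x : ℝ => 1 - x) (-1) x := (hasDerivAt_id x).const_sub 1
    have := ((h2.mul (h1.sin.div_const a)).sub (h1.cos.div_const (a ^ 2))).const_mul 2
    refine this.congr_deriv ?_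
    field_simp; ring
  rw [intervalIntegral.integral_eq_sub_of_hasDerivAt this
      (Continuous.intervalIntegrable (by fun_prop) _ _)]
  rw [Real.sinc_of_ne_zero (by positivity)]
  have h : Real.cos a = 1 - 2 * Real.sin (Real.pi * t) ^ 2 := by
    rw [ha, mul_assoc, Real.cos_two_mul, Real.cos_sq']; ring
  simp only [mul_one, sub_self, zero_mul, mul_zero, Real.cos_zero, Real.sin_zero, zero_div, h]
  rw [ha]; field_simp; ring

open FourierTransform in
lemma fourier_tent (t : ℝ) :
    𝓕 (fun x => (tent x : ℂ)) t = ((Real.sinc (Real.pi * t) ^ 2 : ℝ) : ℂ) := by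
  rw [← integral_cos_tent, Real.fourier_real_eq_integral_exp_smul]
  set f : ℝ → ℂ := fun v => Complex.exp (↑(-2 * Real.pi * v * t) * Complex.I) • (tent v : ℂ)
    with hf
  have hfc : Continuous f := by
    have := tent_continuous
    fun_prop
  have hsupp : Function.support f ⊆ Ioc (-1) 1 := by
    intro x hx
    apply tent_support
    intro h
    apply hx
    simp [hf, h]
  rw [← intervalIntegral.integral_eq_integral_of_support_subset hsupp,
    ← intervalIntegral.integral_add_adjacent_intervals (b := 0) (hfc.intervalIntegrable _ _)
      (hfc.intervalIntegrable _ _)]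
  have h1 : ∫ x in (-1 : ℝ)..0, f x = ∫ x in (0 : ℝ)..1, f (-x) := by
    rw [intervalIntegral.integral_comp_neg]; simp
  have hfn : Continuous fun x => f (-x) := hfc.comp continuous_neg
  rw [h1, ← intervalIntegral.integral_add (hfn.intervalIntegrable _ _)
    (hfc.intervalIntegrable _ _), ← intervalIntegral.integral_ofReal]
  refine intervalIntegral.integral_congr fun x hx => ?_
  rw [uIcc_of_le zero_le_one] at hx
  have ht : tent x = 1 - x := by
    rw [tent, abs_of_nonneg hx.1, max_eq_left (by linarith [hx.2])]
  simp only [hf, tent_neg, ht, smul_eq_mul]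
  rw [Complex.exp_mul_I, Complex.exp_mul_I, ← Complex.ofReal_cos, ← Complex.ofReal_sin,
    ← Complex.ofReal_cos, ← Complex.ofReal_sin,
    show -2 * Real.pi * -x * t = 2 * Real.pi * t * x by ring,
    show -2 * Real.pi * x * t = -(2 * Real.pi * t * x) by ring, Real.cos_neg, Real.sin_neg]
  push_cast; ring

lemma sinc_sq_nonneg (t : ℝ) : 0 ≤ Real.sinc t ^ 2 := sq_nonneg _

lemma sinc_sq_le_one (t : ℝ) : Real.sinc t ^ 2 ≤ 1 := by
  rw [sq_le_one_iff_abs_le_one]; exact abs_le.2 ⟨Real.neg_one_le_sinc t, Real.sinc_le_one t⟩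

lemma sinc_sq_le (t : ℝ) (ht : t ≠ 0) : Real.sinc t ^ 2 ≤ 1 / t ^ 2 := by
  rw [Real.sinc_of_ne_zero ht, div_pow]
  gcongr
  exact Real.sin_sq_le_one t

lemma sinc_sq_le' (t : ℝ) : Real.sinc (Real.pi * t) ^ 2 ≤ 2 / (1 + t ^ 2) := by
  rw [le_div_iff₀ (by positivity)]
  have h1 := sinc_sq_le_one (Real.pi * t)
  rcases eq_or_ne t 0 with rfl | ht
  · norm_num
  have h2 := sinc_sq_le (Real.pi * t) (by positivity)
  rw [le_div_iff₀ (by positivity)] at h2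
  have h3 : Real.sinc (Real.pi * t) ^ 2 * t ^ 2 ≤ Real.sinc (Real.pi * t) ^ 2 * (Real.pi * t) ^ 2 := by
    have : t ^ 2 ≤ (Real.pi * t) ^ 2 := by
      rw [mul_pow]
      have : 1 ≤ Real.pi ^ 2 := one_le_pow₀ (by linarith [Real.pi_gt_three])
      nlinarith [sq_nonneg t]
    gcongr
  linarith

lemma sinc_sq_continuous : Continuous fun t : ℝ => Real.sinc (Real.pi * t) ^ 2 := by
  have := Real.continuous_sinc
  fun_prop

lemma sinc_sq_integrable : Integrable fun t : ℝ => Real.sinc (Real.pi * t) ^ 2 := by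
  refine (integrable_inv_one_add_sq.const_mul 2).mono' sinc_sq_continuous.aestronglyMeasurable
    (Eventually.of_forall fun t => ?_)
  rw [Real.norm_of_nonneg (sinc_sq_nonneg _)]
  exact sinc_sq_le' t

lemma tent_integrable_complex : Integrable fun x => (tent x : ℂ) := tent_integrable.ofReal

/-- Fourier inversion for the tent function. -/
lemma integral_sinc_sq (v : ℝ) :
    ∫ t : ℝ, Complex.exp (2 * Real.pi * t * v * Complex.I) *
      ((Real.sinc (Real.pi * t) ^ 2 : ℝ) : ℂ) = tent v := by
  have hF : FourierTransform.fourier (fun x => (tent x : ℂ)) =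
      fun t : ℝ => ((Real.sinc (Real.pi * t) ^ 2 : ℝ) : ℂ) := funext fourier_tent
  have h := MeasureTheory.Integrable.fourierInv_fourier_eq tent_integrable_complex
    (by rw [hF]; exact sinc_sq_integrable.ofReal) (v := v)
    (Complex.continuous_ofReal.comp tent_continuous).continuousAt
  rw [hF, Real.fourierInv_eq'] at h
  rw [← h]
  refine integral_congr_ae (Eventually.of_forall fun t => ?_)
  simp only [smul_eq_mul, RCLike.inner_apply, conj_trivial]
  push_cast
  ring_nf

end MeanSq

namespace MeanSq

open Filter Topology

/-! ### Gallagher's inequality -/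

/-- The additive character `e(x) = exp(2πix)`. -/
def ex (x : ℝ) : ℂ := Complex.exp (2 * Real.pi * x * Complex.I)

lemma ex_eq (x : ℝ) : ex x = Complex.exp ((2 * Real.pi * x : ℝ) * Complex.I) := by
  unfold ex; push_cast; rfl

@[simp] lemma norm_ex (x : ℝ) : ‖ex x‖ = 1 := by rw [ex_eq, Complex.norm_exp_ofReal_mul_I]

lemma ex_add (x y : ℝ) : ex (x + y) = ex x * ex y := by
  unfold ex; rw [← Complex.exp_add]; push_cast; ring_nf

lemma conj_ex (x : ℝ) : (starRingEnd ℂ) (ex x) = ex (-x) := by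
  rw [ex_eq, ex_eq, ← Complex.exp_conj, map_mul, Complex.conj_I, Complex.conj_ofReal]
  push_cast; ring_nf

@[fun_prop] lemma continuous_ex : Continuous ex := by unfold ex; fun_prop

lemma ex_sub (x y : ℝ) : ex (x - y) = ex x * ex (-y) := by rw [sub_eq_add_neg, ex_add]

/-- The Fourier transform of `g` with the positive sign in the exponent. -/
def ft (g : ℝ → ℝ) (t : ℝ) : ℂ := ∫ u, (g u : ℂ) * ex (t * u)

lemma ft_integrable {g : ℝ → ℝ} (hg : Integrable g) (t : ℝ) :
    Integrable fun u => (g u : ℂ) * ex (t * u) := by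
  refine hg.ofReal.mul_bdd (c := 1) (Continuous.aestronglyMeasurable (by fun_prop)) ?_
  exact Eventually.of_forall fun u => by simp

lemma ft_normSq (g : ℝ → ℝ) (t : ℝ) :
    ((‖ft g t‖ ^ 2 : ℝ) : ℂ) =
      ∫ p : ℝ × ℝ, ((g p.1 : ℂ) * (g p.2 : ℂ)) * ex (t * (p.1 - p.2)) := by
  have h2 : (starRingEnd ℂ) (ft g t) = ∫ u, (g u : ℂ) * ex (-(t * u)) := by
    unfold ft; rw [← integral_conj]; simp [conj_ex]
  have h1 : ((‖ft g t‖ ^ 2 : ℝ) : ℂ) = ft g t * (starRingEnd ℂ) (ft g t) := by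
    rw [Complex.mul_conj, Complex.normSq_eq_norm_sq]
  rw [h1, h2, ft, ← integral_prod_mul]
  refine integral_congr_ae (Eventually.of_forall fun p => ?_)
  simp only
  rw [mul_sub, ex_sub]; ring

/-- The Fejér weight of width `H` centred at `T`. -/
def fejer (T H t : ℝ) : ℝ := Real.sinc (Real.pi * ((t - T) / (2 * H))) ^ 2

lemma fejer_integral {T H : ℝ} (hH : 0 < H) (v : ℝ) :
    ∫ t : ℝ, (fejer T H t : ℂ) * ex (t * v) = 2 * H * ex (T * v) * tent (2 * H * v) := by
  have h := integral_sinc_sq (2 * H * v)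
  have e1 : ∀ t : ℝ, (fejer T H t : ℂ) * ex (t * v) =
      (fun x : ℝ => ex (T * v) * (Complex.exp (2 * Real.pi * x * (2 * H * v : ℝ) * Complex.I) *
        ((Real.sinc (Real.pi * x) ^ 2 : ℝ) : ℂ))) ((t - T) / (2 * H)) := by
    intro t
    have : t * v = T * v + (t - T) / (2 * H) * (2 * H * v) := by field_simp; ring
    rw [this, ex_add]
    simp only [fejer, ex]
    push_cast
    ring_nf
  set φ : ℝ → ℂ := fun x : ℝ => ex (T * v) *
    (Complex.exp (2 * Real.pi * x * (2 * H * v : ℝ) * Complex.I) *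
        ((Real.sinc (Real.pi * x) ^ 2 : ℝ) : ℂ)) with hφ
  have e2 : ∫ x, φ x = ex (T * v) * tent (2 * H * v) := by
    rw [hφ, integral_const_mul, h]
  simp_rw [e1]
  rw [integral_sub_right_eq_self (fun y : ℝ => φ (y / (2 * H))) T,
    Measure.integral_comp_div φ, e2, abs_of_pos (by positivity)]
  simp only [Complex.real_smul]
  push_cast; ring

lemma fejer_integrable {T H : ℝ} (hH : 0 < H) : Integrable (fejer T H) := by
  have h := (sinc_sq_integrable.comp_div (R := 2 * H) (by positivity)).comp_sub_right T
  exact h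

lemma fejer_nonneg (T H t : ℝ) : 0 ≤ fejer T H t := sq_nonneg _

lemma fejer_low {T H t : ℝ} (hH : 0 < H) (ht : t ∈ Icc T (T + H)) : 1 / 4 ≤ fejer T H t := by
  unfold fejer
  set x := Real.pi * ((t - T) / (2 * H)) with hx
  have hpi := Real.pi_pos
  have hx0 : 0 ≤ x := by
    have : 0 ≤ t - T := by linarith [ht.1]
    positivity
  have hx1 : x ≤ Real.pi / 2 := by
    have : (t - T) / (2 * H) ≤ 1 / 2 := by
      rw [div_le_iff₀ (by positivity)]; linarith [ht.2]
    rw [hx]; nlinarith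
  have : 1 / 2 ≤ Real.sinc x := by
    rcases hx0.eq_or_lt with h | h
    · rw [← h, Real.sinc_zero]; norm_num
    · rw [Real.sinc_of_ne_zero h.ne', le_div_iff₀ h]
      refine le_trans ?_ (Real.mul_le_sin hx0 hx1)
      refine mul_le_mul_of_nonneg_right ?_ hx0
      rw [div_le_div_iff₀ (by norm_num) hpi]
      linarith [Real.pi_le_four]
  nlinarith

lemma ft_continuous {g : ℝ → ℝ} (hg : Integrable g) : Continuous (ft g) := by
  refine continuous_of_dominated (bound := fun u => ‖g u‖) ?_ ?_ hg.norm ?_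
  · intro t; exact (ft_integrable hg t).aestronglyMeasurable
  · intro t; exact Eventually.of_forall fun u => by simp
  · exact Eventually.of_forall fun u => by fun_prop

lemma ft_norm_le (g : ℝ → ℝ) (t : ℝ) : ‖ft g t‖ ≤ ∫ u, ‖g u‖ := by
  refine (norm_integral_le_integral_norm _).trans (le_of_eq ?_)
  simp

/-- Gallagher's inequality: the mean square of a Fourier transform over an interval of length `H`
is controlled by the correlations of the function at distance `1 / H`. -/
lemma gallagher {g : ℝ → ℝ} (hg : Integrable g) {T H : ℝ} (hH : 0 < H) :
    ∫ t in Icc T (T + H), ‖ft g t‖ ^ 2 ≤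
      8 * H * ∫ p in {p : ℝ × ℝ | |p.1 - p.2| ≤ 1 / H}, |g p.1| * |g p.2| := by
  have hgg : Integrable fun p : ℝ × ℝ => g p.1 * g p.2 := hg.mul_prod hg
  have hggn : Integrable fun p : ℝ × ℝ => |g p.1| * |g p.2| := hg.abs.mul_prod hg.abs
  set Q : ℝ → ℝ × ℝ → ℂ := fun t p =>
    ((fejer T H t : ℂ) * ((g p.1 * g p.2 : ℝ) : ℂ)) * ex (t * (p.1 - p.2)) with hQ
  have hQi : Integrable (Function.uncurry Q) (volume.prod volume) := by
    have h1 : Integrable (fun z : ℝ × (ℝ × ℝ) => (fejer T H z.1 : ℂ) *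
        ((g z.2.1 * g z.2.2 : ℝ) : ℂ)) (volume.prod volume) :=
      (fejer_integrable hH).ofReal.mul_prod hgg.ofReal
    refine h1.mul_bdd (c := 1) (Continuous.aestronglyMeasurable (by fun_prop)) ?_
    exact Eventually.of_forall fun u => by simp
  have hwc : Continuous (fejer T H) := by
    have := Real.continuous_sinc
    unfold fejer; fun_prop
  have hwi : Integrable fun t => fejer T H t * ‖ft g t‖ ^ 2 := by
    refine (fejer_integrable hH).mul_bdd (c := (∫ u, ‖g u‖) ^ 2) ?_ ?_
    · exact ((ft_continuous hg).norm.pow 2).aestronglyMeasurable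
    · refine Eventually.of_forall fun t => ?_
      rw [Real.norm_of_nonneg (by positivity)]
      have := ft_norm_le g t
      gcongr
  have hmain : ((∫ t, fejer T H t * ‖ft g t‖ ^ 2 : ℝ) : ℂ) =
      ∫ p : ℝ × ℝ, ((g p.1 * g p.2 : ℝ) : ℂ) *
        (2 * H * ex (T * (p.1 - p.2)) * tent (2 * H * (p.1 - p.2))) := by
    rw [← integral_complex_ofReal]
    have h1 : ∀ t, ((fejer T H t * ‖ft g t‖ ^ 2 : ℝ) : ℂ) = ∫ p, Q t p := by
      intro t
      rw [Complex.ofReal_mul, ft_normSq, ← integral_const_mul]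
      refine integral_congr_ae (Eventually.of_forall fun p => ?_)
      simp only [hQ]; push_cast; ring
    calc _ = ∫ t, ∫ p, Q t p := integral_congr_ae (Eventually.of_forall h1)
      _ = ∫ p, ∫ t, Q t p := integral_integral_swap hQi
      _ = _ := by
        refine integral_congr_ae (Eventually.of_forall fun p => ?_)
        simp only
        rw [← fejer_integral hH, ← integral_const_mul]
        refine integral_congr_ae (Eventually.of_forall fun t => ?_)
        simp only [hQ]; ring
  have hms : MeasurableSet {p : ℝ × ℝ | |p.1 - p.2| ≤ 1 / H} :=
    (isClosed_le (f := fun p : ℝ × ℝ => |p.1 - p.2|) (by fun_prop) continuous_const).measurableSet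
  have hbound : ∫ t, fejer T H t * ‖ft g t‖ ^ 2 ≤
      2 * H * ∫ p in {p : ℝ × ℝ | |p.1 - p.2| ≤ 1 / H}, |g p.1| * |g p.2| := by
    refine (le_abs_self _).trans ?_
    rw [← Real.norm_eq_abs, ← Complex.norm_real, hmain, ← integral_const_mul, ← integral_indicator hms]
    refine norm_integral_le_of_norm_le ((hggn.const_mul _).indicator hms)
      (Eventually.of_forall fun p => ?_)
    rw [norm_mul, norm_mul, norm_mul, norm_ex, Complex.norm_real, Complex.norm_real,
      Real.norm_of_nonneg (tent_nonneg _), norm_mul, Real.norm_eq_abs, Real.norm_eq_abs]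
    have h2H : ‖(2 * H : ℂ)‖ = 2 * H := by
      rw [norm_mul, Complex.norm_real, Real.norm_of_nonneg hH.le]; norm_num
    rw [h2H, mul_one]
    by_cases hp : |p.1 - p.2| ≤ 1 / H
    · rw [indicator_of_mem (by exact hp)]
      have := tent_le_one (2 * H * (p.1 - p.2))
      calc _ ≤ |g p.1| * |g p.2| * (2 * H * 1) := by gcongr
        _ = _ := by ring
    · rw [indicator_of_notMem (by exact hp), tent_eq_zero, mul_zero, mul_zero]
      rw [not_le, div_lt_iff₀ hH] at hp
      rw [abs_mul, abs_of_pos (by positivity : 0 < 2 * H)]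
      nlinarith
  calc ∫ t in Icc T (T + H), ‖ft g t‖ ^ 2
      ≤ ∫ t in Icc T (T + H), 4 * (fejer T H t * ‖ft g t‖ ^ 2) := by
        refine setIntegral_mono_on ?_ (hwi.const_mul 4).integrableOn measurableSet_Icc fun t ht => ?_
        · exact ((ft_continuous hg).norm.pow 2).continuousOn.integrableOn_compact isCompact_Icc
        · have := fejer_low hH ht
          nlinarith [sq_nonneg ‖ft g t‖]
    _ ≤ ∫ t, 4 * (fejer T H t * ‖ft g t‖ ^ 2) :=
        setIntegral_le_integral (hwi.const_mul 4)
          (Eventually.of_forall fun t => by have := fejer_nonneg T H t; positivity)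
    _ = 4 * ∫ t, fejer T H t * ‖ft g t‖ ^ 2 := integral_const_mul _ _
    _ ≤ _ := by linarith

end MeanSq

namespace MeanSq

open Filter Topology

/-! ### Second differences of concave profiles -/

/-- A profile: a nonnegative function supported in `(-β, α)`, concave there, and vanishing at
both end points at least like a square root. -/
structure Prof (S : ℝ → ℝ) (α β B : ℝ) : Prop where
  nonneg : ∀ u, 0 ≤ S u
  zero : ∀ u, u ∉ Ioo (-β) α → S u = 0
  conc : ConcaveOn ℝ (Ioo (-β) α) S
  right : ∀ u, S u ≤ B * √(α - u)
  left : ∀ u, S u ≤ B * √(u + β)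
  meas : Measurable S
  B_nonneg : 0 ≤ B

/-- The negative of the second difference of `S` with step `τ`. -/
def dd (S : ℝ → ℝ) (τ u : ℝ) : ℝ := 2 * S u - S (u + τ) - S (u - τ)

namespace Prof

variable {S : ℝ → ℝ} {α β B : ℝ}

section
variable (P : Prof S α β B)
include P

lemma bound (u : ℝ) : S u ≤ B * √(α + β) := by
  by_cases h : u ∈ Ioo (-β) α
  · refine (P.right u).trans (mul_le_mul_of_nonneg_left (Real.sqrt_le_sqrt ?_) P.B_nonneg)
    linarith [h.1]
  · rw [P.zero u h]; exact mul_nonneg P.B_nonneg (Real.sqrt_nonneg _)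

lemma integrable : Integrable S := by
  have h : IntegrableOn S (Ioo (-β) α) := by
    refine Measure.integrableOn_of_bounded (M := B * √(α + β)) (by simp)
      P.meas.aestronglyMeasurable (Eventually.of_forall fun u => ?_)
    rw [Real.norm_of_nonneg (P.nonneg u)]; exact P.bound u
  rw [← integrable_indicator_iff measurableSet_Ioo] at h
  have e : S = (Ioo (-β) α).indicator S := by
    funext u
    by_cases hu : u ∈ Ioo (-β) α
    · rw [indicator_of_mem hu]
    · rw [indicator_of_notMem hu, P.zero u hu]
  rw [e]; exact h

lemma dd_integrable (τ : ℝ) : Integrable (dd S τ) :=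
  ((P.integrable.const_mul 2).sub (P.integrable.comp_add_right τ)).sub
    (P.integrable.comp_sub_right τ)

lemma dd_meas (τ : ℝ) : Measurable (dd S τ) := by
  have := P.meas
  unfold dd; fun_prop

lemma dd_nonneg {τ u : ℝ} (hτ : 0 < τ) (h1 : -β < u - τ) (h2 : u + τ < α) : 0 ≤ dd S τ u := by
  have h := P.conc.slope_anti_adjacent (x := u - τ) (y := u) (z := u + τ)
    ⟨h1, by linarith⟩ ⟨by linarith, h2⟩ (by linarith) (by linarith)
  rw [show u + τ - u = τ by ring, show u - (u - τ) = τ by ring,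
    div_le_div_iff_of_pos_right hτ] at h
  unfold dd; linarith

/-- A first difference is bounded below through the slope of the concave profile between `u` and
the midpoint of `[u, α]`. -/
lemma diff_low {τ u : ℝ} (hτ : 0 < τ) (h1 : -β < u - τ) (h2 : u < α) :
    -(2 * τ * B / √(α - u)) ≤ S u - S (u - τ) := by
  have h := P.conc.slope_anti_adjacent (x := u - τ) (y := u) (z := (u + α) / 2)
    ⟨h1, by linarith⟩ ⟨by linarith, by linarith⟩ (by linarith) (by linarith)
  have hp : 0 < α - u := by linarith
  have hsq : 0 < √(α - u) := Real.sqrt_pos.2 hp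
  rw [show (u + α) / 2 - u = (α - u) / 2 by ring, show u - (u - τ) = τ by ring,
    div_le_div_iff₀ (by positivity) hτ] at h
  have h3 := P.nonneg ((u + α) / 2)
  have h4 := P.right u
  have h5 : -(2 * τ * B / √(α - u)) = -(2 * τ * (B * √(α - u)) / (α - u)) := by
    congr 1
    rw [div_eq_div_iff hsq.ne' hp.ne']
    rw [show 2 * τ * (B * √(α - u)) * √(α - u) = 2 * τ * B * (√(α - u) * √(α - u)) by ring,
      Real.mul_self_sqrt hp.le]
  rw [h5, ← neg_div, div_le_iff₀ hp]
  have : S u * τ ≤ B * √(α - u) * τ := by gcongr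
  nlinarith [mul_nonneg h3 hτ.le]

lemma diff_up {τ u : ℝ} (hτ : 0 < τ) (h1 : -β < u - τ) (h2 : u < α) :
    S u - S (u - τ) ≤ 2 * τ * B / √(u - τ + β) := by
  have h := P.conc.slope_anti_adjacent (x := (u - τ - β) / 2) (y := u - τ) (z := u)
    ⟨by linarith, by linarith⟩ ⟨by linarith, by linarith⟩ (by linarith) (by linarith)
  have hp : 0 < u - τ + β := by linarith
  have hsq : 0 < √(u - τ + β) := Real.sqrt_pos.2 hp
  rw [show u - τ - (u - τ - β) / 2 = (u - τ + β) / 2 by ring, show u - (u - τ) = τ by ring,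
    div_le_div_iff₀ hτ (by positivity)] at h
  have h3 := P.nonneg ((u - τ - β) / 2)
  have h4 := P.left (u - τ)
  have h5 : 2 * τ * B / √(u - τ + β) = 2 * τ * (B * √(u - τ + β)) / (u - τ + β) := by
    rw [div_eq_div_iff hsq.ne' hp.ne']
    rw [show 2 * τ * (B * √(u - τ + β)) * √(u - τ + β) =
      2 * τ * B * (√(u - τ + β) * √(u - τ + β)) by ring, Real.mul_self_sqrt hp.le]
  rw [h5, le_div_iff₀ hp]
  have : S (u - τ) * τ ≤ B * √(u - τ + β) * τ := by gcongr
  nlinarith [mul_nonneg h3 hτ.le]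

/-- Away from the end points the second difference has the sign given by concavity, so that the
integral of its absolute value telescopes to first differences, which the square root decay controls. -/
lemma far_bound {c τ s : ℝ} (hc : 0 < c) (hα : c ≤ α) (hβ : c ≤ β) (hτ : 0 < τ) (hτc : τ ≤ c / 4)
    (hs : 2 * τ ≤ s) (hs1 : s ≤ 1) :
    ∫ u in Ioo 0 (α - s), |dd S τ u| ≤ (2 / √(c / 2) + 4) * B * τ ^ 2 / √s := by
  have hB := P.B_nonneg
  have hs0 : 0 < s := by linarith
  have hss : 0 < √s := Real.sqrt_pos.2 hs0
  rcases le_or_gt (α - s) 0 with hA | hA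
  · rw [Ioo_eq_empty (by linarith), setIntegral_empty]; positivity
  set A := α - s with hAdef
  set F : ℝ → ℝ := fun u => S u - S (u - τ) with hF
  have hFi : Integrable F := P.integrable.sub (P.integrable.comp_sub_right τ)
  have hFI : ∀ a b, IntervalIntegrable F volume a b := fun a b => hFi.intervalIntegrable
  have e1 : ∫ u in Ioo 0 A, |dd S τ u| = ∫ u in (0 : ℝ)..A, (F u - F (u + τ)) := by
    rw [intervalIntegral.integral_of_le hA.le, ← integral_Ioc_eq_integral_Ioo]
    refine setIntegral_congr_fun measurableSet_Ioc fun u hu => ?_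
    rw [abs_of_nonneg (P.dd_nonneg hτ (by linarith [hu.1]) (by linarith [hu.2]))]
    simp only [hF, dd]
    rw [add_sub_cancel_right]; ring
  have e2 : ∫ u in (0 : ℝ)..A, (F u - F (u + τ)) =
      (∫ u in (0 : ℝ)..τ, F u) - ∫ u in A..(A + τ), F u := by
    rw [intervalIntegral.integral_sub (hFI _ _)
      ((hFi.comp_add_right τ).intervalIntegrable), intervalIntegral.integral_comp_add_right,
      zero_add]
    have h1 := intervalIntegral.integral_add_adjacent_intervals (hFI 0 A) (hFI A (A + τ))
    have h2 := intervalIntegral.integral_add_adjacent_intervals (hFI 0 τ) (hFI τ (A + τ))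
    linarith
  have e3 : ∫ u in (0 : ℝ)..τ, F u ≤ τ * (2 * τ * B / √(c / 2)) := by
    have : ∫ u in (0 : ℝ)..τ, F u ≤ ∫ u in (0 : ℝ)..τ, (2 * τ * B / √(c / 2)) := by
      refine intervalIntegral.integral_mono_on hτ.le (hFI _ _) (by simp) fun u hu => ?_
      refine (P.diff_up hτ (by linarith [hu.1]) (by linarith [hu.2])).trans ?_
      gcongr
      linarith [hu.1]
    rw [intervalIntegral.integral_const, smul_eq_mul, sub_zero] at this
    exact this
  have e4 : τ * (-(4 * τ * B / √s)) ≤ ∫ u in A..(A + τ), F u := by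
    have : ∫ u in A..(A + τ), (-(4 * τ * B / √s)) ≤ ∫ u in A..(A + τ), F u := by
      refine intervalIntegral.integral_mono_on (by linarith) (by simp) (hFI _ _) fun u hu => ?_
      refine le_trans ?_ (P.diff_low hτ (by linarith [hu.1]) (by linarith [hu.2]))
      rw [neg_le_neg_iff]
      have h4 : √s / 2 ≤ √(α - u) := by
        apply Real.le_sqrt_of_sq_le
        rw [div_pow, Real.sq_sqrt hs0.le]
        linarith [hu.2]
      calc 2 * τ * B / √(α - u) ≤ 2 * τ * B / (√s / 2) := by gcongr
        _ = _ := by field_simp; ring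
    rw [intervalIntegral.integral_const, smul_eq_mul, add_sub_cancel_left] at this
    exact this
  rw [e1, e2]
  have hs1' : √s ≤ 1 := by rw [← Real.sqrt_one]; exact Real.sqrt_le_sqrt hs1
  have e5 : τ * (2 * τ * B / √(c / 2)) ≤ τ * (2 * τ * B / √(c / 2)) / √s :=
    le_div_self (by positivity) hss hs1'
  calc _ ≤ τ * (2 * τ * B / √(c / 2)) / √s + τ * (4 * τ * B / √s) := by linarith
    _ = _ := by field_simp

/-- The window of length `O(τ)` at the end point contributes `O(τ √τ)`, as does the rest by
`far_bound` with `s = 2 τ`. -/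
lemma total_bound {c τ : ℝ} (hc : 0 < c) (hc1 : c ≤ 1) (hα : c ≤ α) (hβ : c ≤ β) (hτ : 0 < τ)
    (hτc : τ ≤ c / 4) :
    ∫ u in Ioi 0, |dd S τ u| ≤ (2 / √(c / 2) + 28) * B * (τ * √τ) := by
  have hB := P.B_nonneg
  have hsτ : 0 < √τ := Real.sqrt_pos.2 hτ
  have hi : Integrable fun u => |dd S τ u| := (P.dd_integrable τ).abs
  have hmid : ∫ u in Icc (α - 2 * τ) (α + τ), |dd S τ u| ≤ 24 * B * (τ * √τ) := by
    have h1 : ∀ u ∈ Icc (α - 2 * τ) (α + τ), |dd S τ u| ≤ 8 * B * √τ := by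
      intro u hu
      have key : ∀ v, α - 3 * τ ≤ v → S v ≤ B * (2 * √τ) := by
        intro v hv
        refine (P.right v).trans (mul_le_mul_of_nonneg_left ?_ hB)
        rw [show 2 * √τ = √(2 ^ 2 * τ) by
          rw [Real.sqrt_mul (by norm_num), Real.sqrt_sq (by norm_num)]]
        apply Real.sqrt_le_sqrt; linarith
      have k1 := key u (by linarith [hu.1])
      have k2 := key (u + τ) (by linarith [hu.1])
      have k3 := key (u - τ) (by linarith [hu.1])
      have n1 := P.nonneg u
      have n2 := P.nonneg (u + τ)
      have n3 := P.nonneg (u - τ)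
      unfold dd
      rw [abs_le]; constructor <;> nlinarith
    have h2 : ∫ u in Icc (α - 2 * τ) (α + τ), |dd S τ u| ≤
        ∫ u in Icc (α - 2 * τ) (α + τ), 8 * B * √τ :=
      setIntegral_mono_on hi.integrableOn (integrableOn_const (by simp)) measurableSet_Icc h1
    refine h2.trans (le_of_eq ?_)
    rw [setIntegral_const, Real.volume_real_Icc_of_le (by linarith)]
    simp; ring
  have hfar := P.far_bound hc hα hβ hτ hτc le_rfl (by linarith)
  have hz : ∀ u ∈ Ioi (0 : ℝ) \ (Ioo 0 (α - 2 * τ) ∪ Icc (α - 2 * τ) (α + τ)), |dd S τ u| = 0 := by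
    rintro u ⟨hu0, hu⟩
    have hu' : α + τ < u := by
      by_contra h
      apply hu
      rcases lt_or_ge u (α - 2 * τ) with h' | h'
      · exact Or.inl ⟨hu0, h'⟩
      · exact Or.inr ⟨h', not_lt.1 h⟩
    rw [dd, P.zero u fun h => by linarith [h.2], P.zero (u + τ) fun h => by linarith [h.2],
      P.zero (u - τ) fun h => by linarith [h.2]]
    simp
  have hle : ∫ u in Ioi 0, |dd S τ u| ≤ ∫ u in Ioo 0 (α - 2 * τ) ∪ Icc (α - 2 * τ) (α + τ),
      |dd S τ u| := by
    rw [← setIntegral_eq_of_subset_of_forall_sdiff_eq_zero measurableSet_Ioi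
      (s := Ioo 0 (α - 2 * τ) ∪ Icc (α - 2 * τ) (α + τ)) ?_ hz]
    rintro u (h | h)
    · exact h.1
    · exact lt_of_lt_of_le (by linarith) h.1
  refine hle.trans ?_
  rw [setIntegral_union ?_ measurableSet_Icc hi.integrableOn hi.integrableOn]
  · have e : (2 / √(c / 2) + 4) * B * τ ^ 2 / √(2 * τ) ≤ (2 / √(c / 2) + 4) * B * (τ * √τ) := by
      rw [mul_div_assoc]
      gcongr
      rw [div_le_iff₀ (by positivity)]
      have h1 : √τ ≤ √(2 * τ) := Real.sqrt_le_sqrt (by linarith)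
      have h2 := Real.mul_self_sqrt hτ.le
      calc τ ^ 2 = τ * (√τ * √τ) := by rw [h2]; ring
        _ ≤ τ * (√τ * √(2 * τ)) := by gcongr
        _ = _ := by ring
    calc _ ≤ (2 / √(c / 2) + 4) * B * (τ * √τ) + 24 * B * (τ * √τ) :=
          add_le_add (hfar.trans e) hmid
      _ = _ := by ring
  · rw [Set.disjoint_left]
    intro u h1 h2
    linarith [h1.2, h2.1]

end

/-- The positive part of the line carries the second difference of the right end. -/
def _root_.MeanSq.ddp (S : ℝ → ℝ) (τ u : ℝ) : ℝ := (Ioi (0 : ℝ)).indicator (dd S τ) u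

lemma ddp_total (τ : ℝ) : ∫ u, |ddp S τ u| = ∫ u in Ioi 0, |dd S τ u| := by
  rw [← integral_indicator measurableSet_Ioi]
  congr 1; ext u
  unfold ddp
  by_cases h : u ∈ Ioi (0 : ℝ) <;> simp [h]

lemma ddp_far (τ s : ℝ) : ∫ u in Iio (α - s), |ddp S τ u| = ∫ u in Ioo 0 (α - s), |dd S τ u| := by
  rw [← integral_indicator measurableSet_Iio, ← integral_indicator measurableSet_Ioo]
  congr 1; ext u
  unfold ddp
  by_cases h : 0 < u <;> by_cases h' : u < α - s <;> simp [h, h', indicator]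

section
variable (P : Prof S α β B)
include P

lemma ddp_integrable (τ : ℝ) : Integrable (ddp S τ) :=
  (P.dd_integrable τ).indicator measurableSet_Ioi

lemma ddp_zero {τ u : ℝ} (hτ : 0 ≤ τ) (h : α + τ < u) : ddp S τ u = 0 := by
  unfold ddp
  by_cases hu : u ∈ Ioi (0 : ℝ)
  · rw [indicator_of_mem hu, dd, P.zero u fun h => by linarith [h.2],
      P.zero (u + τ) fun h => by linarith [h.2], P.zero (u - τ) fun h => by linarith [h.2]]
    simp
  · rw [indicator_of_notMem hu]

/-- Correlations of two second differences are small unless the end points are close. -/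
lemma corr_bound {S' : ℝ → ℝ} {α' β' B' : ℝ} (P' : Prof S' α' β' B') {τ θ s m m' M M' : ℝ}
    (hτ : 0 < τ) (hτs : τ ≤ s) (hθs : θ ≤ s) (hsep : 3 * s < |α - α'|)
    (hm : ∫ u in Iio (α - s), |ddp S τ u| ≤ m) (hM : ∫ u, |ddp S τ u| ≤ M)
    (hm' : ∫ u in Iio (α' - s), |ddp S' τ u| ≤ m') (hM' : ∫ u, |ddp S' τ u| ≤ M') :
    ∫ p in {p : ℝ × ℝ | |p.1 - p.2| ≤ θ}, |ddp S τ p.1| * |ddp S' τ p.2| ≤ m * M' + M * m' := by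
  set f : ℝ → ℝ := fun u => |ddp S τ u| with hf
  set f' : ℝ → ℝ := fun u => |ddp S' τ u| with hf'
  have hfi : Integrable f := (P.ddp_integrable τ).abs
  have hfi' : Integrable f' := (P'.ddp_integrable τ).abs
  have hf0 : ∀ u, 0 ≤ f u := fun u => abs_nonneg _
  have hf0' : ∀ u, 0 ≤ f' u := fun u => abs_nonneg _
  set φ : ℝ → ℝ := (Iio (α - s)).indicator f with hφ
  set φ' : ℝ → ℝ := (Iio (α' - s)).indicator f' with hφ'
  have hφi : Integrable φ := hfi.indicator measurableSet_Iio
  have hφi' : Integrable φ' := hfi'.indicator measurableSet_Iio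
  have hφ0 : ∀ u, 0 ≤ φ u := fun u => indicator_nonneg (fun u _ => hf0 u) u
  have hφ0' : ∀ u, 0 ≤ φ' u := fun u => indicator_nonneg (fun u _ => hf0' u) u
  have hms : MeasurableSet {p : ℝ × ℝ | |p.1 - p.2| ≤ θ} :=
    (isClosed_le (f := fun p : ℝ × ℝ => |p.1 - p.2|) (by fun_prop) continuous_const).measurableSet
  rw [← integral_indicator hms]
  have hpt : ∀ p : ℝ × ℝ, {p : ℝ × ℝ | |p.1 - p.2| ≤ θ}.indicator
      (fun p => f p.1 * f' p.2) p ≤ φ p.1 * f' p.2 + f p.1 * φ' p.2 := by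
    intro p
    have hn : 0 ≤ φ p.1 * f' p.2 + f p.1 * φ' p.2 :=
      add_nonneg (mul_nonneg (hφ0 _) (hf0' _)) (mul_nonneg (hf0 _) (hφ0' _))
    by_cases hp : |p.1 - p.2| ≤ θ
    · rw [indicator_of_mem (by exact hp)]
      by_cases h1 : p.1 < α - s
      · rw [hφ, indicator_of_mem (by exact h1)]
        have := mul_nonneg (hf0 p.1) (hφ0' p.2)
        linarith
      by_cases h2 : p.2 < α' - s
      · rw [hφ', indicator_of_mem (by exact h2)]
        have := mul_nonneg (hφ0 p.1) (hf0' p.2)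
        linarith
      by_cases h3 : α + τ < p.1
      · have : f p.1 = 0 := by simp only [hf]; rw [P.ddp_zero hτ.le h3, abs_zero]
        rw [this] at hn ⊢; simpa using hn
      by_cases h4 : α' + τ < p.2
      · have : f' p.2 = 0 := by simp only [hf']; rw [P'.ddp_zero hτ.le h4, abs_zero]
        rw [this] at hn ⊢; simpa using hn
      exfalso
      rw [not_lt] at h1 h2 h3 h4
      rw [abs_le] at hp
      refine absurd hsep (not_lt.2 (abs_le.2 ⟨?_, ?_⟩)) <;> linarith [hp.1, hp.2]
    · rw [indicator_of_notMem (by exact hp)]; exact hn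
  have hi1 : Integrable fun p : ℝ × ℝ => φ p.1 * f' p.2 := hφi.mul_prod hfi'
  have hi2 : Integrable fun p : ℝ × ℝ => f p.1 * φ' p.2 := hfi.mul_prod hφi'
  have hif : Integrable fun p : ℝ × ℝ => f p.1 * f' p.2 := hfi.mul_prod hfi'
  refine (integral_mono (hif.indicator hms) (hi1.add hi2) hpt).trans ?_
  have e : ∫ p : ℝ × ℝ, (φ p.1 * f' p.2 + f p.1 * φ' p.2) =
      (∫ u, φ u) * (∫ u, f' u) + (∫ u, f u) * ∫ u, φ' u := by
    rw [integral_add hi1 hi2]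
    exact congrArg₂ (· + ·) (integral_prod_mul φ f') (integral_prod_mul f φ')
  refine (le_of_eq e).trans ?_
  rw [hφ, hφ', integral_indicator measurableSet_Iio, integral_indicator measurableSet_Iio]
  have n1 : 0 ≤ ∫ u in Iio (α - s), f u := integral_nonneg hf0
  have n2 : 0 ≤ ∫ u in Iio (α' - s), f' u := integral_nonneg hf0'
  have n3 : 0 ≤ ∫ u, f u := integral_nonneg hf0
  have n4 : 0 ≤ ∫ u, f' u := integral_nonneg hf0'
  have p1 := n1.trans hm
  have p3 := n3.trans hM
  gcongr

lemma corr_trivial {S' : ℝ → ℝ} {α' β' B' : ℝ} (P' : Prof S' α' β' B') {τ θ M M' : ℝ}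
    (hM : ∫ u, |ddp S τ u| ≤ M) (hM' : ∫ u, |ddp S' τ u| ≤ M') :
    ∫ p in {p : ℝ × ℝ | |p.1 - p.2| ≤ θ}, |ddp S τ p.1| * |ddp S' τ p.2| ≤ M * M' := by
  have hfi : Integrable fun u => |ddp S τ u| := (P.ddp_integrable τ).abs
  have hfi' : Integrable fun u => |ddp S' τ u| := (P'.ddp_integrable τ).abs
  refine (setIntegral_le_integral (hfi.mul_prod hfi')
    (Eventually.of_forall fun p => by positivity)).trans ?_
  have e := integral_prod_mul (μ := volume) (ν := volume) (fun u => |ddp S τ u|) fun u => |ddp S' τ u|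
  refine (le_of_eq e).trans ?_
  have n3 : 0 ≤ ∫ u, |ddp S τ u| := integral_nonneg fun _ => abs_nonneg _
  have n4 : 0 ≤ ∫ u, |ddp S' τ u| := integral_nonneg fun _ => abs_nonneg _
  have := n3.trans hM
  gcongr

/-- The second difference multiplies the Fourier transform by `4 sin² (πtτ)`. -/
lemma ft_dd (τ t : ℝ) : ft (dd S τ) t = (4 * Real.sin (Real.pi * t * τ) ^ 2 : ℝ) * ft S t := by
  have hi := P.integrable
  have h1 : ∫ u, ((S (u + τ) : ℝ) : ℂ) * ex (t * u) = ex (-(t * τ)) * ft S t := by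
    rw [ft, ← integral_add_right_eq_self (fun u => (S u : ℂ) * ex (t * u)) τ,
      ← integral_const_mul]
    refine integral_congr_ae (Eventually.of_forall fun u => ?_)
    simp only
    rw [show t * u = -(t * τ) + t * (u + τ) by ring, ex_add]; ring
  have h2 : ∫ u, ((S (u - τ) : ℝ) : ℂ) * ex (t * u) = ex (t * τ) * ft S t := by
    rw [ft, ← integral_sub_right_eq_self (fun u => (S u : ℂ) * ex (t * u)) τ,
      ← integral_const_mul]
    refine integral_congr_ae (Eventually.of_forall fun u => ?_)
    simp only
    rw [show t * u = t * τ + t * (u - τ) by ring, ex_add]; ring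
  have i0 := ft_integrable hi t
  have i1 := ft_integrable (hi.comp_add_right τ) t
  have i2 := ft_integrable (hi.comp_sub_right τ) t
  have e : ft (dd S τ) t = 2 * ft S t - ex (-(t * τ)) * ft S t - ex (t * τ) * ft S t := by
    rw [← h1, ← h2]
    conv_rhs => rw [ft]
    have i01 : Integrable fun u => 2 * ((S u : ℂ) * ex (t * u)) - (S (u + τ) : ℂ) * ex (t * u) :=
      (i0.const_mul 2).sub i1
    rw [← integral_const_mul, ← integral_sub (i0.const_mul 2) i1, ← integral_sub i01 i2, ft]
    refine integral_congr_ae (Eventually.of_forall fun u => ?_)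
    simp only [dd]; push_cast; ring
  have hc : ex (t * τ) + ex (-(t * τ)) = ((2 * Real.cos (2 * (Real.pi * t * τ)) : ℝ) : ℂ) := by
    rw [ex_eq, ex_eq, show 2 * Real.pi * -(t * τ) = -(2 * Real.pi * (t * τ)) by ring]
    push_cast
    rw [Complex.two_cos]
    ring_nf
  rw [e, show 2 * ft S t - ex (-(t * τ)) * ft S t - ex (t * τ) * ft S t =
    (2 - (ex (t * τ) + ex (-(t * τ)))) * ft S t by ring, hc]
  congr 1
  rw [Real.cos_two_mul, Real.cos_sq']
  push_cast; ring

end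

end Prof

end MeanSq

namespace MeanSq

open Filter Topology

/-! ### Slices of the domain -/

/-- The plane as a product of two lines, with its volume. -/
def planeEquiv : ℝ × ℝ ≃ᵐ E2 :=
  (MeasurableEquiv.finTwoArrow (α := ℝ)).symm.trans (MeasurableEquiv.toLp 2 (Fin 2 → ℝ))

lemma planeEquiv_apply (p : ℝ × ℝ) : planeEquiv p = !₂[p.1, p.2] := rfl

lemma planeEquiv_mp : MeasurePreserving planeEquiv :=
  ((volume_preserving_finTwoArrow ℝ).symm _).trans
    (EuclideanSpace.volume_preserving_symm_measurableEquiv_toLp (Fin 2)).symm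

/-- The rotation of the plane taking the first basis vector to the unit vector `θ`. -/
def rotIso (θ : E2) (hθ : ‖θ‖ = 1) : E2 ≃ₗᵢ[ℝ] E2 :=
  LinearIsometry.toLinearIsometryEquiv
    { toFun := fun x => x 0 • θ + x 1 • rot θ
      map_add' := fun x y => by simp [add_smul]; abel
      map_smul' := fun a x => by simp [mul_smul]
      norm_map' := fun x => by
        have h : ‖x 0 • θ + x 1 • rot θ‖ ^ 2 = ‖x‖ ^ 2 := by
          have h1 := normSq_E2 θ
          rw [hθ] at h1
          rw [normSq_E2, normSq_E2]
          simp
          linear_combination (-(x 0) ^ 2 - (x 1) ^ 2) * h1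
        exact (sq_eq_sq₀ (norm_nonneg _) (norm_nonneg _)).1 h } rfl

lemma rotIso_apply (θ : E2) (hθ : ‖θ‖ = 1) (x : E2) :
    rotIso θ hθ x = x 0 • θ + x 1 • rot θ := rfl

/-- Coordinates of the plane along `θ` and its rotation. -/
def frameEquiv (θ : E2) (hθ : ‖θ‖ = 1) : ℝ × ℝ ≃ᵐ E2 :=
  planeEquiv.trans (rotIso θ hθ).toMeasurableEquiv

lemma frameEquiv_apply (θ : E2) (hθ : ‖θ‖ = 1) (p : ℝ × ℝ) :
    frameEquiv θ hθ p = p.1 • θ + p.2 • rot θ := rfl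

lemma frameEquiv_mp (θ : E2) (hθ : ‖θ‖ = 1) : MeasurePreserving (frameEquiv θ hθ) :=
  planeEquiv_mp.trans (rotIso θ hθ).measurePreserving

lemma frame_inner {θ : E2} (hθ : ‖θ‖ = 1) (p q : ℝ) : ⟪p • θ + q • rot θ, θ⟫ = p := by
  rw [inner_add_left, real_inner_smul_left, real_inner_smul_left, real_inner_self_eq_norm_sq,
    real_inner_comm, inner_rot_self, hθ]
  ring

lemma frame_inner_rot {θ : E2} (hθ : ‖θ‖ = 1) (p q : ℝ) : ⟪p • θ + q • rot θ, rot θ⟫ = q := by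
  rw [inner_add_left, real_inner_smul_left, real_inner_smul_left, inner_rot_self,
    real_inner_self_eq_norm_sq, norm_rot, hθ]
  ring

/-- The part of `Ω` on the line `⟪x, θ⟫ = p`. -/
def slice (Ω : Set E2) (θ : E2) (p : ℝ) : Set ℝ := {q | p • θ + q • rot θ ∈ Ω}

/-- The slice profile of `Ω` in the direction `ξ`: the density of the distribution of `⟪x, ξ⟫`
for `x` uniform in `Ω`. -/
def prof (Ω : Set E2) (ξ : E2) (u : ℝ) : ℝ :=
  ‖ξ‖⁻¹ * volume.real (slice Ω (‖ξ‖⁻¹ • ξ) (u / ‖ξ‖))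

lemma rot_neg (x : E2) : rot (-x) = -rot x := by
  ext i; fin_cases i <;> simp [rot]

lemma slice_neg (Ω : Set E2) (θ : E2) (p : ℝ) : slice Ω (-θ) (-p) = -slice Ω θ p := by
  ext q; simp [slice, rot_neg]

lemma prof_neg (Ω : Set E2) (ξ : E2) (u : ℝ) : prof Ω (-ξ) (-u) = prof Ω ξ u := by
  unfold prof
  rw [norm_neg, smul_neg, neg_div, slice_neg]
  congr 1
  simp [Measure.real]

lemma norm_dir {ξ : E2} (hξ : ξ ≠ 0) : ‖‖ξ‖⁻¹ • ξ‖ = 1 := by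
  rw [norm_smul, norm_inv, norm_norm, inv_mul_cancel₀ (norm_ne_zero_iff.2 hξ)]

lemma slice_isOpen {Ω : Set E2} (ho : IsOpen Ω) (θ : E2) (p : ℝ) : IsOpen (slice Ω θ p) :=
  ho.preimage (f := fun q : ℝ => p • θ + q • rot θ) (by fun_prop)

lemma slice_convex {Ω : Set E2} (hc : Convex ℝ Ω) (θ : E2) {p p' a b : ℝ} (ha : 0 ≤ a)
    (hb : 0 ≤ b) (hab : a + b = 1) :
    a • slice Ω θ p + b • slice Ω θ p' ⊆ slice Ω θ (a * p + b * p') := by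
  rintro _ ⟨_, ⟨q, hq, rfl⟩, _, ⟨q', hq', rfl⟩, rfl⟩
  have := hc hq hq' ha hb hab
  simp only [slice, mem_ofPred_eq]
  convert this using 1
  simp only [smul_eq_mul]
  module

/-- The one-dimensional Brunn–Minkowski inequality for the slices of a convex set. -/
lemma slice_bm {Ω : Set E2} (hc : Convex ℝ Ω) (θ : E2)
    (hb : ∀ p, ∃ K, slice Ω θ p ⊆ Icc (-K) K) {p p' a b : ℝ} (ha : 0 ≤ a)
    (hb' : 0 ≤ b) (hab : a + b = 1) (h1 : (slice Ω θ p).Nonempty) (h2 : (slice Ω θ p').Nonempty) :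
    a * volume.real (slice Ω θ p) + b * volume.real (slice Ω θ p') ≤
      volume.real (slice Ω θ (a * p + b * p')) := by
  have bdd : ∀ p, BddBelow (slice Ω θ p) ∧ BddAbove (slice Ω θ p) := fun p => by
    obtain ⟨K, hK⟩ := hb p
    exact ⟨bddBelow_Icc.mono hK, bddAbove_Icc.mono hK⟩
  have up : ∀ p, (slice Ω θ p).Nonempty →
      volume.real (slice Ω θ p) ≤ sSup (slice Ω θ p) - sInf (slice Ω θ p) := by
    intro p hne
    have hle : sInf (slice Ω θ p) ≤ sSup (slice Ω θ p) := csInf_le_csSup hne (bdd p).1 (bdd p).2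
    rw [← Real.volume_real_Icc_of_le hle]
    refine measureReal_mono (fun q hq => ?_) (by simp)
    exact ⟨csInf_le (bdd p).1 hq, le_csSup (bdd p).2 hq⟩
  set M := slice Ω θ (a * p + b * p') with hM
  have hsub := slice_convex hc θ (p := p) (p' := p') ha hb' hab
  have hne : (a • slice Ω θ p + b • slice Ω θ p').Nonempty :=
    (h1.smul_set).add (h2.smul_set)
  have hMne : M.Nonempty := hne.mono hsub
  have low : sSup M - sInf M ≤ volume.real M := by
    have hle : sInf M ≤ sSup M := csInf_le_csSup hMne (bdd _).1 (bdd _).2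
    rw [← Real.volume_real_Ioo_of_le hle]
    obtain ⟨K, hK⟩ := hb (a * p + b * p')
    refine measureReal_mono (fun q hq => ?_) (measure_ne_top_of_subset hK (by simp))
    obtain ⟨x, hx, hxq⟩ := exists_lt_of_csInf_lt hMne hq.1
    obtain ⟨y, hy, hyq⟩ := exists_lt_of_lt_csSup hMne hq.2
    have hMc : Convex ℝ M := by
      intro q hq q' hq' a' b' ha' hb'' hab'
      have := hc hq hq' ha' hb'' hab'
      simp only [hM, slice, mem_ofPred_eq]
      convert this using 1
      generalize a * p + b * p' = z
      have e : b' = 1 - a' := by linarith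
      rw [e]
      simp only [smul_eq_mul]
      module
    exact hMc.ordConnected.out hx hy ⟨hxq.le, hyq.le⟩
  have e1 : a * sSup (slice Ω θ p) + b * sSup (slice Ω θ p') ≤ sSup M := by
    have := csSup_le_csSup (bdd _).2 hne hsub
    rw [csSup_add h1.smul_set ((bdd p).2.smul_of_nonneg ha) h2.smul_set
      ((bdd p').2.smul_of_nonneg hb'), Real.sSup_smul_of_nonneg ha,
      Real.sSup_smul_of_nonneg hb'] at this
    exact this
  have e2 : sInf M ≤ a * sInf (slice Ω θ p) + b * sInf (slice Ω θ p') := by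
    have := csInf_le_csInf (bdd _).1 hne hsub
    rw [csInf_add h1.smul_set ((bdd p).1.smul_of_nonneg ha) h2.smul_set
      ((bdd p').1.smul_of_nonneg hb'), Real.sInf_smul_of_nonneg ha,
      Real.sInf_smul_of_nonneg hb'] at this
    exact this
  have u1 := mul_le_mul_of_nonneg_left (up p h1) ha
  have u2 := mul_le_mul_of_nonneg_left (up p' h2) hb'
  linarith

lemma prof_meas {Ω : Set E2} (ho : IsOpen Ω) (ξ : E2) : Measurable (prof Ω ξ) := by
  have hm : MeasurableSet {p : ℝ × ℝ | p.1 • (‖ξ‖⁻¹ • ξ) + p.2 • rot (‖ξ‖⁻¹ • ξ) ∈ Ω} :=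
    (ho.preimage (f := fun p : ℝ × ℝ => p.1 • (‖ξ‖⁻¹ • ξ) + p.2 • rot (‖ξ‖⁻¹ • ξ))
      (by fun_prop)).measurableSet
  have h := (measurable_measure_prodMk_left (ν := (volume : Measure ℝ)) hm).ennreal_toReal
  exact (h.comp (measurable_id.div_const ‖ξ‖)).const_mul _

/-- The Fourier transform of the profile is that of the domain, along the line through `ξ`. -/
lemma ft_prof {Ω : Set E2} (ho : IsOpen Ω) (hfin : volume Ω ≠ ⊤) {ξ : E2} (hξ : ξ ≠ 0) (t : ℝ) :
    ∫ x in Ω, ex (t * ⟪x, ξ⟫) = ft (prof Ω ξ) t := by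
  set θ := ‖ξ‖⁻¹ • ξ with hθ
  have hN : 0 < ‖ξ‖ := norm_pos_iff.2 hξ
  have hθ1 : ‖θ‖ = 1 := norm_dir hξ
  have hξθ : ξ = ‖ξ‖ • θ := by rw [hθ, smul_smul, mul_inv_cancel₀ hN.ne', one_smul]
  have hin : ∀ p q : ℝ, ⟪p • θ + q • rot θ, ξ⟫ = ‖ξ‖ * p := by
    intro p q
    conv_lhs => rw [hξθ]
    rw [real_inner_smul_right, frame_inner hθ1]
  have hintg : Integrable (Ω.indicator fun x => ex (t * ⟪x, ξ⟫)) := by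
    rw [integrable_indicator_iff ho.measurableSet]
    refine Measure.integrableOn_of_bounded (M := 1) hfin
      (Continuous.aestronglyMeasurable (by fun_prop)) (Eventually.of_forall fun x => by simp)
  rw [← integral_indicator ho.measurableSet, ← (frameEquiv_mp θ hθ1).integral_comp']
  have hintg' : Integrable fun p : ℝ × ℝ =>
      Ω.indicator (fun x => ex (t * ⟪x, ξ⟫)) (frameEquiv θ hθ1 p) :=
    (frameEquiv_mp θ hθ1).integrable_comp_of_integrable hintg
  rw [Measure.volume_eq_prod, integral_prod _ hintg']
  have e1 : ∀ p : ℝ, ∫ q : ℝ, Ω.indicator (fun x => ex (t * ⟪x, ξ⟫)) (frameEquiv θ hθ1 (p, q)) =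
      (volume.real (slice Ω θ p) : ℂ) * ex (t * (‖ξ‖ * p)) := by
    intro p
    have : ∀ q : ℝ, Ω.indicator (fun x => ex (t * ⟪x, ξ⟫)) (frameEquiv θ hθ1 (p, q)) =
        (slice Ω θ p).indicator (fun _ => ex (t * (‖ξ‖ * p))) q := by
      intro q
      rw [frameEquiv_apply]
      by_cases h : p • θ + q • rot θ ∈ Ω
      · rw [indicator_of_mem h, indicator_of_mem (by exact h), hin]
      · rw [indicator_of_notMem h, indicator_of_notMem (by exact h)]
    simp_rw [this]
    rw [integral_indicator (slice_isOpen ho θ p).measurableSet, setIntegral_const]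
    rw [Complex.real_smul]
  simp_rw [e1]
  have e2 := Measure.integral_comp_div (fun p : ℝ =>
    ((‖ξ‖⁻¹ * volume.real (slice Ω θ p) : ℝ) : ℂ) * ex (t * (‖ξ‖ * p))) ‖ξ‖
  have e3 : ft (prof Ω ξ) t = ∫ u : ℝ, (fun p : ℝ =>
    ((‖ξ‖⁻¹ * volume.real (slice Ω θ p) : ℝ) : ℂ) * ex (t * (‖ξ‖ * p))) (u / ‖ξ‖) := by
    unfold ft prof
    refine integral_congr_ae (Eventually.of_forall fun u => ?_)
    simp only
    rw [mul_div_cancel₀ u hN.ne']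
  rw [e3, e2, abs_of_pos hN, ← integral_smul]
  refine integral_congr_ae (Eventually.of_forall fun u => ?_)
  simp only [Complex.real_smul]
  push_cast
  have hN' : (‖ξ‖ : ℂ) ≠ 0 := by exact_mod_cast hN.ne'
  field_simp

namespace Geo

variable {Ω : Set E2} {γ n : ℝ → E2} {κ : ℝ → ℝ} {L c D : ℝ}

section
variable (G : Geo Ω γ n κ L c D)
include G

lemma volume_ne_top : volume Ω ≠ ⊤ := G.bdd.measure_lt_top.ne

lemma inner_lt_supp {x ξ : E2} (hx : x ∈ Ω) (hξ : ξ ≠ 0) : ⟪x, ξ⟫ < suppFn Ω ξ := by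
  obtain ⟨s, _, hs⟩ := G.surj ξ hξ
  have hN : 0 < ‖ξ‖ := norm_pos_iff.2 hξ
  obtain ⟨r, hr, hrs⟩ := Metric.isOpen_iff.1 G.opn x hx
  have hy : x + (r / 2 / ‖ξ‖) • ξ ∈ Ω := by
    apply hrs
    rw [Metric.mem_ball, dist_eq_norm, add_sub_cancel_left, norm_smul, Real.norm_of_nonneg
      (by positivity), div_mul_cancel₀ _ hN.ne']
    linarith
  have h1 := G.inner_le_supp (subset_closure hy) ξ
  rw [inner_add_left, real_inner_smul_left, real_inner_self_eq_norm_sq] at h1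
  have : 0 < r / 2 / ‖ξ‖ * ‖ξ‖ ^ 2 := by positivity
  linarith

lemma slice_sub {θ : E2} (hθ : ‖θ‖ = 1) (p : ℝ) : slice Ω θ p ⊆ Icc (-D) D := by
  intro q hq
  have h1 := G.norm_le _ (subset_closure hq)
  have h2 : ⟪p • θ + q • rot θ, rot θ⟫ = q := frame_inner_rot hθ _ _
  have h3 := abs_real_inner_le_norm (p • θ + q • rot θ) (rot θ)
  rw [h2, norm_rot, hθ, mul_one] at h3
  exact abs_le.1 (h3.trans h1)

lemma slice_nonempty {ξ : E2} (hξ : ξ ≠ 0) {u : ℝ} (hu : u ∈ Ioo (-suppFn Ω (-ξ)) (suppFn Ω ξ)) :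
    (slice Ω (‖ξ‖⁻¹ • ξ) (u / ‖ξ‖)).Nonempty := by
  have hN : 0 < ‖ξ‖ := norm_pos_iff.2 hξ
  have hne : ∀ ξ : E2, ((fun x => ⟪x, ξ⟫) '' Ω).Nonempty := fun ξ => ⟨_, 0, G.zero_mem, rfl⟩
  obtain ⟨_, ⟨x, hx, rfl⟩, hxu⟩ := exists_lt_of_lt_csSup (hne ξ) hu.2
  obtain ⟨_, ⟨y, hy, rfl⟩, hyu⟩ := exists_lt_of_lt_csSup (hne (-ξ)) (show -u < suppFn Ω (-ξ) by
    linarith [hu.1])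
  simp only [inner_neg_right] at hyu hxu
  have hpc : IsPreconnected ((fun x => ⟪x, ξ⟫) '' Ω) :=
    G.conv.isPreconnected.image _ (by fun_prop)
  obtain ⟨z, hz, hzu⟩ := hpc.ordConnected.out ⟨y, hy, rfl⟩ ⟨x, hx, rfl⟩
    (show u ∈ Icc ⟪y, ξ⟫ ⟪x, ξ⟫ from ⟨by linarith, hxu.le⟩)
  refine ⟨⟪z, rot (‖ξ‖⁻¹ • ξ)⟫, ?_⟩
  have hf := frame (‖ξ‖⁻¹ • ξ) z 1 (norm_dir hξ) (by norm_num)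
  simp only [one_smul] at hf
  have e : ⟪z, ‖ξ‖⁻¹ • ξ⟫ = u / ‖ξ‖ := by
    rw [real_inner_smul_right]
    simp only at hzu
    rw [hzu]; ring
  rw [e] at hf
  simp only [slice, mem_ofPred_eq]
  rw [← hf]; exact hz

lemma slice_empty {ξ : E2} (hξ : ξ ≠ 0) {u : ℝ}
    (hu : u ∉ Ioo (-suppFn Ω (-ξ)) (suppFn Ω ξ)) :
    slice Ω (‖ξ‖⁻¹ • ξ) (u / ‖ξ‖) = ∅ := by
  have hN : 0 < ‖ξ‖ := norm_pos_iff.2 hξ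
  refine eq_empty_of_forall_notMem fun q hq => hu ?_
  have e : ⟪(u / ‖ξ‖) • ‖ξ‖⁻¹ • ξ + q • rot (‖ξ‖⁻¹ • ξ), ξ⟫ = u := by
    set θ := ‖ξ‖⁻¹ • ξ with hθ
    have hξθ : ξ = ‖ξ‖ • θ := by rw [hθ, smul_smul, mul_inv_cancel₀ hN.ne', one_smul]
    have h : ⟪(u / ‖ξ‖) • θ + q • rot θ, ‖ξ‖ • θ⟫ = u := by
      rw [real_inner_smul_right, frame_inner (norm_dir hξ), mul_div_cancel₀ u hN.ne']
    rwa [← hξθ] at h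
  have h1 := G.inner_lt_supp hq hξ
  have h2 := G.inner_lt_supp hq (neg_ne_zero.2 hξ)
  rw [inner_neg_right] at h2
  rw [e] at h1 h2
  exact ⟨by linarith, h1⟩

/-- Slices near the supporting line in direction `ξ` are short, by the quadratic separation of the
boundary from its tangent lines. -/
lemma prof_right {ξ : E2} (hξ : ξ ≠ 0) (u : ℝ) :
    prof Ω ξ u ≤ 2 / √c / (‖ξ‖ * √‖ξ‖) * √(suppFn Ω ξ - u) := by
  have hN : 0 < ‖ξ‖ := norm_pos_iff.2 hξ
  have hc := G.c_pos
  unfold prof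
  obtain ⟨s, _, hs⟩ := G.surj ξ hξ
  set θ := ‖ξ‖⁻¹ • ξ with hθ
  have hθ1 : ‖θ‖ = 1 := norm_dir hξ
  have hθn : θ = n s := by
    rw [hθ]; conv_lhs => rw [hs]
    rw [smul_smul, norm_smul, norm_norm, G.norm_n, mul_one, inv_mul_cancel₀ hN.ne', one_smul]
  set ρ := √((suppFn Ω ξ - u) / (c * ‖ξ‖)) with hρ
  have hsub : slice Ω θ (u / ‖ξ‖) ⊆ Icc (⟪γ s, rot θ⟫ - ρ) (⟪γ s, rot θ⟫ + ρ) := by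
    intro q hq
    set x := (u / ‖ξ‖) • θ + q • rot θ with hx
    have h1 := G.para s x (subset_closure hq)
    have hq' : ⟪x, rot θ⟫ = q := frame_inner_rot hθ1 _ _
    have hp' : ⟪x, θ⟫ = u / ‖ξ‖ := frame_inner hθ1 _ _
    have hg : ⟪γ s, n s⟫ = suppFn Ω ξ / ‖ξ‖ := by
      rw [G.supp_eq hs, ← hθn, hθ, real_inner_smul_right]; ring
    rw [inner_sub_left, hg, ← hθn, hp', ← sub_div] at h1
    have h2 := abs_real_inner_le_norm (x - γ s) (rot θ)
    rw [norm_rot, hθ1, mul_one, inner_sub_left, hq'] at h2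
    have h3 : ‖x - γ s‖ ≤ ρ := by
      apply Real.le_sqrt_of_sq_le
      rw [le_div_iff₀ (by positivity)]
      rw [le_div_iff₀ hN] at h1
      linarith
    have := abs_le.1 (h2.trans h3)
    exact ⟨by linarith [this.1], by linarith [this.2]⟩
  have hρ0 : 0 ≤ ρ := Real.sqrt_nonneg _
  have hv : volume.real (slice Ω θ (u / ‖ξ‖)) ≤ 2 * ρ := by
    refine (measureReal_mono hsub (by simp)).trans (le_of_eq ?_)
    rw [Real.volume_real_Icc_of_le (by linarith)]; ring
  have e : ρ = √(suppFn Ω ξ - u) / (√c * √‖ξ‖) := by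
    rw [hρ, Real.sqrt_div' _ (by positivity), Real.sqrt_mul hc.le]
  calc _ ≤ ‖ξ‖⁻¹ * (2 * ρ) := by gcongr
    _ = _ := by rw [e]; field_simp

/-- Slices of a planar convex set have concave length, so slice profiles are profiles in the sense
of `Prof`, with end points given by the support function. -/
lemma prof_isProf {ξ : E2} (hξ : ξ ≠ 0) :
    Prof (prof Ω ξ) (suppFn Ω ξ) (suppFn Ω (-ξ)) (2 / √c / (‖ξ‖ * √‖ξ‖)) where
  nonneg u := by unfold prof; positivity
  zero u hu := by unfold prof; rw [G.slice_empty hξ hu]; simp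
  conc := by
    refine ⟨convex_Ioo _ _, fun u hu v hv a b ha hb hab => ?_⟩
    have hN : 0 < ‖ξ‖ := norm_pos_iff.2 hξ
    have h := slice_bm G.conv (‖ξ‖⁻¹ • ξ) (fun p => ⟨D, G.slice_sub (norm_dir hξ) p⟩)
      ha hb hab (G.slice_nonempty hξ hu) (G.slice_nonempty hξ hv)
    unfold prof
    simp only [smul_eq_mul]
    rw [show (a * u + b * v) / ‖ξ‖ = a * (u / ‖ξ‖) + b * (v / ‖ξ‖) by ring]
    have := mul_le_mul_of_nonneg_left h (inv_nonneg.2 hN.le)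
    linarith
  right := G.prof_right hξ
  left u := by
    have h := G.prof_right (neg_ne_zero.2 hξ) (-u)
    rw [prof_neg, norm_neg] at h
    rwa [show u + suppFn Ω (-ξ) = suppFn Ω (-ξ) - -u by ring]
  meas := prof_meas G.opn ξ
  B_nonneg := by positivity

end

end Geo

end MeanSq

namespace MeanSq

open Filter Topology

/-! ### Mean squares of finite trigonometric sums over the dual lattice -/

/-- The weight `‖k‖^{-3/2}`. -/
def wt (k : Fin 2 → ℤ) : ℝ := 1 / (‖ek k‖ * √‖ek k‖)

lemma wt_nonneg (k : Fin 2 → ℤ) : 0 ≤ wt k := by unfold wt; positivity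

lemma wt_sq (k : Fin 2 → ℤ) : wt k ^ 2 = 1 / ‖ek k‖ ^ 3 := by
  unfold wt
  rw [div_pow, mul_pow, Real.sq_sqrt (norm_nonneg _)]; ring

lemma wt_neg (k : Fin 2 → ℤ) : wt (-k) = wt k := by
  unfold wt; rw [ek_neg, norm_neg]

/-- Schur's test for the relation `|ρ k - ρ l| ≤ w`. -/
lemma close_pairs (F : Finset (Fin 2 → ℤ)) (ρ : (Fin 2 → ℤ) → ℝ) (b : (Fin 2 → ℤ) → ℝ) (w : ℝ) :
    ∑ k ∈ F, ∑ l ∈ F, b k * b l * (if |ρ k - ρ l| ≤ w then 1 else 0) ≤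
      ∑ k ∈ F, b k ^ 2 * (F.filter fun l => |ρ l - ρ k| ≤ w).card := by
  have h1 : ∀ k l : Fin 2 → ℤ, b k * b l * (if |ρ k - ρ l| ≤ w then (1 : ℝ) else 0) ≤
      1 / 2 * (b k ^ 2 * (if |ρ l - ρ k| ≤ w then 1 else 0)) +
      1 / 2 * (b l ^ 2 * (if |ρ k - ρ l| ≤ w then 1 else 0)) := by
    intro k l
    rw [abs_sub_comm (ρ l)]
    split_ifs
    · nlinarith [sq_nonneg (b k - b l)]
    · simp
  have h2 : ∑ k ∈ F, ∑ l ∈ F, b k ^ 2 * (if |ρ l - ρ k| ≤ w then (1 : ℝ) else 0) =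
      ∑ k ∈ F, b k ^ 2 * (F.filter fun l => |ρ l - ρ k| ≤ w).card := by
    refine Finset.sum_congr rfl fun k _ => ?_
    rw [← Finset.mul_sum, Finset.sum_boole]
  have h3 : ∑ k ∈ F, ∑ l ∈ F, b l ^ 2 * (if |ρ k - ρ l| ≤ w then (1 : ℝ) else 0) =
      ∑ k ∈ F, ∑ l ∈ F, b k ^ 2 * (if |ρ l - ρ k| ≤ w then (1 : ℝ) else 0) := Finset.sum_comm
  calc _ ≤ ∑ k ∈ F, ∑ l ∈ F, (1 / 2 * (b k ^ 2 * (if |ρ l - ρ k| ≤ w then 1 else 0)) +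
      1 / 2 * (b l ^ 2 * (if |ρ k - ρ l| ≤ w then 1 else 0))) :=
        Finset.sum_le_sum fun k _ => Finset.sum_le_sum fun l _ => h1 k l
    _ = _ := by
        simp only [Finset.sum_add_distrib, ← Finset.mul_sum]
        simp only [Finset.mul_sum] at h2 h3 ⊢
        simp only [← Finset.mul_sum] at h2 h3 ⊢
        rw [h3, h2]; ring

namespace Geo

variable {Ω : Set E2} {γ n : ℝ → E2} {κ : ℝ → ℝ} {L c D : ℝ}

section
variable (G : Geo Ω γ n κ L c D)
include G

/-- The correlation of the second differences belonging to two frequencies, at scale `1 / H`: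
full size when the values of the support function are within `3 / H`, with a gain `(τH)^{1/2}` when
they are within `3`, and with a gain `τ^{1/2}` otherwise. -/
lemma corr_le {k l : Fin 2 → ℤ} (hk : k ≠ 0) (hl : l ≠ 0) {τ H : ℝ} (hτ : 0 < τ) (hτc : τ ≤ c / 4)
    (hH : 1 ≤ H) (hτH : 2 * τ * H ≤ 1) :
    ∫ p in {p : ℝ × ℝ | |p.1 - p.2| ≤ 1 / H},
      |ddp (prof Ω (ek k)) τ p.1| * |ddp (prof Ω (ek l)) τ p.2| ≤
    2 * ((2 / √(c / 2) + 28) * (2 / √c)) ^ 2 * τ ^ 3 * (wt k * wt l *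
      ((if |suppFn Ω (ek k) - suppFn Ω (ek l)| ≤ 3 / H then 1 else 0) +
        √(τ * H) * (if |suppFn Ω (ek k) - suppFn Ω (ek l)| ≤ 3 then 1 else 0) + √τ)) := by
  have hc := G.c_pos
  have hH0 : 0 < H := by linarith
  set A := (2 / √(c / 2) + 28) * (2 / √c) with hA
  have hA0 : 0 ≤ A := by positivity
  have hsτ := Real.sqrt_nonneg τ
  have hττ := Real.mul_self_sqrt hτ.le
  have hw := wt_nonneg
  have supp_ge : ∀ k : Fin 2 → ℤ, k ≠ 0 → c ≤ suppFn Ω (ek k) := fun k hk => by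
    have h1 := G.le_supp (ek_ne_zero hk)
    have h2 := one_le_norm_ek hk
    nlinarith
  have supp_ge' : ∀ k : Fin 2 → ℤ, k ≠ 0 → c ≤ suppFn Ω (-ek k) := fun k hk => by
    rw [← ek_neg]; exact supp_ge _ (neg_ne_zero.2 hk)
  have tot : ∀ k : Fin 2 → ℤ, k ≠ 0 → ∫ u, |ddp (prof Ω (ek k)) τ u| ≤ A * wt k * (τ * √τ) := by
    intro k hk
    rw [Prof.ddp_total]
    refine ((G.prof_isProf (ek_ne_zero hk)).total_bound hc G.c_le (supp_ge k hk) (supp_ge' k hk)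
      hτ hτc).trans (le_of_eq ?_)
    rw [hA, wt]; ring
  have far : ∀ k : Fin 2 → ℤ, k ≠ 0 → ∀ s, 2 * τ ≤ s → s ≤ 1 →
      ∫ u in Iio (suppFn Ω (ek k) - s), |ddp (prof Ω (ek k)) τ u| ≤ A * wt k * (τ ^ 2 / √s) := by
    intro k hk s hs hs1
    rw [Prof.ddp_far]
    refine ((G.prof_isProf (ek_ne_zero hk)).far_bound hc (supp_ge k hk) (supp_ge' k hk)
      hτ hτc hs hs1).trans ?_
    have e : A * wt k * (τ ^ 2 / √s) = (2 / √(c / 2) + 28) *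
      (2 / √c / (‖ek k‖ * √‖ek k‖)) * τ ^ 2 / √s := by rw [hA, wt]; ring
    rw [e]
    gcongr
    norm_num
  have sep : ∀ s, 2 * τ ≤ s → s ≤ 1 → 1 / H ≤ s →
      3 * s < |suppFn Ω (ek k) - suppFn Ω (ek l)| →
      ∫ p in {p : ℝ × ℝ | |p.1 - p.2| ≤ 1 / H},
        |ddp (prof Ω (ek k)) τ p.1| * |ddp (prof Ω (ek l)) τ p.2| ≤
      2 * A ^ 2 * τ ^ 3 * (wt k * wt l * (√τ / √s)) := by
    intro s hs hs1 hHs hsep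
    refine ((G.prof_isProf (ek_ne_zero hk)).corr_bound (G.prof_isProf (ek_ne_zero hl)) hτ
      (by linarith) hHs hsep (far k hk s hs hs1) (tot k hk) (far l hl s hs hs1)
      (tot l hl)).trans (le_of_eq ?_)
    ring
  have triv : ∫ p in {p : ℝ × ℝ | |p.1 - p.2| ≤ 1 / H},
        |ddp (prof Ω (ek k)) τ p.1| * |ddp (prof Ω (ek l)) τ p.2| ≤
      2 * A ^ 2 * τ ^ 3 * (wt k * wt l * 1) := by
    refine ((G.prof_isProf (ek_ne_zero hk)).corr_trivial (G.prof_isProf (ek_ne_zero hl))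
      (tot k hk) (tot l hl)).trans ?_
    rw [show A * wt k * (τ * √τ) * (A * wt l * (τ * √τ)) =
      A ^ 2 * τ ^ 2 * (√τ * √τ) * (wt k * wt l * 1) by ring, hττ]
    have : 0 ≤ A ^ 2 * τ ^ 3 * (wt k * wt l * 1) := by
      have := hw k; have := hw l; positivity
    linarith
  have hwk := hw k
  have hwl := hw l
  have hsH := Real.sqrt_nonneg (τ * H)
  have up : ∀ x y : ℝ, x ≤ y → 2 * A ^ 2 * τ ^ 3 * (wt k * wt l * x) ≤
      2 * A ^ 2 * τ ^ 3 * (wt k * wt l * y) := by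
    intro x y hxy; gcongr
  by_cases h1 : |suppFn Ω (ek k) - suppFn Ω (ek l)| ≤ 3 / H
  · refine triv.trans (up _ _ ?_)
    rw [if_pos h1]
    split_ifs <;> linarith
  rw [not_le] at h1
  by_cases h2 : |suppFn Ω (ek k) - suppFn Ω (ek l)| ≤ 3
  · refine (sep (1 / H) ?_ ?_ le_rfl ?_).trans (up _ _ ?_)
    · rw [le_div_iff₀ hH0]; exact hτH
    · rw [div_le_one hH0]; exact hH
    · rw [mul_one_div]; exact h1
    · rw [if_neg (not_le.2 h1), if_pos h2, ← Real.sqrt_div hτ.le, div_div_eq_mul_div, div_one]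
      linarith
  · rw [not_le] at h2
    refine (sep 1 ?_ le_rfl ?_ (by linarith)).trans (up _ _ ?_)
    · nlinarith
    · rw [div_le_one hH0]; exact hH
    · rw [if_neg (not_le.2 h1), if_neg (not_le.2 h2)]
      simp

/-- The mean square of the contributions of the right end points. -/
lemma pos_ms : ∃ K > 0, ∀ τ H T X Y : ℝ, 0 < τ → τ ≤ c / 4 → 1 ≤ H → 2 * τ * H ≤ 1 →
    ∀ (F : Finset (Fin 2 → ℤ)) (a : (Fin 2 → ℤ) → ℝ), (∀ k ∈ F, k ≠ 0) →
    (∀ k, 0 ≤ a k) → (∀ k, a k ≤ 1) → ∑ k ∈ F, a k * wt k ≤ X →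
    ∑ k ∈ F, a k / ‖ek k‖ ^ 2 ≤ Y →
    ∫ t in Icc T (T + H), ‖ft (fun u => ∑ k ∈ F, a k * ddp (prof Ω (ek k)) τ u) t‖ ^ 2 ≤
      K * H * τ ^ 3 * ((Y / H + 1) + √(τ * H) * (Y + 1) + √τ * X ^ 2) := by
  have hc := G.c_pos
  have hD := G.D_pos
  obtain ⟨K1, hK1, hann⟩ := G.annulus_count
  obtain ⟨K2, hK2, herr⟩ := G.errT_lattice
  set A := (2 / √(c / 2) + 28) * (2 / √c) with hA
  have hA0 : 0 < A := by positivity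
  set Q := K1 * D * (3 + K2) with hQ
  have hQ0 : 0 < Q := by positivity
  refine ⟨16 * A ^ 2 * (Q + 1), by positivity, ?_⟩
  intro τ H T X Y hτ hτc hH hτH F a hF ha0 ha1 hX hY
  have hH0 : 0 < H := by linarith
  set ρ : (Fin 2 → ℤ) → ℝ := fun k => suppFn Ω (ek k) with hρ
  have hS : ∀ k ∈ F, Integrable (ddp (prof Ω (ek k)) τ) := fun k hk =>
    (G.prof_isProf (ek_ne_zero (hF k hk))).ddp_integrable τ
  have hg : Integrable fun u => ∑ k ∈ F, a k * ddp (prof Ω (ek k)) τ u :=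
    integrable_finsetSum _ fun k hk => (hS k hk).const_mul _
  refine (gallagher hg hH0).trans ?_
  have cl : ∀ w, 0 < w → w ≤ 3 →
      ∑ k ∈ F, ∑ l ∈ F, (a k * wt k) * (a l * wt l) * (if |ρ k - ρ l| ≤ w then 1 else 0) ≤
      K1 * D * (w * Y + K2) := by
    intro w hw hw3
    refine (close_pairs F ρ (fun k => a k * wt k) w).trans ?_
    have h1 : ∀ k ∈ F, (a k * wt k) ^ 2 * ((F.filter fun l => |ρ l - ρ k| ≤ w).card : ℝ) ≤
        K1 * D * (w * (a k / ‖ek k‖ ^ 2) + errT κ L (ρ k) / ‖ek k‖ ^ 2) := by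
      intro k hk
      have hN := one_le_norm_ek (hF k hk)
      have hρc : c ≤ ρ k := by
        have := G.le_supp (ek_ne_zero (hF k hk))
        simp only [hρ]; nlinarith
      have hcard := hann (ρ k) w hρc hw hw3 (F.filter fun l => |ρ l - ρ k| ≤ w) (by
        intro l hl
        rw [Finset.mem_filter] at hl
        exact ⟨hF l hl.1, hl.2⟩)
      have he := errT_nonneg κ L (r := ρ k) (by linarith)
      have hρN := G.supp_le_norm (ek k)
      have ha2 : a k ^ 2 ≤ a k := by nlinarith [ha0 k, ha1 k]
      have hN0 : 0 < ‖ek k‖ := by linarith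
      have hak := ha0 k
      have hnn : 0 ≤ K1 * ρ k * (w + errT κ L (ρ k)) :=
        mul_nonneg (mul_nonneg hK1.le (by linarith)) (by linarith)
      calc (a k * wt k) ^ 2 * ((F.filter fun l => |ρ l - ρ k| ≤ w).card : ℝ)
          ≤ (a k * wt k) ^ 2 * (K1 * ρ k * (w + errT κ L (ρ k))) := by gcongr
        _ = a k ^ 2 * (1 / ‖ek k‖ ^ 3) * (K1 * ρ k * (w + errT κ L (ρ k))) := by
            rw [mul_pow, wt_sq]
        _ ≤ a k * (1 / ‖ek k‖ ^ 3) * (K1 * (D * ‖ek k‖) * (w + errT κ L (ρ k))) := by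
            gcongr
        _ = K1 * D * (w * (a k / ‖ek k‖ ^ 2) + a k * errT κ L (ρ k) / ‖ek k‖ ^ 2) := by
            field_simp
        _ ≤ _ := by
            have : a k * errT κ L (ρ k) ≤ 1 * errT κ L (ρ k) :=
              mul_le_mul_of_nonneg_right (ha1 k) he
            rw [one_mul] at this
            gcongr
    refine (Finset.sum_le_sum h1).trans ?_
    rw [← Finset.mul_sum, Finset.sum_add_distrib, ← Finset.mul_sum]
    have := herr F hF
    gcongr
  have hJ : ∫ p in {p : ℝ × ℝ | |p.1 - p.2| ≤ 1 / H},
      |∑ k ∈ F, a k * ddp (prof Ω (ek k)) τ p.1| * |∑ k ∈ F, a k * ddp (prof Ω (ek k)) τ p.2| ≤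
      ∑ k ∈ F, ∑ l ∈ F, a k * a l * ∫ p in {p : ℝ × ℝ | |p.1 - p.2| ≤ 1 / H},
      |ddp (prof Ω (ek k)) τ p.1| * |ddp (prof Ω (ek l)) τ p.2| := by
    have hi : ∀ k ∈ F, ∀ l ∈ F, Integrable (fun p : ℝ × ℝ =>
        a k * a l * (|ddp (prof Ω (ek k)) τ p.1| * |ddp (prof Ω (ek l)) τ p.2|)) := fun k hk l hl =>
      ((hS k hk).abs.mul_prod (hS l hl).abs).const_mul _
    have e : ∑ k ∈ F, ∑ l ∈ F, a k * a l * ∫ p in {p : ℝ × ℝ | |p.1 - p.2| ≤ 1 / H},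
        |ddp (prof Ω (ek k)) τ p.1| * |ddp (prof Ω (ek l)) τ p.2| =
        ∫ p in {p : ℝ × ℝ | |p.1 - p.2| ≤ 1 / H}, ∑ k ∈ F, ∑ l ∈ F,
        a k * a l * (|ddp (prof Ω (ek k)) τ p.1| * |ddp (prof Ω (ek l)) τ p.2|) := by
      rw [integral_finsetSum _ fun k hk => integrable_finsetSum _ fun l hl =>
        (hi k hk l hl).integrableOn]
      refine Finset.sum_congr rfl fun k hk => ?_
      rw [integral_finsetSum _ fun l hl => (hi k hk l hl).integrableOn]
      exact Finset.sum_congr rfl fun l hl => (integral_const_mul _ _).symm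
    rw [e]
    refine integral_mono (hg.abs.mul_prod hg.abs).integrableOn
      (integrable_finsetSum _ fun k hk => integrable_finsetSum _ fun l hl =>
        (hi k hk l hl).integrableOn) fun p => ?_
    have hs : ∀ u, |∑ k ∈ F, a k * ddp (prof Ω (ek k)) τ u| ≤
        ∑ k ∈ F, a k * |ddp (prof Ω (ek k)) τ u| := by
      intro u
      refine (Finset.abs_sum_le_sum_abs _ _).trans (le_of_eq ?_)
      refine Finset.sum_congr rfl fun k _ => ?_
      rw [abs_mul, abs_of_nonneg (ha0 k)]
    refine (mul_le_mul (hs p.1) (hs p.2) (abs_nonneg _) (Finset.sum_nonneg fun k _ =>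
      mul_nonneg (ha0 k) (abs_nonneg _))).trans (le_of_eq ?_)
    rw [Finset.sum_mul_sum]
    refine Finset.sum_congr rfl fun k _ => Finset.sum_congr rfl fun l _ => ?_
    ring
  have hJ2 : ∑ k ∈ F, ∑ l ∈ F, a k * a l * ∫ p in {p : ℝ × ℝ | |p.1 - p.2| ≤ 1 / H},
      |ddp (prof Ω (ek k)) τ p.1| * |ddp (prof Ω (ek l)) τ p.2| ≤
      ∑ k ∈ F, ∑ l ∈ F, 2 * A ^ 2 * τ ^ 3 *
        ((a k * wt k) * (a l * wt l) * (if |ρ k - ρ l| ≤ 3 / H then 1 else 0) +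
        √(τ * H) * ((a k * wt k) * (a l * wt l) * (if |ρ k - ρ l| ≤ 3 then 1 else 0)) +
        √τ * ((a k * wt k) * (a l * wt l))) := by
    refine Finset.sum_le_sum fun k hk => Finset.sum_le_sum fun l hl => ?_
    refine (mul_le_mul_of_nonneg_left (G.corr_le (hF k hk) (hF l hl) hτ hτc hH hτH)
      (mul_nonneg (ha0 k) (ha0 l))).trans (le_of_eq ?_)
    simp only [hρ, hA]; ring
  have hsum : ∑ k ∈ F, ∑ l ∈ F, (a k * wt k) * (a l * wt l) ≤ X ^ 2 := by
    rw [← Finset.sum_mul_sum, ← sq]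
    have : 0 ≤ ∑ k ∈ F, a k * wt k :=
      Finset.sum_nonneg fun k _ => mul_nonneg (ha0 k) (wt_nonneg k)
    gcongr
  have hY0 : 0 ≤ Y := le_trans (Finset.sum_nonneg fun k _ => div_nonneg (ha0 k) (by positivity)) hY
  have c1 := cl (3 / H) (by positivity) (by rw [div_le_iff₀ hH0]; linarith)
  have c2 := cl 3 (by norm_num) le_rfl
  have q1 : K1 * D * (3 / H * Y + K2) ≤ (Q + 1) * (Y / H + 1) := by
    have hYH : 0 ≤ Y / H := by positivity
    rw [show 3 / H * Y = 3 * (Y / H) by ring]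
    calc K1 * D * (3 * (Y / H) + K2) ≤ K1 * D * ((3 + K2) * (Y / H + 1)) := by
          gcongr; nlinarith
      _ = Q * (Y / H + 1) := by rw [hQ]; ring
      _ ≤ _ := by gcongr; linarith
  have q2 : K1 * D * (3 * Y + K2) ≤ (Q + 1) * (Y + 1) := by
    calc K1 * D * (3 * Y + K2) ≤ K1 * D * ((3 + K2) * (Y + 1)) := by
          gcongr; nlinarith
      _ = Q * (Y + 1) := by rw [hQ]; ring
      _ ≤ _ := by gcongr; linarith
  have q3 : X ^ 2 ≤ (Q + 1) * X ^ 2 := by nlinarith [sq_nonneg X]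
  have hfin : ∑ k ∈ F, ∑ l ∈ F, 2 * A ^ 2 * τ ^ 3 *
        ((a k * wt k) * (a l * wt l) * (if |ρ k - ρ l| ≤ 3 / H then 1 else 0) +
        √(τ * H) * ((a k * wt k) * (a l * wt l) * (if |ρ k - ρ l| ≤ 3 then 1 else 0)) +
        √τ * ((a k * wt k) * (a l * wt l))) ≤
      2 * A ^ 2 * τ ^ 3 * ((Q + 1) * (Y / H + 1) + √(τ * H) * ((Q + 1) * (Y + 1)) +
        √τ * ((Q + 1) * X ^ 2)) := by
    simp only [← Finset.mul_sum, Finset.sum_add_distrib]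
    refine mul_le_mul_of_nonneg_left ?_ (by positivity)
    refine add_le_add (add_le_add ?_ ?_) ?_
    · exact c1.trans q1
    · exact mul_le_mul_of_nonneg_left (c2.trans q2) (Real.sqrt_nonneg _)
    · simp only [← Finset.mul_sum] at hsum
      exact mul_le_mul_of_nonneg_left (hsum.trans q3) (Real.sqrt_nonneg _)
  calc _ ≤ 8 * H * (2 * A ^ 2 * τ ^ 3 * ((Q + 1) * (Y / H + 1) + √(τ * H) * ((Q + 1) * (Y + 1)) +
        √τ * ((Q + 1) * X ^ 2))) :=
        mul_le_mul_of_nonneg_left (hJ.trans (hJ2.trans hfin)) (by positivity)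
    _ = _ := by ring

end

end Geo

end MeanSq

namespace MeanSq

open Filter Topology

/-! ### Both end points of the profiles -/

lemma dd_neg (Ω : Set E2) (ξ : E2) (τ u : ℝ) :
    dd (prof Ω ξ) τ (-u) = dd (prof Ω (-ξ)) τ u := by
  unfold dd
  rw [show -u + τ = -(u - τ) by ring, show -u - τ = -(u + τ) by ring]
  have h : ∀ v, prof Ω ξ (-v) = prof Ω (-ξ) v := fun v => by
    rw [← prof_neg Ω ξ (-v), neg_neg]
  rw [h, h, h]; ring

/-- Each half of the second difference contributes through one end point of the profile. -/
lemma ft_dd_split {Ω : Set E2} {ξ : E2} {τ : ℝ} (hi : Integrable (dd (prof Ω ξ) τ)) (t : ℝ) :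
    ft (dd (prof Ω ξ) τ) t = ft (ddp (prof Ω ξ) τ) t +
      (starRingEnd ℂ) (ft (ddp (prof Ω (-ξ)) τ) t) := by
  have hintg := ft_integrable hi t
  have e0 : ft (dd (prof Ω ξ) τ) t = (∫ u in Ioi 0, (dd (prof Ω ξ) τ u : ℂ) * ex (t * u)) +
      ∫ u in Iic 0, (dd (prof Ω ξ) τ u : ℂ) * ex (t * u) := by
    rw [ft, add_comm]
    exact (intervalIntegral.integral_Iic_add_Ioi hintg.integrableOn hintg.integrableOn).symm
  have hp : ∀ ζ : E2, ft (ddp (prof Ω ζ) τ) t =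
      ∫ u in Ioi 0, (dd (prof Ω ζ) τ u : ℂ) * ex (t * u) := by
    intro ζ
    rw [← integral_indicator measurableSet_Ioi, ft]
    refine integral_congr_ae (Eventually.of_forall fun u => ?_)
    unfold ddp
    by_cases h : u ∈ Ioi (0 : ℝ)
    · simp only [indicator_of_mem h]
    · simp only [indicator_of_notMem h, Complex.ofReal_zero, zero_mul]
  rw [e0, hp, hp]
  congr 1
  rw [← integral_conj, ← neg_zero, ← integral_comp_neg_Ioi (0 : ℝ)
    (fun u => (dd (prof Ω ξ) τ u : ℂ) * ex (t * u))]
  simp only [neg_zero]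
  refine integral_congr_ae (Eventually.of_forall fun u => ?_)
  simp only [map_mul, Complex.conj_ofReal, conj_ex, dd_neg]
  rw [mul_neg]

lemma sin_sq_low {x : ℝ} (h1 : 1 / 2 ≤ x) (h2 : x ≤ 3 / 4) : 1 / 2 ≤ Real.sin (Real.pi * x) ^ 2 := by
  have hpi := Real.pi_pos
  have hc : Real.cos (2 * (Real.pi * x)) ≤ 0 :=
    Real.cos_nonpos_of_pi_div_two_le_of_le (by nlinarith) (by nlinarith)
  have := Real.cos_sq' (Real.pi * x)
  rw [Real.cos_two_mul] at hc
  linarith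

lemma ft_sum {F : Finset (Fin 2 → ℤ)} {a : (Fin 2 → ℤ) → ℝ} {g : (Fin 2 → ℤ) → ℝ → ℝ}
    (hg : ∀ k ∈ F, Integrable (g k)) (t : ℝ) :
    ft (fun u => ∑ k ∈ F, a k * g k u) t = ∑ k ∈ F, (a k : ℂ) * ft (g k) t := by
  unfold ft
  have : ∀ u : ℝ, ((∑ k ∈ F, a k * g k u : ℝ) : ℂ) * ex (t * u) =
      ∑ k ∈ F, (a k : ℂ) * ((g k u : ℂ) * ex (t * u)) := by
    intro u; push_cast; rw [Finset.sum_mul]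
    exact Finset.sum_congr rfl fun k _ => by ring
  simp_rw [this]
  rw [integral_finsetSum _ fun k hk => (ft_integrable (hg k hk) t).const_mul _]
  exact Finset.sum_congr rfl fun k _ => integral_const_mul _ _

namespace Geo

variable {Ω : Set E2} {γ n : ℝ → E2} {κ : ℝ → ℝ} {L c D : ℝ}

section
variable (G : Geo Ω γ n κ L c D)
include G

/-- The mean square over `[T, T + H]` of a finite sum of Fourier transforms of `Ω`. -/
lemma fin_ms : ∃ K > 0, ∀ T H X Y : ℝ, 2 / c ≤ T → 1 ≤ H → 2 * H ≤ T →
    ∀ (F : Finset (Fin 2 → ℤ)) (a : (Fin 2 → ℤ) → ℝ), (∀ k ∈ F, k ≠ 0) →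
    (∀ k, 0 ≤ a k) → (∀ k, a k ≤ 1) → ∑ k ∈ F, a k * wt k ≤ X →
    ∑ k ∈ F, a k / ‖ek k‖ ^ 2 ≤ Y →
    ∫ t in Icc T (T + H), ‖∑ k ∈ F, (a k : ℂ) * ft (prof Ω (ek k)) t‖ ^ 2 ≤
      K * H / T ^ 3 * ((Y / H + 1) + √(H / T) * (Y + 1) + X ^ 2 / √T) := by
  classical
  have hc := G.c_pos
  obtain ⟨K, hK, hms⟩ := G.pos_ms
  refine ⟨K, hK, ?_⟩
  intro T H X Y hT hH hHT F a hF ha0 ha1 hX hY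
  have hT0 : 0 < T := lt_of_lt_of_le (by positivity) hT
  set τ := 1 / (2 * T) with hτ
  have hτ0 : 0 < τ := by positivity
  have hτc : τ ≤ c / 4 := by
    rw [hτ, div_le_iff₀ (by positivity)]
    rw [div_le_iff₀ hc] at hT
    linarith
  have hτH : 2 * τ * H ≤ 1 := by
    rw [hτ, show 2 * (1 / (2 * T)) * H = H / T by field_simp, div_le_one hT0]; linarith
  set F' := F.image fun k => -k with hF'
  have hinj : Set.InjOn (fun k : Fin 2 → ℤ => -k) F := fun x _ y _ h => neg_injective h
  have hm1 := hms τ H T X Y hτ0 hτc hH hτH F a hF ha0 ha1 hX hY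
  have hm2 := hms τ H T X Y hτ0 hτc hH hτH F' (fun k => a (-k))
    (by
      intro k hk
      obtain ⟨l, hl, rfl⟩ := Finset.mem_image.1 hk
      exact neg_ne_zero.2 (hF l hl)) (fun k => ha0 _) (fun k => ha1 _)
    (by rw [hF', Finset.sum_image hinj]; simpa [wt_neg] using hX)
    (by rw [hF', Finset.sum_image hinj]; simpa [ek_neg] using hY)
  have hPi : ∀ k ∈ F, Prof _ _ _ _ := fun k hk => G.prof_isProf (ek_ne_zero (hF k hk))
  have hPn : ∀ k ∈ F, Prof _ _ _ _ := fun k hk =>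
    G.prof_isProf (ek_ne_zero (neg_ne_zero.2 (hF k hk)))
  have hsplit : ∀ t, (4 * Real.sin (Real.pi * t * τ) ^ 2 : ℝ) *
      ∑ k ∈ F, (a k : ℂ) * ft (prof Ω (ek k)) t =
      ft (fun u => ∑ k ∈ F, a k * ddp (prof Ω (ek k)) τ u) t +
      (starRingEnd ℂ) (ft (fun u => ∑ k ∈ F', a (-k) * ddp (prof Ω (ek k)) τ u) t) := by
    intro t
    have e : (fun u => ∑ k ∈ F', a (-k) * ddp (prof Ω (ek k)) τ u) =
        fun u => ∑ k ∈ F, a k * ddp (prof Ω (ek (-k))) τ u := by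
      funext u
      rw [hF', Finset.sum_image hinj]
      simp
    rw [e, ft_sum fun k hk => (hPi k hk).ddp_integrable τ,
      ft_sum fun k hk => (hPn k hk).ddp_integrable τ, map_sum, ← Finset.sum_add_distrib,
      Finset.mul_sum]
    refine Finset.sum_congr rfl fun k hk => ?_
    have h1 := (hPi k hk).ft_dd τ t
    have h2 := ft_dd_split ((hPi k hk).dd_integrable τ) t
    rw [map_mul, Complex.conj_ofReal, ek_neg, ← mul_add, ← h2, h1]
    ring
  set P : ℝ → ℂ := ft (fun u => ∑ k ∈ F, a k * ddp (prof Ω (ek k)) τ u) with hP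
  set N : ℝ → ℂ := ft (fun u => ∑ k ∈ F', a (-k) * ddp (prof Ω (ek k)) τ u) with hN
  have hPc : Continuous P := ft_continuous (integrable_finsetSum _ fun k hk =>
    ((hPi k hk).ddp_integrable τ).const_mul _)
  have hNc : Continuous N := by
    refine ft_continuous (integrable_finsetSum _ fun k hk => ?_)
    obtain ⟨l, hl, rfl⟩ := Finset.mem_image.1 hk
    exact ((hPn l hl).ddp_integrable τ).const_mul _
  have hSc : Continuous fun t => ‖∑ k ∈ F, (a k : ℂ) * ft (prof Ω (ek k)) t‖ ^ 2 :=
    (continuous_finsetSum _ fun k hk =>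
      continuous_const.mul (ft_continuous (hPi k hk).integrable)).norm.pow 2
  have hpt : ∀ t ∈ Icc T (T + H), ‖∑ k ∈ F, (a k : ℂ) * ft (prof Ω (ek k)) t‖ ^ 2 ≤
      ‖P t‖ ^ 2 + ‖N t‖ ^ 2 := by
    intro t ht
    have hs := hsplit t
    have hlow : 1 / 2 ≤ Real.sin (Real.pi * t * τ) ^ 2 := by
      rw [mul_assoc]
      apply sin_sq_low
      · rw [hτ, mul_one_div, le_div_iff₀ (by positivity)]; linarith [ht.1]
      · rw [hτ, mul_one_div, div_le_iff₀ (by positivity)]; linarith [ht.2]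
    have hn := congrArg norm hs
    rw [norm_mul, Complex.norm_real, Real.norm_of_nonneg (by positivity)] at hn
    have h2 : 2 * ‖∑ k ∈ F, (a k : ℂ) * ft (prof Ω (ek k)) t‖ ≤ ‖P t‖ + ‖N t‖ := by
      calc _ ≤ 4 * Real.sin (Real.pi * t * τ) ^ 2 *
            ‖∑ k ∈ F, (a k : ℂ) * ft (prof Ω (ek k)) t‖ := by
            gcongr; linarith
        _ ≤ _ := by
            rw [hn]
            refine (norm_add_le _ _).trans (le_of_eq ?_)
            rw [RCLike.norm_conj]
    have h0 := norm_nonneg (∑ k ∈ F, (a k : ℂ) * ft (prof Ω (ek k)) t)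
    nlinarith [sq_nonneg (‖P t‖ - ‖N t‖)]
  have hintg : ∀ f : ℝ → ℝ, Continuous f → IntegrableOn f (Icc T (T + H)) := fun f hf =>
    hf.continuousOn.integrableOn_compact isCompact_Icc
  have hPi' : IntegrableOn (fun t => ‖P t‖ ^ 2) (Icc T (T + H)) := hintg _ (by fun_prop)
  have hNi' : IntegrableOn (fun t => ‖N t‖ ^ 2) (Icc T (T + H)) := hintg _ (by fun_prop)
  refine (setIntegral_mono_on (hintg _ hSc) (hPi'.add hNi') measurableSet_Icc hpt).trans ?_
  have e : ∫ t in Icc T (T + H), ((fun t => ‖P t‖ ^ 2) + fun t => ‖N t‖ ^ 2) t =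
      (∫ t in Icc T (T + H), ‖P t‖ ^ 2) + ∫ t in Icc T (T + H), ‖N t‖ ^ 2 :=
    integral_add hPi' hNi'
  refine (le_of_eq e).trans ?_
  refine (add_le_add hm1 hm2).trans ?_
  have hY0 : 0 ≤ Y := le_trans (Finset.sum_nonneg fun k _ => div_nonneg (ha0 k) (by positivity)) hY
  have s1 : √(τ * H) ≤ √(H / T) := by
    apply Real.sqrt_le_sqrt
    rw [hτ, le_div_iff₀ hT0]
    have : 1 / (2 * T) * H * T = H / 2 := by field_simp
    linarith
  have s2 : √τ ≤ 1 / √T := by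
    rw [← Real.sqrt_one, ← Real.sqrt_div zero_le_one]
    apply Real.sqrt_le_sqrt
    rw [hτ]; gcongr; linarith
  have s3 : τ ^ 3 = 1 / 8 / T ^ 3 := by rw [hτ]; field_simp; norm_num
  have hT3 : 0 < T ^ 3 := by positivity
  have main : (Y / H + 1) + √(τ * H) * (Y + 1) + √τ * X ^ 2 ≤
      (Y / H + 1) + √(H / T) * (Y + 1) + X ^ 2 / √T := by
    have e1 : √τ * X ^ 2 ≤ 1 / √T * X ^ 2 := by gcongr
    have e2 : √(τ * H) * (Y + 1) ≤ √(H / T) * (Y + 1) := by gcongr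
    have e3 : 1 / √T * X ^ 2 = X ^ 2 / √T := by ring
    linarith
  have hnn : 0 ≤ (Y / H + 1) + √(H / T) * (Y + 1) + X ^ 2 / √T := by positivity
  set Z := (Y / H + 1) + √(H / T) * (Y + 1) + X ^ 2 / √T with hZ
  clear_value Z
  have hfac : K * H * τ ^ 3 * ((Y / H + 1) + √(τ * H) * (Y + 1) + √τ * X ^ 2) ≤
      K * H * τ ^ 3 * Z := mul_le_mul_of_nonneg_left main (by positivity)
  have : K * H * τ ^ 3 * Z = 1 / 8 * (K * H / T ^ 3 * Z) := by rw [s3]; ring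
  have hn2 : 0 ≤ K * H / T ^ 3 * Z := by positivity
  linarith

end

end Geo

end MeanSq

namespace MeanSq

open Filter Topology

/-! ### Lattice sums of the smoothing multiplier -/

/-- Fourier coefficients of the periodized tent kernel of width `1/X`. -/
def sc (X : ℝ) (n : ℤ) : ℝ := Real.sinc (Real.pi * (n / X)) ^ 2

/-- The two-dimensional smoothing multiplier. -/
def coef (X : ℝ) (k : Fin 2 → ℤ) : ℝ := sc X (k 0) * sc X (k 1)

lemma sc_nonneg (X : ℝ) (n : ℤ) : 0 ≤ sc X n := sinc_sq_nonneg _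

lemma sc_le_one (X : ℝ) (n : ℤ) : sc X n ≤ 1 := sinc_sq_le_one _

lemma sc_zero (X : ℝ) : sc X 0 = 1 := by simp [sc]

lemma coef_nonneg (X : ℝ) (k : Fin 2 → ℤ) : 0 ≤ coef X k :=
  mul_nonneg (sc_nonneg _ _) (sc_nonneg _ _)

lemma coef_le_one (X : ℝ) (k : Fin 2 → ℤ) : coef X k ≤ 1 :=
  mul_le_one₀ (sc_le_one _ _) (sc_nonneg _ _) (sc_le_one _ _)

lemma coef_zero (X : ℝ) : coef X 0 = 1 := by simp [coef, sc_zero]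

lemma sc_le {X : ℝ} (hX : 0 < X) {n : ℤ} (hn : n ≠ 0) : sc X n ≤ X ^ 2 / (n.natAbs : ℝ) ^ 2 := by
  have hn' : (n : ℝ) ≠ 0 := by exact_mod_cast hn
  have h := sinc_sq_le (Real.pi * (n / X)) (by positivity)
  refine h.trans ?_
  rw [Nat.cast_natAbs, Int.cast_abs, sq_abs]
  have hpi : 1 ≤ Real.pi ^ 2 := by nlinarith [Real.pi_gt_three]
  have hn2 : 0 < (n : ℝ) ^ 2 := by positivity
  rw [div_le_div_iff₀ (by positivity) hn2, mul_pow, div_pow]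
  have : X ^ 2 * (Real.pi ^ 2 * ((n : ℝ) ^ 2 / X ^ 2)) = Real.pi ^ 2 * (n : ℝ) ^ 2 := by
    field_simp
  rw [this]; nlinarith

/-- The pointwise majorant of the multiplier on the shell `supN k = n`. -/
def cut (X : ℝ) (n : ℕ) : ℝ := if (n : ℝ) ≤ X then 1 else X ^ 2 * ((n : ℝ) ^ 2)⁻¹

lemma cut_nonneg (X : ℝ) (n : ℕ) : 0 ≤ cut X n := by
  unfold cut; split_ifs <;> positivity

lemma coef_le_cut {X : ℝ} (hX : 0 < X) {k : Fin 2 → ℤ} (hk : k ≠ 0) :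
    coef X k ≤ cut X (supN k) := by
  unfold cut
  split_ifs with h
  · exact coef_le_one _ _
  · rw [← div_eq_mul_inv]
    have hp := supN_pos hk
    rcases le_total (k 0).natAbs (k 1).natAbs with h1 | h1
    · have e : supN k = (k 1).natAbs := by unfold supN; omega
      rw [e] at hp ⊢
      refine le_trans ?_ (sc_le hX (n := k 1) (by intro h0; simp [h0] at hp))
      exact mul_le_of_le_one_left (sc_nonneg _ _) (sc_le_one _ _)
    · have e : supN k = (k 0).natAbs := by unfold supN; omega
      rw [e] at hp ⊢
      refine le_trans ?_ (sc_le hX (n := k 0) (by intro h0; simp [h0] at hp))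
      exact mul_le_of_le_one_right (sc_nonneg _ _) (sc_le_one _ _)

lemma sum_tail_le (N : ℕ) {X : ℝ} (hX : 1 ≤ X) :
    ∑ n ∈ (Finset.Icc 1 N).filter (fun n : ℕ => ¬ (n : ℝ) ≤ X), X ^ 2 * ((n : ℝ) ^ 2)⁻¹ ≤
      2 * X := by
  rw [← Finset.mul_sum]
  have h := sum_Ioo_inv_sq_le (α := ℝ) ⌊X⌋₊ (N + 1)
  have h1 : ∑ n ∈ (Finset.Icc 1 N).filter (fun n : ℕ => ¬ (n : ℝ) ≤ X), ((n : ℝ) ^ 2)⁻¹ ≤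
      2 / X := by
    refine (Finset.sum_le_sum_of_subset_of_nonneg ?_ fun _ _ _ => by positivity).trans
      (h.trans ?_)
    · intro n hn
      simp only [Finset.mem_filter, Finset.mem_Icc, not_le, Finset.mem_Ioo] at hn ⊢
      exact ⟨(Nat.floor_lt (by linarith)).2 hn.2, by omega⟩
    · exact div_le_div_of_nonneg_left (by norm_num) (by linarith) (Nat.lt_floor_add_one X).le
  calc _ ≤ X ^ 2 * (2 / X) := mul_le_mul_of_nonneg_left h1 (by positivity)
    _ = 2 * X := by field_simp

lemma sum_inv_sqrt_le (N : ℕ) {X : ℝ} (hX : 1 ≤ X) :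
    ∑ n ∈ (Finset.Icc 1 N).filter (fun n : ℕ => (n : ℝ) ≤ X), (1 / √(n : ℝ)) ≤ 2 * √X := by
  have h : ∀ m : ℕ, ∑ n ∈ Finset.Icc 1 m, (1 / √(n : ℝ)) ≤ 2 * √(m : ℝ) := by
    intro m
    induction m with
    | zero => simp
    | succ m ih =>
      rw [Finset.sum_Icc_succ_top (by omega)]
      have hm : (0 : ℝ) ≤ m := Nat.cast_nonneg m
      have e1 := Real.sq_sqrt hm
      have e2 := Real.sq_sqrt (show (0 : ℝ) ≤ ((m + 1 : ℕ) : ℝ) by positivity)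
      have p2 : 0 < √((m + 1 : ℕ) : ℝ) := Real.sqrt_pos.2 (by positivity)
      have p1 := Real.sqrt_nonneg (m : ℝ)
      have : 1 / √((m + 1 : ℕ) : ℝ) ≤ 2 * √((m + 1 : ℕ) : ℝ) - 2 * √(m : ℝ) := by
        rw [div_le_iff₀ p2]
        push_cast at *
        nlinarith [sq_nonneg (√((m : ℝ) + 1) - √(m : ℝ))]
      linarith
  refine (Finset.sum_le_sum_of_subset_of_nonneg (t := Finset.Icc 1 ⌊X⌋₊) ?_
    fun _ _ _ => by positivity).trans ((h _).trans ?_)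
  · intro n hn
    simp only [Finset.mem_filter, Finset.mem_Icc] at hn ⊢
    exact ⟨hn.1.1, Nat.le_floor hn.2⟩
  · have := Real.sqrt_le_sqrt (Nat.floor_le (show 0 ≤ X by linarith))
    linarith

lemma cut_sum_le (N : ℕ) {X : ℝ} (hX : 1 ≤ X) {φ : ℕ → ℝ} {B : ℝ}
    (hB : ∀ n : ℕ, X < n → φ n ≤ B) (hB0 : 0 ≤ B) :
    ∑ n ∈ Finset.Icc 1 N, cut X n * φ n ≤
      ∑ n ∈ (Finset.Icc 1 N).filter (fun n : ℕ => (n : ℝ) ≤ X), φ n + B * (2 * X) := by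
  rw [← Finset.sum_filter_add_sum_filter_not _ (fun n : ℕ => (n : ℝ) ≤ X)]
  refine add_le_add (le_of_eq (Finset.sum_congr rfl fun n hn => ?_)) ?_
  · rw [cut, if_pos (Finset.mem_filter.1 hn).2, one_mul]
  · refine le_trans (Finset.sum_le_sum (g := fun n : ℕ => B * (X ^ 2 * ((n : ℝ) ^ 2)⁻¹))
      fun n hn => ?_) ?_
    · have hn' := (Finset.mem_filter.1 hn).2
      rw [cut, if_neg hn', mul_comm]
      exact mul_le_mul_of_nonneg_right (hB n (not_le.1 hn')) (by positivity)
    · rw [← Finset.mul_sum]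
      exact mul_le_mul_of_nonneg_left (sum_tail_le N hX) hB0

/-- The multiplier cuts the sum of `‖k‖ ^ (-3/2)` over the plane lattice at height `X`. -/
lemma coef_wt_sum {X : ℝ} (hX : 1 ≤ X) (F : Finset (Fin 2 → ℤ)) (hF : ∀ k ∈ F, k ≠ 0) :
    ∑ k ∈ F, coef X k * wt k ≤ 32 * √X := by
  obtain ⟨N, hN⟩ := shell_sum F hF
  have h1 : ∑ k ∈ F, coef X k * wt k ≤
      ∑ k ∈ F, (fun n : ℕ => cut X n * (1 / ((n : ℝ) * √(n : ℝ)))) (supN k) := by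
    refine Finset.sum_le_sum fun k hk => ?_
    have hp : (1 : ℝ) ≤ supN k := by exact_mod_cast supN_pos (hF k hk)
    have hs := supN_le_norm k
    refine mul_le_mul (coef_le_cut (by linarith) (hF k hk)) ?_ (wt_nonneg k) (cut_nonneg _ _)
    unfold wt
    refine one_div_le_one_div_of_le (by positivity) ?_
    exact mul_le_mul hs (Real.sqrt_le_sqrt hs) (Real.sqrt_nonneg _) (norm_nonneg _)
  have hN' := hN (fun n : ℕ => cut X n * (1 / ((n : ℝ) * √(n : ℝ))))
    fun n => mul_nonneg (cut_nonneg _ _) (by positivity)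
  have h2 : ∑ n ∈ Finset.Icc 1 N, 8 * (n : ℝ) * (cut X n * (1 / ((n : ℝ) * √(n : ℝ)))) =
      8 * ∑ n ∈ Finset.Icc 1 N, cut X n * (1 / √(n : ℝ)) := by
    rw [Finset.mul_sum]
    refine Finset.sum_congr rfl fun n hn => ?_
    have hn : 1 ≤ n := (Finset.mem_Icc.1 hn).1
    have hn' : (0 : ℝ) < n := by exact_mod_cast hn
    have := Real.sqrt_pos.2 hn'
    field_simp
  have hN2 := hN'.trans_eq h2
  have hN3 := h1.trans hN2
  clear hN' hN2 h1 h2 hN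
  have h3 := cut_sum_le N hX (φ := fun n : ℕ => 1 / √(n : ℝ)) (B := 1 / √X)
    (fun n hn => one_div_le_one_div_of_le (Real.sqrt_pos.2 (by linarith))
      (Real.sqrt_le_sqrt hn.le)) (by positivity)
  have h4 := sum_inv_sqrt_le N hX
  have h5 : 1 / √X * (2 * X) = 2 * √X := by
    have := Real.sqrt_pos.2 (show 0 < X by linarith)
    have e := Real.sq_sqrt (show 0 ≤ X by linarith)
    field_simp; linarith
  rw [h5] at h3
  refine hN3.trans ?_
  linarith

/-- The multiplier cuts the logarithmically divergent sum of `‖k‖ ^ (-2)` at height `X`. -/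
lemma coef_sq_sum {X : ℝ} (hX : 1 ≤ X) (F : Finset (Fin 2 → ℤ)) (hF : ∀ k ∈ F, k ≠ 0) :
    ∑ k ∈ F, coef X k / ‖ek k‖ ^ 2 ≤ 24 + 8 * Real.log X := by
  obtain ⟨N, hN⟩ := shell_sum F hF
  have h1 : ∑ k ∈ F, coef X k / ‖ek k‖ ^ 2 ≤
      ∑ k ∈ F, (fun n : ℕ => cut X n * (1 / (n : ℝ) ^ 2)) (supN k) := by
    refine Finset.sum_le_sum fun k hk => ?_
    have hp : (1 : ℝ) ≤ supN k := by exact_mod_cast supN_pos (hF k hk)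
    have hs := supN_le_norm k
    rw [div_eq_mul_one_div]
    refine mul_le_mul (coef_le_cut (by linarith) (hF k hk)) ?_ (by positivity) (cut_nonneg _ _)
    refine one_div_le_one_div_of_le (by positivity) ?_
    exact pow_le_pow_left₀ (by positivity) hs 2
  have hN' := hN (fun n : ℕ => cut X n * (1 / (n : ℝ) ^ 2))
    fun n => mul_nonneg (cut_nonneg _ _) (by positivity)
  have h2 : ∑ n ∈ Finset.Icc 1 N, 8 * (n : ℝ) * (cut X n * (1 / (n : ℝ) ^ 2)) =
      8 * ∑ n ∈ Finset.Icc 1 N, cut X n * (1 / (n : ℝ)) := by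
    rw [Finset.mul_sum]
    refine Finset.sum_congr rfl fun n hn => ?_
    have hn : 1 ≤ n := (Finset.mem_Icc.1 hn).1
    have hn' : (0 : ℝ) < n := by exact_mod_cast hn
    field_simp
  have hN2 := hN'.trans_eq h2
  have hN3 := h1.trans hN2
  clear hN' hN2 h1 h2 hN
  have h3 := cut_sum_le N hX (φ := fun n : ℕ => 1 / (n : ℝ)) (B := 1 / X)
    (fun n hn => one_div_le_one_div_of_le (by linarith) hn.le) (by positivity)
  have h4 := sum_inv_le N hX
  have h5 : 1 / X * (2 * X) = 2 := by field_simp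
  rw [h5] at h3
  refine hN3.trans ?_
  linarith

/-! ### Poisson summation for the tent kernel -/

/-- The tent kernel of width `1/X`, normalized to have integral `1`. -/
def psi (X x : ℝ) : ℝ := X * tent (X * x)

lemma psi_nonneg {X : ℝ} (hX : 0 < X) (x : ℝ) : 0 ≤ psi X x :=
  mul_nonneg hX.le (tent_nonneg _)

lemma psi_continuous (X : ℝ) : Continuous (psi X) := by
  have := tent_continuous
  unfold psi; fun_prop

lemma psi_eq_zero {X x : ℝ} (hX : 0 < X) (h : 1 / X ≤ |x|) : psi X x = 0 := by
  unfold psi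
  rw [tent_eq_zero, mul_zero]
  rw [abs_mul, abs_of_pos hX]
  rwa [div_le_iff₀' hX] at h

lemma psi_hasCompactSupport {X : ℝ} (hX : 0 < X) : HasCompactSupport (psi X) := by
  refine HasCompactSupport.of_support_subset_isCompact
    (isCompact_Icc (a := -(1 / X)) (b := 1 / X)) fun x hx => ?_
  by_contra h
  refine hx (psi_eq_zero hX ?_)
  by_contra h'
  exact h (abs_le.1 (not_le.1 h').le)

lemma psi_integrable {X : ℝ} (hX : 0 < X) : Integrable (psi X) :=
  (psi_continuous X).integrable_of_hasCompactSupport (psi_hasCompactSupport hX)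

lemma fourier_psi {X : ℝ} (hX : 0 < X) (t : ℝ) :
    FourierTransform.fourier (fun x => (psi X x : ℂ)) t =
      ((Real.sinc (Real.pi * (t / X)) ^ 2 : ℝ) : ℂ) := by
  rw [← fourier_tent, Real.fourier_real_eq_integral_exp_smul,
    Real.fourier_real_eq_integral_exp_smul]
  have h := Measure.integral_comp_mul_left (fun v : ℝ =>
    (X : ℂ) * (Complex.exp (↑(-2 * Real.pi * v * (t / X)) * Complex.I) • (tent v : ℂ))) X
  have e : ∀ v : ℝ, Complex.exp (↑(-2 * Real.pi * v * t) * Complex.I) • (psi X v : ℂ) =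
      (X : ℂ) * (Complex.exp (↑(-2 * Real.pi * (X * v) * (t / X)) * Complex.I) •
        (tent (X * v) : ℂ)) := by
    intro v
    have : -2 * Real.pi * (X * v) * (t / X) = -2 * Real.pi * v * t := by field_simp
    rw [this, psi]
    simp only [smul_eq_mul, Complex.ofReal_mul]
    ring
  simp_rw [e]
  rw [h, integral_const_mul, abs_of_pos (by positivity), Complex.real_smul, ← mul_assoc]
  have hXC : (X : ℂ) ≠ 0 := by exact_mod_cast hX.ne'
  rw [Complex.ofReal_inv, inv_mul_cancel₀ hXC, one_mul]

lemma integral_psi {X : ℝ} (hX : 0 < X) : ∫ x, psi X x = 1 := by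
  have h := fourier_psi hX 0
  rw [Real.fourier_real_eq_integral_exp_smul] at h
  simp only [mul_zero, Complex.ofReal_zero, zero_mul, Complex.exp_zero, one_smul, zero_div,
    Real.sinc_zero, one_pow, Complex.ofReal_one] at h
  rw [integral_complex_ofReal] at h
  exact_mod_cast h

lemma sc_summable {X : ℝ} (hX : 0 < X) : Summable (sc X) := by
  have h : Summable fun n : ℤ => 2 * X ^ 2 * (1 / (n : ℝ) ^ 2) :=
    (Real.summable_one_div_int_pow.2 one_lt_two).mul_left _
  refine (summable_of_hasFiniteSupport (f := fun n : ℤ => if n = 0 then (1 : ℝ) else 0) ?_).add h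
    |>.of_nonneg_of_le (sc_nonneg X) fun n => ?_
  · refine (Set.finite_singleton (0 : ℤ)).subset fun n hn => ?_
    by_contra h0
    exact hn (if_neg h0)
  · by_cases hn : n = 0
    · subst hn; simp [sc_zero]
    · simp only [if_neg hn, zero_add]
      refine (sc_le hX hn).trans ?_
      rw [Nat.cast_natAbs, Int.cast_abs, sq_abs, div_eq_mul_one_div]
      have : 0 ≤ X ^ 2 * (1 / (n : ℝ) ^ 2) := by positivity
      linarith

/-- The `1`-periodization of the tent kernel. -/
def per (X x : ℝ) : ℝ := ∑' n : ℤ, psi X (x + n)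

lemma poisson {X : ℝ} (hX : 0 < X) (x : ℝ) :
    (per X x : ℂ) = ∑' n : ℤ, (sc X n : ℂ) * ex (n * x) := by
  have hd : (fun x => (psi X x : ℂ)) =O[cocompact ℝ] fun x => |x| ^ (-2 : ℝ) := by
    have : (fun x => (psi X x : ℂ)) =ᶠ[cocompact ℝ] fun _ => 0 := by
      filter_upwards [(psi_hasCompactSupport hX).isCompact.compl_mem_cocompact] with x hx
      rw [image_eq_zero_of_notMem_tsupport hx, Complex.ofReal_zero]
    exact this.trans_isBigO (Asymptotics.isBigO_zero _ _)
  have hs : Summable fun n : ℤ => FourierTransform.fourier (fun x => (psi X x : ℂ)) n := by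
    simp_rw [fourier_psi hX]
    exact Complex.summable_ofReal.2 (sc_summable hX)
  have h := Real.tsum_eq_tsum_fourier_of_rpow_decay_of_summable
    (f := fun x => (psi X x : ℂ)) (Complex.continuous_ofReal.comp (psi_continuous X))
    (by norm_num) hd hs x
  rw [per, Complex.ofReal_tsum, h]
  refine tsum_congr fun n => ?_
  rw [fourier_psi hX, fourier_coe_apply]
  unfold sc ex
  congr 2
  push_cast; ring

/-- The Fourier series of `per` converges uniformly; finite sums avoid interchanging limits later. -/
lemma per_approx {X η : ℝ} (hX : 0 < X) (hη : 0 < η) : ∃ s : Finset ℤ, 0 ∈ s ∧ ∀ x : ℝ,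
    ‖(per X x : ℂ) - ∑ n ∈ s, (sc X n : ℂ) * ex (n * x)‖ ≤ η := by
  classical
  have hs := sc_summable hX
  obtain ⟨s, hs'⟩ := (hs.hasSum.eventually (Metric.ball_mem_nhds _ hη)).exists_forall_of_atTop
  refine ⟨insert 0 s, Finset.mem_insert_self _ _, fun x => ?_⟩
  set s' := insert 0 s
  have hb := hs' s' (Finset.subset_insert _ _)
  have hsC : Summable fun n : ℤ => (sc X n : ℂ) * ex (n * x) := by
    refine Summable.of_norm ?_
    simpa [abs_of_nonneg (sc_nonneg X _)] using hs
  rw [poisson hX, ← hsC.sum_add_tsum_compl (s := s'), add_sub_cancel_left]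
  refine (norm_tsum_le_tsum_norm (hsC.subtype _).norm).trans ?_
  have e : ∑' n : ↑((s' : Set ℤ)ᶜ), ‖(sc X n : ℂ) * ex (n * x)‖ =
      ∑' n : ↑((s' : Set ℤ)ᶜ), sc X n := by
    refine tsum_congr fun n => ?_
    simp [abs_of_nonneg (sc_nonneg X _)]
  have h2 := hs.sum_add_tsum_compl (s := s')
  rw [Real.dist_eq] at hb
  have := (abs_lt.1 hb).1
  calc _ = ∑' n : ↑((s' : Set ℤ)ᶜ), sc X n := e
    _ ≤ η := by linarith

end MeanSq

namespace MeanSq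

open Filter Topology

/-! ### Smoothing the lattice point count -/

/-- The `ℤ²`-periodization of the product tent kernel. -/
def Per (X : ℝ) (y : E2) : ℝ := per X (y 0) * per X (y 1)

/-- The product tent kernel centred at the lattice point `k`. -/
def bump (X : ℝ) (k : Fin 2 → ℤ) (y : E2) : ℝ := psi X (y 0 - k 0) * psi X (y 1 - k 1)

lemma per_norm_le {X : ℝ} (hX : 0 < X) (x : ℝ) : ‖(per X x : ℂ)‖ ≤ ∑' n, sc X n := by
  have e : ∀ n : ℤ, ‖(sc X n : ℂ) * ex (n * x)‖ = sc X n := fun n => by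
    simp [abs_of_nonneg (sc_nonneg X _)]
  rw [poisson hX]
  refine (norm_tsum_le_tsum_norm ?_).trans (le_of_eq (tsum_congr e))
  simp_rw [e]; exact sc_summable hX

lemma Per_approx {X ρ : ℝ} (hX : 0 < X) (hρ : 0 < ρ) : ∃ F : Finset (Fin 2 → ℤ), 0 ∈ F ∧
    ∀ y : E2, ‖(Per X y : ℂ) - ∑ k ∈ F, (coef X k : ℂ) * ex ⟪y, ek k⟫‖ ≤ ρ := by
  classical
  set S := ∑' n, sc X n with hS
  have hS0 : 0 ≤ S := tsum_nonneg (sc_nonneg X)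
  set η := min 1 (ρ / (2 * S + 1)) with hηd
  have hη : 0 < η := lt_min one_pos (by positivity)
  have hη1 : η ≤ 1 := min_le_left _ _
  have hη2 : η * (2 * S + 1) ≤ ρ := by
    rw [← le_div_iff₀ (by positivity)]; exact min_le_right _ _
  obtain ⟨s, h0, hs⟩ := per_approx hX hη
  refine ⟨Fintype.piFinset fun _ => s, by simpa using h0, fun y => ?_⟩
  have e : ∑ k ∈ Fintype.piFinset (fun _ : Fin 2 => s), (coef X k : ℂ) * ex ⟪y, ek k⟫ =
      (∑ n ∈ s, (sc X n : ℂ) * ex (n * y 0)) * ∑ n ∈ s, (sc X n : ℂ) * ex (n * y 1) := by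
    have h := Finset.prod_univ_sum (fun _ : Fin 2 => s)
      (fun (i : Fin 2) (n : ℤ) => (sc X n : ℂ) * ex (n * y i))
    rw [Fin.prod_univ_two] at h
    rw [h]
    refine Finset.sum_congr rfl fun k _ => ?_
    rw [Fin.prod_univ_two, inner_ek, ex_add, coef, mul_comm (y 0), mul_comm (y 1)]
    push_cast; ring
  rw [e]
  have a0 := hs (y 0)
  have a1 := hs (y 1)
  have b0 := per_norm_le hX (y 0)
  have b1 := per_norm_le hX (y 1)
  rw [Per]
  set A := ∑ n ∈ s, (sc X n : ℂ) * ex (n * y 0)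
  set B := ∑ n ∈ s, (sc X n : ℂ) * ex (n * y 1)
  have hA : ‖A‖ ≤ S + η := by
    calc ‖A‖ = ‖(per X (y 0) : ℂ) - (per X (y 0) - A)‖ := by rw [sub_sub_cancel]
      _ ≤ _ := (norm_sub_le _ _).trans (add_le_add b0 a0)
  have : ((per X (y 0) * per X (y 1) : ℝ) : ℂ) - A * B =
      (per X (y 0) - A) * per X (y 1) + A * (per X (y 1) - B) := by push_cast; ring
  rw [this]
  calc _ ≤ ‖(per X (y 0) : ℂ) - A‖ * ‖(per X (y 1) : ℂ)‖ + ‖A‖ * ‖(per X (y 1) : ℂ) - B‖ := by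
        refine (norm_add_le _ _).trans ?_
        rw [norm_mul, norm_mul]
    _ ≤ η * S + (S + η) * η := by gcongr
    _ ≤ η * (2 * S + 1) := by nlinarith
    _ ≤ ρ := hη2

lemma per_eq_sum {X : ℝ} (hX : 1 ≤ X) {M : ℤ} {x : ℝ} (hx : |x| + 1 ≤ M) :
    per X x = ∑ n ∈ Finset.Icc (-M) M, psi X (x - n) := by
  have h1 : per X x = ∑' n : ℤ, psi X (x - n) := by
    rw [per, ← (Equiv.neg ℤ).tsum_eq]
    refine tsum_congr fun n => ?_
    simp [sub_eq_add_neg]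
  rw [h1]
  refine tsum_eq_sum fun n hn => psi_eq_zero (by linarith) ?_
  have hX1 : 1 / X ≤ 1 := by rw [div_le_one (by linarith)]; exact hX
  have hn' : M ≤ |n| := by
    by_contra h
    rw [not_le, abs_lt] at h
    exact hn (Finset.mem_Icc.2 ⟨h.1.le, h.2.le⟩)
  have hn2 : (M : ℝ) ≤ |(n : ℝ)| := by exact_mod_cast hn'
  have := abs_sub_abs_le_abs_sub (n : ℝ) x
  rw [abs_sub_comm] at this
  linarith

/-- The box of lattice points with coordinates in `[-M, M]`. -/
def box (M : ℤ) : Finset (Fin 2 → ℤ) := Fintype.piFinset fun _ => Finset.Icc (-M) M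

lemma Per_eq_sum {X : ℝ} (hX : 1 ≤ X) {M : ℤ} {y : E2} (hy : ‖y‖ + 1 ≤ M) :
    Per X y = ∑ k ∈ box M, bump X k y := by
  have h0 := abs_coord_le y 0
  have h1 := abs_coord_le y 1
  have h := Finset.prod_univ_sum (fun _ : Fin 2 => Finset.Icc (-M) M)
      (fun (i : Fin 2) (n : ℤ) => psi X (y i - n))
  rw [Fin.prod_univ_two] at h
  rw [Per, per_eq_sum hX (M := M) (by linarith), per_eq_sum hX (M := M) (by linarith), h]
  refine Finset.sum_congr rfl fun k _ => ?_
  rw [Fin.prod_univ_two, bump]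

lemma bump_nonneg {X : ℝ} (hX : 0 < X) (k : Fin 2 → ℤ) (y : E2) : 0 ≤ bump X k y :=
  mul_nonneg (psi_nonneg hX _) (psi_nonneg hX _)

lemma bump_far {X : ℝ} (hX : 0 < X) {k : Fin 2 → ℤ} {y : E2} (h : bump X k y ≠ 0) :
    ‖y - ek k‖ < 2 / X := by
  have h0 : |y 0 - k 0| < 1 / X := by
    by_contra h'
    exact h (by rw [bump, psi_eq_zero hX (not_lt.1 h'), zero_mul])
  have h1 : |y 1 - k 1| < 1 / X := by
    by_contra h'
    exact h (by rw [bump, psi_eq_zero hX (not_lt.1 h'), mul_zero])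
  have := norm_le_two_max (x := y - ek k) (B := max |y 0 - k 0| |y 1 - k 1|)
    (by simp) (by simp)
  have h2 : max |y 0 - k 0| |y 1 - k 1| < 1 / X := max_lt h0 h1
  calc _ ≤ _ := this
    _ < 2 * (1 / X) := by linarith
    _ = 2 / X := by ring

lemma bump_plane (X : ℝ) (k : Fin 2 → ℤ) (p : ℝ × ℝ) :
    bump X k (planeEquiv p) = psi X (p.1 - k 0) * psi X (p.2 - k 1) := rfl

lemma bump_integrable {X : ℝ} (hX : 0 < X) (k : Fin 2 → ℤ) : Integrable (bump X k) := by
  rw [← planeEquiv_mp.integrable_comp_emb planeEquiv.measurableEmbedding]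
  exact ((psi_integrable hX).comp_sub_right (k 0 : ℝ)).mul_prod
    ((psi_integrable hX).comp_sub_right (k 1 : ℝ))

lemma integral_bump {X : ℝ} (hX : 0 < X) (k : Fin 2 → ℤ) : ∫ y, bump X k y = 1 := by
  rw [← planeEquiv_mp.integral_comp planeEquiv.measurableEmbedding]
  simp_rw [bump_plane]
  rw [Measure.volume_eq_prod, integral_prod_mul (fun x => psi X (x - k 0)) fun x => psi X (x - k 1),
    integral_sub_right_eq_self (psi X), integral_sub_right_eq_self (psi X), integral_psi hX]
  norm_num

lemma Per_integrableOn {X : ℝ} (hX : 1 ≤ X) {M : ℤ} {U : Set E2} (hU : MeasurableSet U)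
    (hM : ∀ y ∈ U, ‖y‖ + 1 ≤ M) : IntegrableOn (Per X) U := by
  refine IntegrableOn.congr_fun (f := fun y => ∑ k ∈ box M, bump X k y) ?_
    (fun y hy => (Per_eq_sum hX (hM y hy)).symm) hU
  exact integrable_finsetSum _ fun k _ => (bump_integrable (by linarith) k).integrableOn

lemma integral_Per {X : ℝ} (hX : 1 ≤ X) {M : ℤ} {U : Set E2} (hU : MeasurableSet U)
    (hM : ∀ y ∈ U, ‖y‖ + 1 ≤ M) :
    ∫ y in U, Per X y = ∑ k ∈ box M, ∫ y in U, bump X k y := by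
  rw [setIntegral_congr_fun hU fun y hy => Per_eq_sum hX (hM y hy)]
  exact integral_finsetSum _ fun k _ => (bump_integrable (by linarith) k).integrableOn

open Classical in
lemma latticeCount_eq {M : ℤ} {S : Set E2} (hM : ∀ y ∈ S, ‖y‖ + 1 ≤ M) :
    latticeCount S = ((box M).filter fun k => ek k ∈ S).card := by
  have : {k : Fin 2 → ℤ | ek k ∈ S} = ((box M).filter fun k => ek k ∈ S : Finset _) := by
    ext k
    simp only [mem_ofPred_eq, Finset.coe_filter, box, Fintype.mem_piFinset, Finset.mem_Icc,
      iff_and_self]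
    intro hk i
    have h1 := hM _ hk
    have h2 := abs_coord_le (ek k) i
    rw [ek_apply] at h2
    have h3 : |k i| ≤ M := by
      have : |(k i : ℝ)| ≤ M := by linarith
      exact_mod_cast this
    exact abs_le.1 h3
  rw [latticeCount, this, Nat.card_coe_set_eq, ncard_coe_finset]

/-- Upper bound for the count when `U` contains the `2 / X`-neighbourhood of the lattice points
of `S`; the kernel has mass `1` and is supported in a ball of radius `2 / X`. -/
lemma count_le_integral {X : ℝ} (hX : 1 ≤ X) {M : ℤ} {S U : Set E2} (hU : MeasurableSet U)
    (hMS : ∀ y ∈ S, ‖y‖ + 1 ≤ M) (hMU : ∀ y ∈ U, ‖y‖ + 1 ≤ M)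
    (h : ∀ k, ek k ∈ S → ∀ y, ‖y - ek k‖ < 2 / X → y ∈ U) :
    (latticeCount S : ℝ) ≤ ∫ y in U, Per X y := by
  classical
  have hX0 : 0 < X := by linarith
  rw [latticeCount_eq hMS, integral_Per hX hU hMU, Finset.card_filter]
  push_cast
  refine Finset.sum_le_sum fun k _ => ?_
  split_ifs with hk
  · rw [setIntegral_eq_integral_of_forall_compl_eq_zero, integral_bump hX0]
    intro y hy
    by_contra h'
    exact hy (h k hk y (bump_far hX0 h'))
  · exact integral_nonneg fun y => bump_nonneg hX0 k y

/-- Lower bound for the count when the `2 / X`-neighbourhood of `U` meets the lattice only in `S`. -/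
lemma integral_le_count {X : ℝ} (hX : 1 ≤ X) {M : ℤ} {S U : Set E2} (hU : MeasurableSet U)
    (hMS : ∀ y ∈ S, ‖y‖ + 1 ≤ M) (hMU : ∀ y ∈ U, ‖y‖ + 1 ≤ M)
    (h : ∀ k, ∀ y ∈ U, ‖y - ek k‖ < 2 / X → ek k ∈ S) :
    ∫ y in U, Per X y ≤ latticeCount S := by
  classical
  have hX0 : 0 < X := by linarith
  rw [latticeCount_eq hMS, integral_Per hX hU hMU, Finset.card_filter]
  push_cast
  refine Finset.sum_le_sum fun k _ => ?_
  split_ifs with hk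
  · rw [← integral_bump hX0 k]
    exact setIntegral_le_integral (bump_integrable hX0 k)
      (Eventually.of_forall fun y => bump_nonneg hX0 k y)
  · refine le_of_eq (setIntegral_eq_zero_of_forall_eq_zero fun y hy => ?_)
    by_contra h'
    exact hk (h k y hy (bump_far hX0 h'))

lemma dil_volume (Ω : Set E2) (t : ℝ) :
    (volume (t • Ω)).toReal = t ^ 2 * (volume Ω).toReal := by
  rw [Measure.addHaar_smul, ENNReal.toReal_mul, ENNReal.toReal_ofReal (abs_nonneg _)]
  simp

namespace Geo

variable {Ω : Set E2} {γ n : ℝ → E2} {κ : ℝ → ℝ} {L c D : ℝ} (G : Geo Ω γ n κ L c D)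
include G

lemma dil_norm {t : ℝ} (ht : 0 ≤ t) {y : E2} (hy : y ∈ t • Ω) : ‖y‖ ≤ D * t := by
  obtain ⟨x, hx, rfl⟩ := hy
  have := G.norm_le x (subset_closure hx)
  change ‖t • x‖ ≤ _
  rw [norm_smul, Real.norm_of_nonneg ht, mul_comm]
  exact mul_le_mul_of_nonneg_right this ht

lemma dil_add {t s : ℝ} (ht : 0 ≤ t) (hs : 0 < s) {x z : E2} (hx : x ∈ t • Ω)
    (hz : ‖z‖ < c * s) : x + z ∈ (t + s) • Ω := by
  rw [G.conv.add_smul ht hs.le]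
  refine Set.add_mem_add hx ⟨s⁻¹ • z, G.ball_sub ?_, ?_⟩
  · rw [mem_ball_zero_iff, norm_smul, norm_inv, Real.norm_of_nonneg hs.le, inv_mul_lt_iff₀ hs]
    linarith
  · change s • s⁻¹ • z = z
    rw [smul_smul, mul_inv_cancel₀ hs.ne', one_smul]

lemma dil_meas {t : ℝ} (ht : 0 < t) : MeasurableSet (t • Ω) :=
  (G.opn.smul₀ ht.ne').measurableSet

/-- Since `Ω` is convex and contains the ball of radius `c`, moving by less than `2 / X` changes the
dilation parameter by at most `2 / (c X)`. -/
lemma sandwich {X t : ℝ} (hX : 1 ≤ X) (ht : 2 / (c * X) < t) :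
    ∫ y in (t - 2 / (c * X)) • Ω, Per X y ≤ latticeCount (t • Ω) ∧
      (latticeCount (t • Ω) : ℝ) ≤ ∫ y in (t + 2 / (c * X)) • Ω, Per X y := by
  have hc := G.c_pos
  have hD := G.D_pos
  have hX0 : 0 < X := by linarith
  set s := 2 / (c * X) with hs
  have hs0 : 0 < s := by positivity
  have hcs : c * s = 2 / X := by rw [hs]; field_simp
  obtain ⟨M, hM⟩ := exists_nat_ge (D * (t + s) + 1)
  have hb : ∀ u, 0 ≤ u → u ≤ t + s → ∀ y ∈ u • Ω, ‖y‖ + 1 ≤ ((M : ℤ) : ℝ) := by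
    intro u hu hu' y hy
    have h1 := G.dil_norm hu hy
    have h2 : D * u ≤ D * (t + s) := mul_le_mul_of_nonneg_left hu' hD.le
    push_cast; linarith
  constructor
  · refine integral_le_count hX (G.dil_meas (by linarith)) (hb t (by linarith) (by linarith))
      (hb _ (by linarith) (by linarith)) fun k y hy hk => ?_
    have := G.dil_add (by linarith) hs0 hy (z := ek k - y) (by rw [hcs, norm_sub_rev]; exact hk)
    simpa using this
  · refine count_le_integral hX (G.dil_meas (by linarith)) (hb t (by linarith) (by linarith))
      (hb _ (by linarith) (by linarith)) fun k hk y hy => ?_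
    have := G.dil_add (by linarith) hs0 hk (z := y - ek k) (by rw [hcs]; exact hy)
    simpa using this

lemma integral_ex {t : ℝ} (ht : 0 < t) {k : Fin 2 → ℤ} (hk : k ≠ 0) :
    ∫ y in t • Ω, ex ⟪y, ek k⟫ = (t ^ 2 : ℝ) * ft (prof Ω (ek k)) t := by
  have h := Measure.setIntegral_comp_smul volume (fun y : E2 => ex ⟪y, ek k⟫) Ω ht.ne'
  simp_rw [real_inner_smul_left] at h
  rw [← ft_prof G.opn G.volume_ne_top (ek_ne_zero hk), h, abs_of_pos (by positivity),
    Complex.real_smul, ← mul_assoc]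
  have hf : Module.finrank ℝ E2 = 2 := by simp
  rw [hf, ← Complex.ofReal_mul, mul_inv_cancel₀ (by positivity)]
  simp

/-- The smoothed lattice rest is an exponential sum over nonzero frequencies, up to an arbitrarily
small truncation error `ρ`. -/
lemma smooth_rest {X ρ : ℝ} (hX : 1 ≤ X) (hρ : 0 < ρ) :
    ∃ F : Finset (Fin 2 → ℤ), (∀ k ∈ F, k ≠ 0) ∧ ∀ t : ℝ, 0 < t →
      |(∫ y in t • Ω, Per X y) - t ^ 2 * (volume Ω).toReal| ≤
        t ^ 2 * ‖∑ k ∈ F, (coef X k : ℂ) * ft (prof Ω (ek k)) t‖ +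
          ρ * (t ^ 2 * (volume Ω).toReal) := by
  classical
  have hX0 : 0 < X := by linarith
  obtain ⟨F, h0, hF⟩ := Per_approx hX0 hρ
  refine ⟨F.erase 0, fun k hk => (Finset.mem_erase.1 hk).1, fun t ht => ?_⟩
  have hv : volume (t • Ω) < ⊤ := by
    rw [Measure.addHaar_smul]
    exact ENNReal.mul_lt_top ENNReal.ofReal_lt_top G.volume_ne_top.lt_top
  have hintg : ∀ k ∈ F, IntegrableOn (fun y : E2 => (coef X k : ℂ) * ex ⟪y, ek k⟫) (t • Ω) := by
    intro k _
    refine Integrable.const_mul ?_ _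
    refine Measure.integrableOn_of_bounded (M := 1) hv.ne ?_ ?_
    · exact Continuous.aestronglyMeasurable (by fun_prop)
    · exact Eventually.of_forall fun y => by simp
  obtain ⟨M, hM⟩ := exists_nat_ge (D * t + 1)
  have hP : IntegrableOn (Per X) (t • Ω) :=
    Per_integrableOn hX (M := M) (G.dil_meas ht) fun y hy => by
      have := G.dil_norm ht.le hy
      push_cast; linarith
  have hn := norm_setIntegral_le_of_norm_le_const (f := fun y : E2 =>
    (Per X y : ℂ) - ∑ k ∈ F, (coef X k : ℂ) * ex ⟪y, ek k⟫) hv fun y _ => hF y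
  have e1 : ∫ y in t • Ω, ((Per X y : ℂ) - ∑ k ∈ F, (coef X k : ℂ) * ex ⟪y, ek k⟫) =
      ((∫ y in t • Ω, Per X y : ℝ) : ℂ) - ∑ k ∈ F, ∫ y in t • Ω, (coef X k : ℂ) * ex ⟪y, ek k⟫ := by
    have hPC : IntegrableOn (fun y => (Per X y : ℂ)) (t • Ω) := hP.ofReal
    rw [integral_sub hPC (integrable_finsetSum _ hintg), integral_finsetSum _ hintg,
      integral_complex_ofReal]
  have e2 : ∑ k ∈ F, ∫ y in t • Ω, (coef X k : ℂ) * ex ⟪y, ek k⟫ =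
      ((t ^ 2 * (volume Ω).toReal : ℝ) : ℂ) +
        (t ^ 2 : ℝ) * ∑ k ∈ F.erase 0, (coef X k : ℂ) * ft (prof Ω (ek k)) t := by
    rw [← Finset.add_sum_erase _ _ h0]
    congr 1
    · rw [ek_zero, coef_zero]
      simp only [inner_zero_right, Complex.ofReal_one, one_mul]
      have : ex 0 = 1 := by simp [ex]
      rw [this, setIntegral_const, ← dil_volume, Measure.real, Complex.real_smul, mul_one]
    · rw [Finset.mul_sum]
      refine Finset.sum_congr rfl fun k hk => ?_
      rw [integral_const_mul, G.integral_ex ht (Finset.mem_erase.1 hk).1]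
      ring
  rw [e1, e2, Measure.real, dil_volume] at hn
  set I := ∫ y in t • Ω, Per X y
  set Q := ∑ k ∈ F.erase 0, (coef X k : ℂ) * ft (prof Ω (ek k)) t
  set V := t ^ 2 * (volume Ω).toReal
  have e3 : |I - V| = ‖((I : ℂ) - ((V : ℂ) + (t ^ 2 : ℝ) * Q)) + (t ^ 2 : ℝ) * Q‖ := by
    rw [← Real.norm_eq_abs, ← Complex.norm_real]
    congr 1; push_cast; ring
  rw [e3]
  refine (norm_add_le _ _).trans ?_
  rw [norm_mul, Complex.norm_real, Real.norm_of_nonneg (by positivity)]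
  linarith

end Geo

end MeanSq

namespace MeanSq

open Filter Topology

/-! ### The mean square of the lattice rest -/

lemma log_le_two_sqrt {R : ℝ} (hR : 0 ≤ R) : Real.log R ≤ 2 * √R := by
  have h := Real.log_le_rpow_div hR (ε := 1 / 2) (by norm_num)
  rw [← Real.sqrt_eq_rpow] at h
  linarith

lemma log_cube_le {R : ℝ} (hR : 1 ≤ R) : Real.log R ^ 3 ≤ 27 * R := by
  have h := Real.log_le_rpow_div (show 0 ≤ R by linarith) (ε := 1 / 3) (by norm_num)
  have h2 := pow_le_pow_left₀ (Real.log_nonneg hR) h 3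
  have e : (R ^ (1 / 3 : ℝ)) ^ 3 = R := by
    rw [← Real.rpow_natCast, ← Real.rpow_mul (by linarith)]; norm_num
  rw [div_pow, e] at h2
  norm_num at h2
  linarith

/-- From a lower bound `J` at dilation `t - s` and an upper bound `I` at dilation `t + s` to the
lattice rest at `t`. -/
lemma abs_rest_le {N t s V I J A B k : ℝ} (hl : J ≤ N) (hu : N ≤ I)
    (h1 : I - (t + s) ^ 2 * V ≤ A + 1) (h2 : -(B + 1) ≤ J - (t - s) ^ 2 * V)
    (hk : (2 * (t * s) + s ^ 2) * V ≤ k) (hA : 0 ≤ A) (hB : 0 ≤ B) (hs : 0 ≤ s ^ 2 * V) :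
    |N - t ^ 2 * V| ≤ A + B + (1 + k) := by
  have e1 : (t + s) ^ 2 * V = t ^ 2 * V + (2 * (t * s) + s ^ 2) * V := by ring
  have e2 : (t - s) ^ 2 * V = t ^ 2 * V - (2 * (t * s) + s ^ 2) * V + 2 * (s ^ 2 * V) := by ring
  rw [abs_le]
  constructor <;> linarith

lemma sq_le_of_abs_le {x a b d : ℝ} (h : |x| ≤ a + b + d) :
    x ^ 2 ≤ 3 * (a ^ 2 + b ^ 2) + 3 * d ^ 2 := by
  have h1 := sq_le_sq' (by linarith [neg_abs_le x]) ((le_abs_self x).trans h)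
  nlinarith [sq_nonneg (a - b), sq_nonneg (a - d), sq_nonneg (b - d)]

namespace Geo

variable {Ω : Set E2} {γ n : ℝ → E2} {κ : ℝ → ℝ} {L c D : ℝ} (G : Geo Ω γ n κ L c D)
include G

/-- Mean square of the smoothed exponential sum over one block of length `log R`. -/
lemma block : ∃ K > 0, ∀ R : ℝ, 64 ≤ R → 4 / c ^ 2 ≤ R → ∀ F : Finset (Fin 2 → ℤ),
    (∀ k ∈ F, k ≠ 0) → ∀ T : ℝ, R / 2 ≤ T →
    ∫ t in Icc T (T + Real.log R),
      ‖∑ k ∈ F, (coef √R k : ℂ) * ft (prof Ω (ek k)) t‖ ^ 2 ≤ K * Real.log R / R ^ 3 := by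
  obtain ⟨K, hK, h⟩ := G.fin_ms
  have hc := G.c_pos
  have hc1 := G.c_le
  refine ⟨K * 8 * 2400, by positivity, fun R hR hRc F hF T hT => ?_⟩
  set H := Real.log R with hH
  have hR0 : 0 < R := by linarith
  have hH1 : 1 ≤ H := by
    rw [hH, Real.le_log_iff_exp_le hR0]
    linarith [Real.exp_one_lt_d9]
  have hT0 : 0 < T := by linarith
  have hs8 : 8 ≤ √R := Real.le_sqrt_of_sq_le (by linarith)
  have hss := Real.sq_sqrt hR0.le
  have hHs : H ≤ 2 * √R := log_le_two_sqrt hR0.le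
  have hH2 : 2 * H ≤ T := by nlinarith
  have hcT : 2 / c ≤ T := by
    have : 2 / c ≤ 4 / c ^ 2 / 2 := by
      rw [div_div, div_le_div_iff₀ hc (by positivity)]; nlinarith
    linarith
  have hX : 1 ≤ √R := by linarith
  have hY : ∑ k ∈ F, coef √R k / ‖ek k‖ ^ 2 ≤ 28 * H := by
    have := coef_sq_sum hX F hF
    rw [Real.log_sqrt hR0.le] at this
    linarith
  have := h T H (32 * √√R) (28 * H) hcT hH1 hH2 F (coef √R) hF (coef_nonneg _) (coef_le_one _)
    (coef_wt_sum hX F hF) hY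
  refine this.trans ?_
  have a1 : 28 * H / H + 1 = 29 := by field_simp; norm_num
  have a2 : √(H / T) * (28 * H + 1) ≤ 232 := by
    have b1 : 28 * H + 1 ≤ 29 * H := by linarith
    have b2 : √(H / T) * H ≤ 8 := by
      have : √(H / T) * H = √(H / T * H ^ 2) := by
        rw [Real.sqrt_mul (by positivity), Real.sqrt_sq (by linarith)]
      rw [this]
      refine Real.sqrt_le_iff.2 ⟨by norm_num, ?_⟩
      have h3 := log_cube_le (show 1 ≤ R by linarith)
      rw [← hH] at h3
      rw [div_mul_eq_mul_div, div_le_iff₀ hT0]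
      nlinarith
    calc _ ≤ √(H / T) * (29 * H) := mul_le_mul_of_nonneg_left b1 (Real.sqrt_nonneg _)
      _ = 29 * (√(H / T) * H) := by ring
      _ ≤ 232 := by linarith
  have a3 : (32 * √√R) ^ 2 / √T ≤ 2048 := by
    rw [mul_pow, Real.sq_sqrt (Real.sqrt_nonneg _), div_le_iff₀ (Real.sqrt_pos.2 hT0)]
    have : √R ≤ 2 * √T := by
      refine Real.sqrt_le_iff.2 ⟨by positivity, ?_⟩
      rw [mul_pow, Real.sq_sqrt hT0.le]; linarith
    linarith
  have a4 : K * H / T ^ 3 ≤ 8 * (K * H) / R ^ 3 := by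
    rw [div_le_div_iff₀ (by positivity) (by positivity)]
    have : R ^ 3 ≤ 8 * T ^ 3 := by
      have := pow_le_pow_left₀ (by positivity) (show R ≤ 2 * T by linarith) 3
      rw [mul_pow] at this; linarith
    nlinarith [mul_pos hK (show 0 < H by linarith)]
  rw [a1]
  calc _ ≤ 8 * (K * H) / R ^ 3 * 2400 := by
        refine mul_le_mul a4 (by linarith) ?_ (by positivity)
        positivity
    _ = _ := by ring

/-- Pointwise bound of the lattice rest by the smoothed exponential sum at the two dilates
`t ± 2 / (c √R)`. -/
lemma rest_sq_le : ∃ K > 0, ∀ R : ℝ, 64 ≤ R → 4 / c ^ 2 ≤ R → ∃ F : Finset (Fin 2 → ℤ),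
    (∀ k ∈ F, k ≠ 0) ∧ ∀ t ∈ Icc R (2 * R), latticeRest Ω t ^ 2 ≤
      243 * R ^ 4 * (‖∑ k ∈ F, (coef √R k : ℂ) * ft (prof Ω (ek k)) (t + 2 / (c * √R))‖ ^ 2 +
        ‖∑ k ∈ F, (coef √R k : ℂ) * ft (prof Ω (ek k)) (t - 2 / (c * √R))‖ ^ 2) + K * R := by
  have hc := G.c_pos
  set V := (volume Ω).toReal with hV
  have hV0 : 0 ≤ V := ENNReal.toReal_nonneg
  set K1 := 1 + (8 / c + 1) * V with hK1
  have hK1p : 0 < K1 := by positivity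
  refine ⟨3 * K1 ^ 2, by positivity, fun R hR hRc => ?_⟩
  have hR0 : 0 < R := by linarith
  have hs8 : 8 ≤ √R := Real.le_sqrt_of_sq_le (by linarith)
  have hss := Real.sq_sqrt hR0.le
  set s := 2 / (c * √R) with hs
  have hs0 : 0 < s := by positivity
  have hs1 : s ≤ 1 := by
    rw [hs, div_le_one (by positivity)]
    refine abs_le_of_sq_le_sq' ?_ (by positivity) |>.2
    rw [mul_pow, hss]
    rw [div_le_iff₀ (by positivity)] at hRc
    linarith
  have hsR : s * R = 2 / c * √R := by
    rw [hs, div_mul_eq_mul_div, div_mul_eq_mul_div, div_eq_div_iff (by positivity) hc.ne']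
    linear_combination (-2 * c) * hss
  obtain ⟨F, hF, hFs⟩ := G.smooth_rest (X := √R) (by linarith)
    (ρ := 1 / (9 * R ^ 2 * (V + 1))) (by positivity)
  refine ⟨F, hF, fun t ht => ?_⟩
  obtain ⟨hl, hu⟩ := G.sandwich (X := √R) (t := t) (by linarith) (by rw [← hs]; linarith [ht.1])
  rw [← hs] at hl hu
  have herr : ∀ u, 0 < u → u ≤ 3 * R → 1 / (9 * R ^ 2 * (V + 1)) * (u ^ 2 * V) ≤ 1 := by
    intro u hu hu'
    rw [one_div, inv_mul_le_iff₀ (by positivity), mul_one]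
    have : u ^ 2 ≤ 9 * R ^ 2 := by nlinarith
    exact mul_le_mul this (by linarith) hV0 (by positivity)
  have hp0 : 0 < t + s := by linarith [ht.1]
  have hm0 : 0 < t - s := by linarith [ht.1]
  have hp3 : t + s ≤ 3 * R := by linarith [ht.2]
  have hm3 : t - s ≤ 3 * R := by linarith [ht.2]
  have h1 := (abs_le.1 (hFs (t + s) hp0)).2
  have h2 := (abs_le.1 (hFs (t - s) hm0)).1
  have e1 := herr _ hp0 hp3
  have e2 := herr _ hm0 hm3
  rw [← hV] at h1 h2
  set P := ‖∑ k ∈ F, (coef √R k : ℂ) * ft (prof Ω (ek k)) (t + s)‖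
  set Q := ‖∑ k ∈ F, (coef √R k : ℂ) * ft (prof Ω (ek k)) (t - s)‖
  have hP0 : 0 ≤ P := norm_nonneg _
  have hQ0 : 0 ≤ Q := norm_nonneg _
  have q1 : (t + s) ^ 2 * P ≤ 9 * R ^ 2 * P :=
    mul_le_mul_of_nonneg_right (by nlinarith) hP0
  have q2 : (t - s) ^ 2 * Q ≤ 9 * R ^ 2 * Q :=
    mul_le_mul_of_nonneg_right (by nlinarith) hQ0
  -- the two dilates differ in area from `tΩ` by `O(√R)`
  have hsv : (2 * (t * s) + s ^ 2) * V ≤ (8 / c + 1) * V * √R := by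
    have : 2 * (t * s) + s ^ 2 ≤ (8 / c + 1) * √R := by
      have x1 : t * s ≤ 2 * (s * R) := by nlinarith [ht.2]
      have x2 : s ^ 2 ≤ √R := by nlinarith
      calc _ ≤ 2 * (2 * (2 / c * √R)) + √R := by rw [hsR] at x1; linarith
        _ = _ := by ring
    calc _ ≤ (8 / c + 1) * √R * V := mul_le_mul_of_nonneg_right this hV0
      _ = _ := by ring
  have hs2V : 0 ≤ s ^ 2 * V := by positivity
  have hRP : 0 ≤ 9 * R ^ 2 * P := by positivity
  have hRQ : 0 ≤ 9 * R ^ 2 * Q := by positivity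
  have hK1s : 1 + (8 / c + 1) * V * √R ≤ K1 * √R := by rw [hK1]; linarith
  have h1' := h1.trans (add_le_add q1 e1)
  have h2' := (neg_le_neg (add_le_add q2 e2)).trans h2
  have habs : |latticeRest Ω t| ≤ 9 * R ^ 2 * P + 9 * R ^ 2 * Q + K1 * √R :=
    (abs_rest_le hl hu h1' h2' hsv hRP hRQ hs2V).trans (by linarith)
  refine (sq_le_of_abs_le habs).trans (le_of_eq ?_)
  rw [mul_pow K1, hss]
  ring

/-- The interval `[R, R + h]` is covered by blocks of length `log R`, at most `2 h / log R` many. -/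
lemma large : ∃ K > 0, ∀ R h : ℝ, 64 ≤ R → 4 / c ^ 2 ≤ R → Real.log R ≤ h → h ≤ R →
    ∫ t in R..(R + h), latticeRest Ω t ^ 2 ≤ K * h * R := by
  obtain ⟨K, hK, hb⟩ := G.block
  obtain ⟨K', hK', hr⟩ := G.rest_sq_le
  have hc := G.c_pos
  refine ⟨2 * (486 * K + K'), by positivity, fun R h hR hRc hh hhR => ?_⟩
  obtain ⟨F, hF, hFt⟩ := hr R hR hRc
  have hR0 : 0 < R := by linarith
  set H := Real.log R with hH
  have hH0 : 0 < H := Real.log_pos (by linarith)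
  have hh0 : 0 < h := by linarith
  have hs8 : 8 ≤ √R := Real.le_sqrt_of_sq_le (by linarith)
  have hss := Real.sq_sqrt hR0.le
  set s := 2 / (c * √R) with hs
  have hs0 : 0 < s := by positivity
  have hs1 : s ≤ 1 := by
    rw [hs, div_le_one (by positivity)]
    refine abs_le_of_sq_le_sq' ?_ (by positivity) |>.2
    rw [mul_pow, hss]
    rw [div_le_iff₀ (by positivity)] at hRc
    linarith
  set S : ℝ → ℝ := fun t => ‖∑ k ∈ F, (coef √R k : ℂ) * ft (prof Ω (ek k)) t‖ ^ 2 with hS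
  have hSc : Continuous S := by
    have : ∀ k ∈ F, Continuous (ft (prof Ω (ek k))) := fun k hk =>
      ft_continuous (G.prof_isProf (ek_ne_zero (hF k hk))).integrable
    refine (Continuous.norm ?_).pow 2
    exact continuous_finsetSum _ fun k hk => (this k hk).const_mul _ |> fun h => h
  have hblk : ∀ T, R / 2 ≤ T → ∫ t in T..(T + H), S t ≤ K * H / R ^ 3 := by
    intro T hT
    rw [intervalIntegral.integral_of_le (by linarith), ← integral_Icc_eq_integral_Ioc]
    exact hb R hR hRc F hF T hT
  set g : ℝ → ℝ := fun t => 243 * R ^ 4 * (S (t + s) + S (t - s)) + K' * R with hg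
  have hgc : Continuous g := by fun_prop
  have hg0 : ∀ t, 0 ≤ g t := fun t => by simp only [hg, hS]; positivity
  have hgb : ∀ T, R ≤ T → ∫ t in T..(T + H), g t ≤ (486 * K + K') * (H * R) := by
    intro T hT
    have i1 : ∫ t in T..(T + H), S (t + s) ≤ K * H / R ^ 3 := by
      rw [intervalIntegral.integral_comp_add_right, add_right_comm]
      exact hblk _ (by linarith)
    have i2 : ∫ t in T..(T + H), S (t - s) ≤ K * H / R ^ 3 := by
      rw [intervalIntegral.integral_comp_sub_right, add_sub_right_comm]
      exact hblk _ (by linarith)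
    have c1 : Continuous fun t => S (t + s) := by fun_prop
    have c2 : Continuous fun t => S (t - s) := by fun_prop
    have e : ∫ t in T..(T + H), g t = 243 * R ^ 4 *
        ((∫ t in T..(T + H), S (t + s)) + ∫ t in T..(T + H), S (t - s)) + K' * R * H := by
      simp only [hg]
      have c3 : Continuous fun t => 243 * R ^ 4 * (S (t + s) + S (t - s)) := by fun_prop
      rw [intervalIntegral.integral_add (c3.intervalIntegrable _ _)
        (continuous_const.intervalIntegrable _ _), intervalIntegral.integral_const_mul,
        intervalIntegral.integral_add (c1.intervalIntegrable _ _) (c2.intervalIntegrable _ _),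
        intervalIntegral.integral_const, smul_eq_mul]
      ring
    rw [e]
    calc _ ≤ 243 * R ^ 4 * (K * H / R ^ 3 + K * H / R ^ 3) + K' * R * H := by gcongr
      _ = _ := by field_simp; ring
  set N := ⌈h / H⌉₊ with hN
  have hN1 : h ≤ N * H := by
    rw [← div_le_iff₀ hH0]; exact Nat.le_ceil _
  have hN2 : N * H ≤ 2 * h := by
    have := (Nat.ceil_lt_add_one (show 0 ≤ h / H by positivity)).le
    calc N * H ≤ (h / H + 1) * H := mul_le_mul_of_nonneg_right this hH0.le
      _ = h + H := by field_simp
      _ ≤ 2 * h := by linarith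
  have hsum : ∫ t in R..(R + N * H), g t ≤ N * ((486 * K + K') * (H * R)) := by
    have h1 := intervalIntegral.sum_integral_adjacent_intervals (μ := volume) (f := g)
      (a := fun j : ℕ => R + j * H) (n := N) fun j _ => hgc.intervalIntegrable _ _
    simp only [Nat.cast_zero, zero_mul, add_zero] at h1
    rw [← h1]
    calc _ ≤ ∑ j ∈ Finset.range N, (486 * K + K') * (H * R) := by
          refine Finset.sum_le_sum fun j _ => ?_
          have : R + ((j + 1 : ℕ) : ℝ) * H = R + j * H + H := by push_cast; ring
          rw [this]
          exact hgb _ (by have : 0 ≤ (j : ℝ) * H := by positivity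
                          linarith)
      _ = _ := by simp
  have hmono : ∫ t in R..(R + h), latticeRest Ω t ^ 2 ≤ ∫ t in R..(R + h), g t := by
    rw [intervalIntegral.integral_of_le (by linarith), intervalIntegral.integral_of_le (by linarith)]
    refine integral_mono_of_nonneg (Eventually.of_forall fun t => sq_nonneg _)
      (hgc.integrableOn_Ioc) ?_
    refine (ae_restrict_iff' measurableSet_Ioc).2 (Eventually.of_forall fun t ht => ?_)
    exact hFt t ⟨ht.1.le, by linarith [ht.2]⟩
  have hext : ∫ t in R..(R + h), g t ≤ ∫ t in R..(R + N * H), g t :=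
    intervalIntegral.integral_mono_interval le_rfl (by linarith) (by linarith)
      (Eventually.of_forall hg0) (hgc.intervalIntegrable _ _)
  calc _ ≤ _ := hmono.trans (hext.trans hsum)
    _ = (486 * K + K') * R * (N * H) := by ring
    _ ≤ (486 * K + K') * R * (2 * h) := mul_le_mul_of_nonneg_left hN2 (by positivity)
    _ = _ := by ring

lemma small (R0 : ℝ) : ∃ B > 0, ∀ t ∈ Icc (0 : ℝ) R0, |latticeRest Ω t| ≤ B := by
  classical
  have hD := G.D_pos
  obtain ⟨M, hM⟩ := exists_nat_ge (D * R0 + 1)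
  refine ⟨(box M).card + R0 ^ 2 * (volume Ω).toReal + 1, by positivity, fun t ht => ?_⟩
  have h1 : (latticeCount (t • Ω) : ℝ) ≤ (box M).card := by
    rw [latticeCount_eq (M := M) fun y hy => ?_]
    · exact_mod_cast Finset.card_filter_le _ _
    · have := G.dil_norm ht.1 hy
      have := mul_le_mul_of_nonneg_left ht.2 hD.le
      push_cast; linarith
  have h2 : t ^ 2 * (volume Ω).toReal ≤ R0 ^ 2 * (volume Ω).toReal :=
    mul_le_mul_of_nonneg_right (pow_le_pow_left₀ ht.1 ht.2 2) ENNReal.toReal_nonneg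
  have h3 : (0 : ℝ) ≤ latticeCount (t • Ω) := Nat.cast_nonneg _
  have h4 : 0 ≤ t ^ 2 * (volume Ω).toReal := mul_nonneg (sq_nonneg _) ENNReal.toReal_nonneg
  have h5 : (0 : ℝ) ≤ (box M).card := Nat.cast_nonneg _
  rw [latticeRest, abs_le]
  constructor <;> linarith

lemma main : ∃ C : ℝ, ∀ R h : ℝ, 2 ≤ R → Real.log R ≤ h → h ≤ R →
    meanSquare Ω R h ≤ C * √R := by
  obtain ⟨K, hK, hl⟩ := G.large
  set R0 := max 64 (4 / c ^ 2) with hR0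
  obtain ⟨B, hB, hsm⟩ := G.small (2 * R0)
  refine ⟨√K + B, fun R h hR hh hhR => ?_⟩
  have hh0 : 0 < h := (Real.log_pos (by linarith)).trans_le hh
  have hsR : 1 ≤ √R := Real.one_le_sqrt.2 (by linarith)
  unfold meanSquare
  rcases le_total R0 R with hc | hc
  · have h1 := hl R h ((le_max_left _ _).trans hc) ((le_max_right _ _).trans hc) hh hhR
    calc _ ≤ √(K * R) := by
          refine Real.sqrt_le_sqrt ?_
          rw [one_div, inv_mul_le_iff₀ hh0]
          linarith
      _ = √K * √R := Real.sqrt_mul hK.le _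
      _ ≤ _ := by nlinarith
  · have h1 : ∫ t in R..(R + h), latticeRest Ω t ^ 2 ≤ ∫ t in R..(R + h), B ^ 2 := by
      rw [intervalIntegral.integral_of_le (by linarith),
        intervalIntegral.integral_of_le (by linarith)]
      refine integral_mono_of_nonneg (Eventually.of_forall fun t => sq_nonneg _)
        (integrableOn_const (by simp)) ?_
      refine (ae_restrict_iff' measurableSet_Ioc).2 (Eventually.of_forall fun t ht => ?_)
      have := hsm t ⟨by linarith [ht.1], by linarith [ht.2]⟩
      exact sq_le_sq' (abs_le.1 this).1 (abs_le.1 this).2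
    rw [intervalIntegral.integral_const, smul_eq_mul, add_sub_cancel_left] at h1
    calc _ ≤ √(B ^ 2) := by
          refine Real.sqrt_le_sqrt ?_
          rw [one_div, inv_mul_le_iff₀ hh0]
          linarith
      _ = B := Real.sqrt_sq hB.le
      _ ≤ _ := by nlinarith [Real.sqrt_nonneg K]

end Geo

end MeanSq

/-- Theorem 1.1: if `Ω` is a bounded open convex planar domain containing the
origin, with `C¹` boundary, absolutely continuous unit tangent, curvature `κ = ‖γ''‖ ≥ a > 0`
a.e. and `κ ∈ L log^{2+ε} L(∂Ω)`, then `𝒢_Ω(R,h) ≤ C_Ω √R` for `log R ≤ h ≤ R`, `R ≥ 2`. -/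
theorem statement0 (Ω : Set E2) (hconv : Convex ℝ Ω) (hopen : IsOpen Ω)
    (hbdd : Bornology.IsBounded Ω) (h0 : (0 : E2) ∈ Ω)
    (γ γ' γ'' : ℝ → E2) (L : ℝ) (hbp : BoundaryParam Ω γ γ' γ'' L)
    (a ε : ℝ) (ha : 0 < a) (hε : 0 < ε)
    (hlow : ∀ᵐ t ∂(volume.restrict (Set.Icc 0 L)), a ≤ ‖γ'' t‖)
    (hLlogL : IntegrableOn
      (fun t => ‖γ'' t‖ * Real.log (2 + ‖γ'' t‖) ^ ((2 : ℝ) + ε)) (Set.Icc 0 L)) :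
    ∃ C : ℝ, ∀ R h : ℝ, 2 ≤ R → Real.log R ≤ h → h ≤ R →
      meanSquare Ω R h ≤ C * Real.sqrt R := by
  obtain ⟨n, c, D, G⟩ := MeanSq.exists_geo hconv hopen hbdd h0 hbp ha hε hlow hLlogL
  exact G.main

end
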